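/- arXiv:2102.03855 — 4 statements merged into one kernel-verified Lean document; each statement's English description precedes it below -/
import Mathlib

section
/- For every real number ε with 0 < ε < 1/4 there exists an integer N = N(ε) such that the following holds: if G is a simple graph on n ≥ N vertices with ρ(G) > sqrt(⌊n²/4⌋), then G contains a cycle C_ℓ for every integer ℓ with 3 ≤ ℓ ≤ (1/4 − ε)·n. -/
open SimpleGraph

/-- `G` contains a cycle of length `l`. -/
def HasCycleLen {V : Type} (G : SimpleGraph V) (l : ℕ) : Prop :=
  ∃ (v : V) (c : G.Walk v v), c.IsCycle ∧ c.length = l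

/-- The circumference of `G`: the length of a longest cycle. -/
noncomputable def circumference {V : Type} (G : SimpleGraph V) : ℕ :=
  sSup {l | HasCycleLen G l}

/-- `G` is weakly pancyclic with girth 3: it contains a cycle of every length `l`
with `3 ≤ l ≤ c(G)`. -/
def WeaklyPancyclic3 {V : Type} (G : SimpleGraph V) : Prop :=
  HasCycleLen G 3 ∧ ∀ l : ℕ, 3 ≤ l → l ≤ circumference G → HasCycleLen G l

/-- The number of edges of `G`. -/
noncomputable def edgeCount {V : Type} (G : SimpleGraph V) : ℕ :=
  Nat.card G.edgeSet

/-- The degree of `v` in `G`. -/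
noncomputable def degCount {V : Type} (G : SimpleGraph V) (v : V) : ℕ :=
  Nat.card (G.neighborSet v)

/-- The spectral radius of `G`: the largest eigenvalue of the adjacency matrix. -/
noncomputable def specRad {V : Type} [Finite V] (G : SimpleGraph V) : ℝ :=
  letI := Fintype.ofFinite V
  letI := Classical.decEq V
  letI := Classical.decRel G.Adj
  sSup (spectrum ℝ (G.adjMatrix ℝ))

/-- The signless Laplacian spectral radius of `G`: the largest eigenvalue of `D(G) + A(G)`. -/
noncomputable def qSpecRad {V : Type} [Finite V] (G : SimpleGraph V) : ℝ :=
  letI := Fintype.ofFinite V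
  letI := Classical.decEq V
  letI := Classical.decRel G.Adj
  sSup (spectrum ℝ (Matrix.diagonal (fun v => (degCount G v : ℝ)) + G.adjMatrix ℝ))

/-- `L_{n,k} = K_1 ∨ (K_{n-k-1} + K_k)`: vertex `0` is the common vertex of a clique on
the `n - k` vertices `{0, …, n-k-1}` and a clique on the `k+1` vertices `{0} ∪ {n-k, …, n-1}`. -/
def Lgraph (n k : ℕ) : SimpleGraph (Fin n) :=
  SimpleGraph.fromRel (fun u v =>
    u.val = 0 ∨ v.val = 0 ∨ (u.val < n - k ∧ v.val < n - k) ∨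
      (n - k ≤ u.val ∧ n - k ≤ v.val))

/-- `Γ_{n,t} = K_2 ∨ (K_{n-2-t} + t·K_1)`: vertices `0,1` are joined to everything,
vertices `2, …, n-t-1` form a clique, and vertices `n-t, …, n-1` are independent. -/
def GammaGraph (n t : ℕ) : SimpleGraph (Fin n) :=
  SimpleGraph.fromRel (fun u v =>
    u.val < 2 ∨ v.val < 2 ∨ (u.val < n - t ∧ v.val < n - t))

/-- `F` is a member of the family `F_{n,k}`: there is a clique `K` on `n - k` vertices
such that each connected component of `F - K` is a clique all of whose vertices are
adjacent to one single common vertex of `K` and to no other vertex of `K`. -/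
def MemF (n k : ℕ) (F : SimpleGraph (Fin n)) : Prop :=
  ∃ K : Finset (Fin n), K.card = n - k ∧ F.IsClique (↑K : Set (Fin n)) ∧
    (∀ u v : ({x : Fin n | x ∉ K} : Set (Fin n)),
      (F.induce {x : Fin n | x ∉ K}).Reachable u v → (u = v ∨ F.Adj u.1 v.1)) ∧
    (∀ u : ({x : Fin n | x ∉ K} : Set (Fin n)), ∃! w : Fin n, w ∈ K ∧ F.Adj u.1 w) ∧
    (∀ u v : ({x : Fin n | x ∉ K} : Set (Fin n)),
      (F.induce {x : Fin n | x ∉ K}).Reachable u v →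
        ∀ w ∈ K, F.Adj u.1 w → F.Adj v.1 w)

/-- `G` is a subgraph of `H` (up to relabelling): there is an injective graph
homomorphism from `G` to `H`. -/
def IsSubgraphOf {n : ℕ} (G H : SimpleGraph (Fin n)) : Prop :=
  ∃ f : G →g H, Function.Injective f

/-!
Write `A` for the adjacency matrix and `n` for the number of vertices. A vertex `w` maximising a
nonnegative vector `x ≠ 0` with `μ x ≤ A x`, supported on `s` vertices, has a neighbourhood so dense
that it contains a path on `2 μ - s` vertices or so (Erdős–Gallai); together with `w` this gives
all cycle lengths up to `2 μ - s`. Since `ρ ≥ n / 2 - 1 / 4`, this reaches `n / 4` as soon as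
`s ≤ n / 2` and `μ ≥ (1 - γ) ρ` for a small `γ`, and one of two disjointly supported vectors has
`s ≤ n / 2`. Hence we may assume that the eigenvector of `ρ` does not change sign and that the
second eigenvalue is below `(1 - γ) ρ`.

If the least eigenvalue is below `-(1 - γ) ρ`, then `G` is almost complete bipartite. Even cycles
are found greedily; were there no edge inside a part, or exceptional vertex, to change the parity,
then `ρ` would be at most `√⌊n² / 4⌋`.

Otherwise all other eigenvalues are at most `(1 - γ) ρ` in absolute value. The trace of `A ^ ℓ`
shows that `G` contains the cycles of bounded length `ℓ`. For a suitable constant `r`, any two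
vertices of the set `K` of heavy vertices of the eigenvector of `ρ` are joined by a positive
proportion of all possible paths of length `r + 3`, so a set `F` of `O(log n)` vertices hits enough
of them to connect every pair in `K`. As `K` spans nearly `n² / 8` edges, Erdős–Gallai gives a path
of any prescribed length below `(1 / 4 - ε) n` in `K \ F`, and `F` closes it to a cycle.
-/

section Paths

open scoped Finset

variable {V : Type*} {G : SimpleGraph V}

theorem isPath_append_cons {a b c d : V} {p : G.Walk a b} {q : G.Walk c d} (hp : p.IsPath)
    (hq : q.IsPath) (h : G.Adj b c) (hpq : p.support.Disjoint q.support) :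
    (p.append (Walk.cons h q)).IsPath := by
  rw [Walk.isPath_def, Walk.support_append, Walk.support_cons, List.tail_cons, List.nodup_append']
  exact ⟨hp.support_nodup, hq.support_nodup, hpq⟩

theorem hasCycleLen_of_isPath {V : Type} {G : SimpleGraph V} {a b : V} {p : G.Walk a b}
    (hp : p.IsPath) (hlen : 2 ≤ p.length) (h : G.Adj b a) : HasCycleLen G (p.length + 1) := by
  refine ⟨a, p.append h.toWalk, hp.isCycle_append (Walk.IsPath.of_adj h) ?_ (Or.inl hlen), by simp⟩
  have ha : a ∉ p.support.tail := by
    have := hp.support_nodup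
    rw [← Walk.cons_tail_support] at this
    exact (List.nodup_cons.1 this).1
  simpa using ha

theorem hasCycleLen_of_isPath_of_adj_of_adj {V : Type} {G : SimpleGraph V} {a b w : V}
    {p : G.Walk a b} (hp : p.IsPath) (hlen : 1 ≤ p.length) (hw : w ∉ p.support)
    (ha : G.Adj w a) (hb : G.Adj b w) : HasCycleLen G (p.length + 2) := by
  have h := hasCycleLen_of_isPath (hp.cons (h := ha) hw) (by simpa using hlen) hb
  rwa [Walk.length_cons] at h

theorem disjoint_support_take_drop {a b : V} {p : G.Walk a b} (hp : p.IsPath) {i : ℕ}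
    (hi : i < p.length) : (p.take i).support.Disjoint (p.drop (i + 1)).support := by
  rw [Walk.support_take, Walk.drop_support_eq_support_drop_min, min_eq_left hi]
  exact List.disjoint_take_drop hp.support_nodup le_rfl

theorem mem_support_iff_take_or_drop {a b x : V} {p : G.Walk a b} {i : ℕ} (hi : i < p.length) :
    x ∈ p.support ↔ x ∈ (p.take i).support ∨ x ∈ (p.drop (i + 1)).support := by
  rw [Walk.support_take, Walk.drop_support_eq_support_drop_min, min_eq_left hi, ← List.mem_append,
    List.take_append_drop]

theorem exists_isPath_rotate {a b c : V} {p : G.Walk a b} (hp : p.IsPath) (hba : G.Adj b a)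
    (hc : c ∈ p.support) :
    ∃ (d : V) (q : G.Walk c d),
      q.IsPath ∧ q.length = p.length ∧ ∀ x, x ∈ q.support ↔ x ∈ p.support := by
  obtain ⟨_ | i, rfl, hi⟩ := Walk.mem_support_iff_exists_getVert.1 hc
  · exact ⟨b, p.copy (by simp) rfl, by simpa using hp, by simp, by simp⟩
  · refine ⟨p.getVert i, (p.drop (i + 1)).append (Walk.cons hba (p.take i)),
      isPath_append_cons (hp.drop _) (hp.take _) hba (disjoint_support_take_drop hp hi).symm,
      ?_, fun x ↦ ?_⟩
    · simp only [Walk.length_append, Walk.drop_length, Walk.length_cons, Walk.take_length]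
      omega
    · rw [mem_support_iff_take_or_drop hi, Walk.support_append, List.mem_append, or_comm]
      rfl

/-- `p` is a longest path among the paths of `G` all of whose vertices lie in `S`. -/
structure IsLongestPathIn (S : Finset V) {a b : V} (p : G.Walk a b) : Prop where
  isPath : p.IsPath
  support_subset : ∀ x ∈ p.support, x ∈ S
  length_le : ∀ (c d : V) (q : G.Walk c d), q.IsPath → (∀ x ∈ q.support, x ∈ S) →
    q.length ≤ p.length

namespace IsLongestPathIn

variable {S : Finset V} {a b c d u : V} {p : G.Walk a b} {q : G.Walk c d}

theorem of_support_iff (hp : IsLongestPathIn S p) (hq : q.IsPath) (hlen : q.length = p.length)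
    (hqp : ∀ x, x ∈ q.support ↔ x ∈ p.support) : IsLongestPathIn S q :=
  ⟨hq, fun x hx ↦ hp.support_subset x ((hqp x).1 hx), hlen ▸ hp.length_le⟩

protected theorem reverse (hp : IsLongestPathIn S p) : IsLongestPathIn S p.reverse :=
  hp.of_support_iff hp.isPath.reverse p.length_reverse (by simp)

theorem mem_support_of_adj_start (hp : IsLongestPathIn S p) (hu : u ∈ S) (hau : G.Adj a u) :
    u ∈ p.support := by
  by_contra hup
  have := hp.length_le u b _ (hp.isPath.cons (h := hau.symm) hup)
    (by simpa [hu] using hp.support_subset)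
  simp at this

theorem mem_support_of_adj_of_adj (hp : IsLongestPathIn S p) (hba : G.Adj b a)
    (hc : c ∈ p.support) (hu : u ∈ S) (hcu : G.Adj c u) : u ∈ p.support := by
  obtain ⟨d, q, hq, hlen, hqp⟩ := exists_isPath_rotate hp.isPath hba hc
  exact (hqp u).1 ((hp.of_support_iff hq hlen hqp).mem_support_of_adj_start hu hcu)

end IsLongestPathIn

theorem exists_isLongestPathIn {S : Finset V} (hS : S.Nonempty) :
    ∃ (a b : V) (p : G.Walk a b), IsLongestPathIn S p := by
  classical
  let Q : ℕ → Prop := fun k ↦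
    ∃ (a b : V) (p : G.Walk a b), p.IsPath ∧ (∀ x ∈ p.support, x ∈ S) ∧ p.length = k
  have hQ_le : ∀ k, Q k → k ≤ #S := by
    rintro _ ⟨a, b, p, hp, hpS, rfl⟩
    have := Finset.card_le_card (s := p.support.toFinset) (t := S) (by simpa [Finset.subset_iff])
    rw [List.toFinset_card_of_nodup hp.support_nodup, Walk.length_support] at this
    omega
  obtain ⟨v, hv⟩ := hS
  have hQ_zero : Q 0 := ⟨v, v, Walk.nil, Walk.IsPath.nil, by simpa using hv, rfl⟩
  obtain ⟨a, b, p, hp, hpS, hlen⟩ := Nat.findGreatest_spec (Nat.zero_le #S) hQ_zero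
  refine ⟨a, b, p, hp, hpS, fun c d q hq hqS ↦ ?_⟩
  have hq_mem : Q q.length := ⟨c, d, q, hq, hqS, rfl⟩
  exact hlen ▸ Nat.le_findGreatest (hQ_le _ hq_mem) hq_mem

end Paths

section DegreeIn

open scoped Finset

variable {V : Type*} (G : SimpleGraph V) [DecidableRel G.Adj]

/-- The number of neighbours of `v` that lie in the vertex set `S`. -/
def degreeIn (S : Finset V) (v : V) : ℕ := #{u ∈ S | G.Adj v u}

theorem degreeIn_le_card (S : Finset V) (v : V) : degreeIn G S v ≤ #S :=
  Finset.card_filter_le _ _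

theorem degreeIn_mono {S T : Finset V} (h : S ⊆ T) (v : V) : degreeIn G S v ≤ degreeIn G T v :=
  Finset.card_le_card (Finset.filter_subset_filter _ h)

theorem degreeIn_sdiff_add_degreeIn [DecidableEq V] {S C : Finset V} (h : C ⊆ S) (v : V) :
    degreeIn G (S \ C) v + degreeIn G C v = degreeIn G S v := by
  rw [degreeIn, degreeIn, ← Finset.card_union_of_disjoint
    (Finset.disjoint_filter_filter Finset.sdiff_disjoint), ← Finset.filter_union,
    Finset.sdiff_union_of_subset h, degreeIn]

theorem card_interedges_eq_sum_degreeIn (S T : Finset V) :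
    #(G.interedges S T) = ∑ v ∈ S, degreeIn G T v := by
  rw [interedges_def, Finset.card_filter, Finset.sum_product]
  simp only [degreeIn, Finset.card_filter]

theorem card_interedges_swap (S T : Finset V) : #(G.interedges S T) = #(G.interedges T S) :=
  haveI : Std.Symm G.Adj := ⟨fun _ _ h ↦ h.symm⟩
  Rel.card_interedges_comm S T

theorem card_interedges_sdiff [DecidableEq V] {S C : Finset V} (h : C ⊆ S) :
    #(G.interedges S S) = #(G.interedges (S \ C) (S \ C)) + #(G.interedges C (S \ C)) +
      #(G.interedges C S) := by
  have hswap := card_interedges_swap G C (S \ C)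
  simp only [card_interedges_eq_sum_degreeIn] at hswap ⊢
  rw [hswap, ← Finset.sum_add_distrib, ← Finset.sum_sdiff h]
  simp only [degreeIn_sdiff_add_degreeIn G h]

theorem degreeIn_le_degreeIn_of_forall_mem {S T : Finset V} {v : V}
    (h : ∀ u ∈ S, G.Adj v u → u ∈ T) : degreeIn G S v ≤ degreeIn G T v :=
  Finset.card_le_card fun u hu ↦ by
    obtain ⟨huS, hvu⟩ := Finset.mem_filter.1 hu
    exact Finset.mem_filter.2 ⟨h u huS hvu, hvu⟩

theorem card_interedges_sdiff_eq_zero_of_forall_mem [DecidableEq V] {S C : Finset V}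
    (h : ∀ c ∈ C, ∀ u ∈ S, G.Adj c u → u ∈ C) : #(G.interedges C (S \ C)) = 0 := by
  rw [Finset.card_eq_zero, Finset.eq_empty_iff_forall_notMem]
  rintro ⟨c, u⟩ hcu
  rw [mk_mem_interedges_iff, Finset.mem_sdiff] at hcu
  exact hcu.2.1.2 (h c hcu.1 u hcu.2.1.1 hcu.2.2)

theorem card_interedges_le_of_forall_mem {S C : Finset V}
    (h : ∀ c ∈ C, ∀ u ∈ S, G.Adj c u → u ∈ C) : #(G.interedges C S) ≤ (#C - 1) * #C := by
  classical
  rw [card_interedges_eq_sum_degreeIn, mul_comm]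
  refine Finset.sum_le_card_nsmul _ _ _ fun c hc ↦ ?_
  rw [← Finset.card_erase_of_mem hc]
  refine Finset.card_le_card fun u hu ↦ ?_
  obtain ⟨huS, hcu⟩ := Finset.mem_filter.1 hu
  exact Finset.mem_erase.2 ⟨hcu.ne', h c hc u huS hcu⟩

end DegreeIn

section ErdosGallai

open scoped Finset

variable {V : Type*} {G : SimpleGraph V} [DecidableRel G.Adj]

-- Otherwise the successors of neighbours of `a` and the neighbours of `b` would be disjoint.
theorem exists_crossing_of_length_lt_degreeIn_add_degreeIn [DecidableEq V] {a b : V}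
    {p : G.Walk a b}
    (hdeg : p.length < degreeIn G p.support.toFinset a + degreeIn G p.support.toFinset b) :
    ∃ i < p.length, G.Adj a (p.getVert (i + 1)) ∧ G.Adj b (p.getVert i) := by
  let I := {i ∈ Finset.range p.length | G.Adj a (p.getVert (i + 1))}
  let J := {i ∈ Finset.range p.length | G.Adj b (p.getVert i)}
  have hI : degreeIn G p.support.toFinset a ≤ #I := by
    refine (Finset.card_le_card fun u hu ↦ ?_).trans
      (Finset.card_image_le (s := I) (f := fun i ↦ p.getVert (i + 1)))
    obtain ⟨hup, hau⟩ := Finset.mem_filter.1 hu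
    obtain ⟨_ | i, rfl, hi⟩ := Walk.mem_support_iff_exists_getVert.1 (List.mem_toFinset.1 hup)
    · simp at hau
    · exact Finset.mem_image.2 ⟨i, by simp [I, hau]; omega, rfl⟩
  have hJ : degreeIn G p.support.toFinset b ≤ #J := by
    refine (Finset.card_le_card fun u hu ↦ ?_).trans
      (Finset.card_image_le (s := J) (f := p.getVert))
    obtain ⟨hup, hbu⟩ := Finset.mem_filter.1 hu
    obtain ⟨i, rfl, hi⟩ := Walk.mem_support_iff_exists_getVert.1 (List.mem_toFinset.1 hup)
    obtain rfl | hlt := hi.eq_or_lt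
    · simp at hbu
    · exact Finset.mem_image.2 ⟨i, by simp [J, hbu, hlt], rfl⟩
  obtain ⟨i, hi⟩ := Finset.inter_nonempty_of_card_lt_card_add_card (Finset.filter_subset _ _)
    (Finset.filter_subset _ _) (by rw [Finset.card_range]; exact hdeg.trans_le (add_le_add hI hJ))
  simp only [Finset.mem_inter, Finset.mem_filter, Finset.mem_range] at hi
  exact ⟨i, hi.1.1, hi.1.2, hi.2.2⟩

theorem exists_isPath_adj_of_length_lt_degreeIn_add_degreeIn [DecidableEq V] {a b : V}
    {p : G.Walk a b} (hp : p.IsPath)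
    (hdeg : p.length < degreeIn G p.support.toFinset a + degreeIn G p.support.toFinset b) :
    ∃ (c : V) (q : G.Walk a c), q.IsPath ∧ G.Adj c a ∧ q.length = p.length ∧
      ∀ x, x ∈ q.support ↔ x ∈ p.support := by
  obtain ⟨i, hi, ha, hb⟩ := exists_crossing_of_length_lt_degreeIn_add_degreeIn hdeg
  refine ⟨_, (p.take i).append (Walk.cons hb.symm (p.drop (i + 1)).reverse),
    isPath_append_cons (hp.take i) (hp.drop _).reverse hb.symm ?_, ha.symm, ?_, fun x ↦ ?_⟩
  · simpa [List.disjoint_reverse_right] using disjoint_support_take_drop hp hi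
  · simp only [Walk.length_append, Walk.take_length, Walk.length_cons, Walk.length_reverse,
      Walk.drop_length]
    omega
  · rw [mem_support_iff_take_or_drop hi, Walk.support_append, List.mem_append, Walk.support_cons,
      List.tail_cons, Walk.support_reverse, List.mem_reverse]

theorem IsLongestPathIn.mem_support_of_adj {S : Finset V} {a b : V} {p : G.Walk a b}
    (hp : IsLongestPathIn S p) (hdeg : p.length < degreeIn G S a + degreeIn G S b) {c u : V}
    (hc : c ∈ p.support) (hu : u ∈ S) (hcu : G.Adj c u) : u ∈ p.support := by
  classical
  have hda : degreeIn G S a ≤ degreeIn G p.support.toFinset a :=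
    degreeIn_le_degreeIn_of_forall_mem G fun u hu hau ↦
      List.mem_toFinset.2 (hp.mem_support_of_adj_start hu hau)
  have hdb : degreeIn G S b ≤ degreeIn G p.support.toFinset b :=
    degreeIn_le_degreeIn_of_forall_mem G fun u hu hbu ↦
      by simpa using hp.reverse.mem_support_of_adj_start hu hbu
  obtain ⟨d, q, hq, hda', hlen, hqp⟩ := exists_isPath_adj_of_length_lt_degreeIn_add_degreeIn
    hp.isPath (hdeg.trans_le (add_le_add hda hdb))
  exact (hqp u).1 ((hp.of_support_iff hq hlen hqp).mem_support_of_adj_of_adj hda' ((hqp c).2 hc)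
    hu hcu)

theorem mul_card_lt_card_interedges_of_minimal [DecidableEq V] {m : ℕ} {S C : Finset V}
    (hS : Minimal (fun T : Finset V ↦ m * #T < #(G.interedges T T)) S) (hC : C ⊆ S)
    (hne : C.Nonempty) : m * #C < #(G.interedges C (S \ C)) + #(G.interedges C S) := by
  have hlt : S \ C < S := Finset.sdiff_ssubset hC hne
  have hsmall : #(G.interedges (S \ C) (S \ C)) ≤ m * #(S \ C) :=
    not_lt.1 (hS.not_prop_of_lt hlt)
  have hbig : m * #S < #(G.interedges S S) := hS.prop
  rw [card_interedges_sdiff G hC, ← Finset.card_sdiff_add_card_eq_card hC, mul_add] at hbig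
  omega

theorem lt_two_mul_degreeIn_of_minimal {m : ℕ} {S : Finset V}
    (hS : Minimal (fun T : Finset V ↦ m * #T < #(G.interedges T T)) S) {v : V} (hv : v ∈ S) :
    m < 2 * degreeIn G S v := by
  classical
  have h := mul_card_lt_card_interedges_of_minimal hS (Finset.singleton_subset_iff.2 hv)
    (Finset.singleton_nonempty v)
  have hmono := degreeIn_mono G (Finset.sdiff_subset (s := S) (t := {v})) v
  simp only [card_interedges_eq_sum_degreeIn, Finset.sum_singleton, Finset.card_singleton] at h
  omega

/-- **Erdős–Gallai**; the left-hand side counts every edge inside `S` twice. -/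
theorem exists_isPath_of_mul_card_lt_card_interedges {m : ℕ} {S : Finset V}
    (hS : m * #S < #(G.interedges S S)) :
    ∃ (a b : V) (p : G.Walk a b), p.IsPath ∧ p.length = m + 1 ∧ ∀ x ∈ p.support, x ∈ S := by
  classical
  obtain ⟨T, hTS, hT⟩ :=
    exists_minimal_le_of_wellFoundedLT (fun T : Finset V ↦ m * #T < #(G.interedges T T)) S hS
  have hT_nonempty : T.Nonempty := by
    rw [Finset.nonempty_iff_ne_empty]
    rintro rfl
    simpa using hT.prop
  obtain ⟨a, b, p, hp⟩ := exists_isLongestPathIn (G := G) hT_nonempty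
  obtain hlong | hshort := le_or_gt (m + 1) p.length
  · exact ⟨a, _, p.take (m + 1), hp.isPath.take _, by simp [hlong], fun x hx ↦
      hTS (hp.support_subset x ((p.isSubwalk_take _).support_subset hx))⟩
  have ha := lt_two_mul_degreeIn_of_minimal hT (hp.support_subset a p.start_mem_support)
  have hb := lt_two_mul_degreeIn_of_minimal hT (hp.support_subset b p.end_mem_support)
  have hclosed : ∀ c ∈ p.support, ∀ u ∈ T, G.Adj c u → u ∈ p.support := fun c hc u hu hcu ↦
    hp.mem_support_of_adj (by omega) hc hu hcu
  let C := p.support.toFinset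
  have hCT : ∀ c ∈ C, ∀ u ∈ T, G.Adj c u → u ∈ C := by simpa [C] using hclosed
  have hC_card : #C = p.length + 1 := by
    rw [List.toFinset_card_of_nodup hp.isPath.support_nodup, Walk.length_support]
  have hgt := mul_card_lt_card_interedges_of_minimal (C := C) hT
    (fun x hx ↦ hp.support_subset x (List.mem_toFinset.1 hx)) ⟨a, by simp [C]⟩
  have hout := card_interedges_sdiff_eq_zero_of_forall_mem G hCT
  have hin : #(G.interedges C T) ≤ (#C - 1) * #C := card_interedges_le_of_forall_mem G hCT
  have hle : (#C - 1) * #C ≤ m * #C := Nat.mul_le_mul_right _ (by omega)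
  omega

end ErdosGallai

section Linked

open scoped Finset

theorem hasCycleLen_of_mul_card_lt_card_interedges {V : Type} {G : SimpleGraph V}
    [DecidableRel G.Adj] {m : ℕ} {N : Finset V} {w : V} (hw : ∀ u ∈ N, G.Adj w u)
    (hN : m * #N < #(G.interedges N N)) : HasCycleLen G (m + 3) := by
  obtain ⟨a, b, p, hp, hlen, hpN⟩ := exists_isPath_of_mul_card_lt_card_interedges hN
  have h := hasCycleLen_of_isPath_of_adj_of_adj hp (by omega)
    (fun hwp ↦ (hw w (hpN w hwp)).ne rfl) (hw a (hpN a p.start_mem_support))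
    (hw b (hpN b p.end_mem_support)).symm
  rwa [hlen] at h

theorem exists_common_neighbor_of_card_lt {V : Type*} {G : SimpleGraph V} [DecidableRel G.Adj]
    {U F : Finset V} {v w : V} (h : #U + #F < degreeIn G U v + degreeIn G U w) :
    ∃ u ∈ U, u ∉ F ∧ G.Adj v u ∧ G.Adj w u := by
  classical
  by_contra! hF
  have hinter : {u ∈ U | G.Adj v u} ∩ {u ∈ U | G.Adj w u} ⊆ F := fun u hu ↦ by
    simp only [Finset.mem_inter, Finset.mem_filter] at hu
    by_contra huF
    exact hF u hu.1.1 huF hu.1.2 hu.2.2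
  have hunion : {u ∈ U | G.Adj v u} ∪ {u ∈ U | G.Adj w u} ⊆ U :=
    Finset.union_subset (Finset.filter_subset _ _) (Finset.filter_subset _ _)
  have := Finset.card_union_add_card_inter {u ∈ U | G.Adj v u} {u ∈ U | G.Adj w u}
  have := Finset.card_le_card hinter
  have := Finset.card_le_card hunion
  simp only [degreeIn] at h
  omega

/-- `W` has more than `M` vertices, and any two vertices of `W` keep a common neighbour (anywhere
in `G`) after the deletion of any `M` vertices. Such a set can be traversed greedily by paths of
every even length. -/
structure IsLinked {V : Type*} (G : SimpleGraph V) (W : Finset V) (M : ℕ) : Prop where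
  lt_card : M < #W
  exists_adj : ∀ v ∈ W, ∀ w ∈ W, ∀ F : Finset V, #F ≤ M → ∃ u ∉ F, G.Adj v u ∧ G.Adj w u

namespace IsLinked

theorem exists_isPath {V : Type*} {G : SimpleGraph V} {W : Finset V} {M : ℕ}
    (h : IsLinked G W M) (j : ℕ) {F : Finset V} {v w : V} (hv : v ∈ W) (hw : w ∈ W)
    (hvw : v ≠ w) (hvF : v ∉ F) (hwF : w ∉ F) (hM : #F + 2 * j + 4 ≤ M) :
    ∃ p : G.Walk v w, p.IsPath ∧ p.length = 2 * j + 2 ∧ ∀ x ∈ p.support, x ∉ F := by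
  classical
  induction j generalizing F v with
  | zero =>
    obtain ⟨u, huF, hvu, hwu⟩ := h.exists_adj v hv w hw F (by omega)
    refine ⟨Walk.cons hvu hwu.symm.toWalk, (Walk.IsPath.of_adj hwu.symm).cons ?_, rfl, ?_⟩
    · simp [hvu.ne, hvw]
    · simp [hvF, huF, hwF]
  | succ j ih =>
    obtain ⟨z, hz, hzF⟩ : ∃ z ∈ W, z ∉ insert v (insert w F) := by
      by_contra! hWF
      have := Finset.card_le_card hWF
      have := Finset.card_insert_le v (insert w F)
      have := Finset.card_insert_le w F
      have := h.lt_card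
      omega
    simp only [Finset.mem_insert, not_or] at hzF
    have hcard := Finset.card_insert_le v F
    obtain ⟨p, hp, hlen, hpF⟩ := ih (F := insert v F) hz hzF.2.1 (by simp [hzF])
      (by simp [hvw.symm, hwF]) (by omega)
    have hvp : v ∉ p.support := fun hvp ↦ hpF v hvp (Finset.mem_insert_self v F)
    obtain ⟨u, hu, hvu, hzu⟩ := h.exists_adj v hv z hz (F ∪ p.support.toFinset) (by
      have := Finset.card_union_le F p.support.toFinset
      have := p.support.toFinset_card_le
      rw [Walk.length_support] at this
      omega)
    simp only [Finset.mem_union, List.mem_toFinset, not_or] at hu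
    refine ⟨Walk.cons hvu (Walk.cons hzu.symm p), (hp.cons hu.2).cons ?_, by simp [hlen]; ring, ?_⟩
    · simp [hvu.ne, hvp]
    · simpa [hvF, hu.1] using fun x hx ↦ (not_or.1 (Finset.mem_insert.not.1 (hpF x hx))).2

variable {V : Type} {G : SimpleGraph V} {W : Finset V} {M : ℕ}

theorem hasCycleLen_even (h : IsLinked G W M) {j : ℕ} (hM : 2 * j + 5 ≤ M) :
    HasCycleLen G (2 * j + 4) := by
  classical
  have hcard := h.lt_card
  obtain ⟨v, hv, w, hw, hvw⟩ := Finset.one_lt_card.1 (show 1 < #W by omega)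
  obtain ⟨u, -, hvu, hwu⟩ := h.exists_adj v hv w hw ∅ (by simp)
  obtain ⟨p, hp, hlen, hpu⟩ := h.exists_isPath j (F := {u}) hv hw hvw (by simpa using hvu.ne)
    (by simpa using hwu.ne) (by simp; omega)
  have hcycle := hasCycleLen_of_isPath_of_adj_of_adj hp (by omega)
    (fun hup ↦ by simpa using hpu u hup) hvu.symm hwu
  rwa [hlen] at hcycle

theorem hasCycleLen_odd [DecidableRel G.Adj] (h : IsLinked G W M) {j : ℕ} (hM : 2 * j + 6 ≤ M)
    {a b : V} (hab : G.Adj a b) (ha : 3 ≤ degreeIn G W a) (hb : 3 ≤ degreeIn G W b) :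
    HasCycleLen G (2 * j + 5) := by
  classical
  have hexists : ∀ c x y : V, 3 ≤ degreeIn G W c → ∃ w ∈ W, G.Adj c w ∧ w ≠ x ∧ w ≠ y := by
    intro c x y hc
    obtain ⟨w, hw, hwxy⟩ := Finset.exists_mem_notMem_of_card_lt_card
      (lt_of_le_of_lt (Finset.card_le_two (a := x) (b := y)) hc)
    simp only [Finset.mem_filter, Finset.mem_insert, Finset.mem_singleton, not_or] at hw hwxy
    exact ⟨w, hw.1, hw.2, hwxy⟩
  obtain ⟨v, hv, hav, hvb, -⟩ := hexists a b b ha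
  obtain ⟨w, hw, hbw, hwa, hwv⟩ := hexists b a v hb
  obtain ⟨p, hp, hlen, hpF⟩ := h.exists_isPath j (F := {a, b}) hv hw hwv.symm
    (by simp [hav.ne', hvb]) (by simp [hwa, hbw.ne'])
    (by have := Finset.card_le_two (a := a) (b := b); omega)
  have hap : a ∉ p.support := fun hap ↦ hpF a hap (by simp)
  have hbp : b ∉ p.support := fun hbp ↦ hpF b hbp (by simp)
  have hcycle := hasCycleLen_of_isPath_of_adj_of_adj (hp.cons (h := hav) hap) (w := b) (by simp)
    (by simp [hab.ne', hbp]) hab.symm hbw.symm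
  rwa [Walk.length_cons, hlen] at hcycle

end IsLinked

end Linked

section HermitianMatrix

theorem pow_mul_sub_le_sum_pow_mul {ι : Type*} [Fintype ι] [DecidableEq ι] {lam : ι → ℝ} {i₀ : ι}
    {σ : ℝ} (hσ : ∀ i ≠ i₀, |lam i| ≤ σ) (k : ℕ) (c : ι → ℝ) :
    lam i₀ ^ (k + 2) * c i₀ - σ ^ k * ∑ i ∈ Finset.univ.erase i₀, lam i ^ 2 * |c i| ≤
      ∑ i, lam i ^ (k + 2) * c i := by
  rw [← Finset.add_sum_erase _ _ (Finset.mem_univ i₀), sub_eq_add_neg, Finset.mul_sum,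
    ← Finset.sum_neg_distrib]
  refine add_le_add le_rfl (Finset.sum_le_sum fun i hi ↦ neg_le_of_abs_le ?_)
  calc |lam i ^ (k + 2) * c i| = |lam i| ^ k * (lam i ^ 2 * |c i|) := by
        rw [abs_mul, abs_pow, pow_add, sq_abs, mul_assoc]
    _ ≤ σ ^ k * (lam i ^ 2 * |c i|) := by
        gcongr
        exact hσ i (Finset.ne_of_mem_erase hi)

open scoped Matrix

variable {V : Type*} [Fintype V] [DecidableEq V] {A : Matrix V V ℝ} (hA : A.IsHermitian)

theorem dotProduct_eigenvectorBasis_self (i : V) :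
    hA.eigenvectorBasis i ⬝ᵥ hA.eigenvectorBasis i = 1 := by
  have h := orthonormal_iff_ite.1 hA.eigenvectorBasis.orthonormal i i
  rwa [if_pos rfl, EuclideanSpace.inner_eq_star_dotProduct] at h

theorem dotProduct_eigenvectorBasis_of_ne {i j : V} (hij : i ≠ j) :
    hA.eigenvectorBasis i ⬝ᵥ hA.eigenvectorBasis j = 0 := by
  have h := orthonormal_iff_ite.1 hA.eigenvectorBasis.orthonormal j i
  rwa [if_neg hij.symm, EuclideanSpace.inner_eq_star_dotProduct] at h

theorem dotProduct_pow_mulVec_eq_sum (k : ℕ) (x y : V → ℝ) :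
    x ⬝ᵥ (A ^ k) *ᵥ y = ∑ i, hA.eigenvalues i ^ k *
      ((hA.eigenvectorBasis i ⬝ᵥ x) * (hA.eigenvectorBasis i ⬝ᵥ y)) := by
  set U : Matrix V V ℝ := ↑hA.eigenvectorUnitary
  have hcoord : ∀ (z : V → ℝ) (i : V), (z ᵥ* U) i = hA.eigenvectorBasis i ⬝ᵥ z := fun z i ↦
    dotProduct_comm _ _
  have hpow : A ^ k = U * Matrix.diagonal (hA.eigenvalues ^ k) * star U := by
    conv_lhs => rw [hA.spectral_theorem, ← map_pow, Unitary.conjStarAlgAut_apply,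
      Matrix.diagonal_pow]
    rfl
  rw [hpow, Matrix.mul_assoc, ← Matrix.mulVec_mulVec, Matrix.dotProduct_mulVec,
    ← Matrix.mulVec_mulVec, Matrix.star_eq_conjTranspose,
    Matrix.conjTranspose_eq_transpose_of_trivial, Matrix.mulVec_transpose]
  simp only [← hcoord]
  rw [dotProduct]
  simp only [Matrix.mulVec_diagonal, Pi.pow_apply]
  exact Finset.sum_congr rfl fun i _ ↦ mul_left_comm _ _ _

theorem pow_apply_eq_sum_eigenvalues (k : ℕ) (u v : V) :
    (A ^ k) u v = ∑ i, hA.eigenvalues i ^ k *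
      (hA.eigenvectorBasis i u * hA.eigenvectorBasis i v) := by
  simpa using dotProduct_pow_mulVec_eq_sum hA k (Pi.single u 1) (Pi.single v 1)

theorem trace_pow_eq_sum_eigenvalues (k : ℕ) : (A ^ k).trace = ∑ i, hA.eigenvalues i ^ k := by
  simp only [Matrix.trace, Matrix.diag, pow_apply_eq_sum_eigenvalues hA]
  rw [Finset.sum_comm]
  refine Finset.sum_congr rfl fun i _ ↦ ?_
  rw [← Finset.mul_sum]
  exact (congrArg _ (dotProduct_eigenvectorBasis_self hA i)).trans (mul_one _)

theorem dotProduct_mulVec_le_mul_dotProduct {c : ℝ} (hc : ∀ i, hA.eigenvalues i ≤ c) (x : V → ℝ) :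
    x ⬝ᵥ A *ᵥ x ≤ c * (x ⬝ᵥ x) := by
  have h1 := dotProduct_pow_mulVec_eq_sum hA 1 x x
  have h0 := dotProduct_pow_mulVec_eq_sum hA 0 x x
  simp only [pow_zero, pow_one, Matrix.one_mulVec, one_mul] at h0 h1
  rw [h0, h1, Finset.mul_sum]
  exact Finset.sum_le_sum fun i _ ↦ mul_le_mul_of_nonneg_right (hc i) (mul_self_nonneg _)

theorem eigenvalues_pow_mul_sub_le_pow_apply {i₀ : V} {σ : ℝ}
    (hσ : ∀ i ≠ i₀, |hA.eigenvalues i| ≤ σ) (hσ0 : 0 ≤ σ) (k : ℕ) (u v : V) :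
    hA.eigenvalues i₀ ^ (k + 2) * (hA.eigenvectorBasis i₀ u * hA.eigenvectorBasis i₀ v) -
      σ ^ k * (((A ^ 2) u u + (A ^ 2) v v) / 2) ≤ (A ^ (k + 2)) u v := by
  set lam := hA.eigenvalues
  set b : V → V → ℝ := fun i ↦ hA.eigenvectorBasis i
  have hsum : ∑ i ∈ Finset.univ.erase i₀, lam i ^ 2 * |b i u * b i v| ≤
      ((A ^ 2) u u + (A ^ 2) v v) / 2 := by
    rw [pow_apply_eq_sum_eigenvalues hA, pow_apply_eq_sum_eigenvalues hA, ← Finset.sum_add_distrib,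
      Finset.sum_div]
    refine (Finset.sum_le_sum fun i _ ↦ ?_).trans (Finset.sum_le_univ_sum_of_nonneg fun i ↦ ?_)
    · rw [← mul_add, mul_div_assoc]
      gcongr
      rw [abs_le]
      constructor <;> nlinarith [sq_nonneg (b i u + b i v), sq_nonneg (b i u - b i v)]
    · nlinarith [mul_nonneg (sq_nonneg (lam i)) (sq_nonneg (b i u)),
        mul_nonneg (sq_nonneg (lam i)) (sq_nonneg (b i v))]
  rw [pow_apply_eq_sum_eigenvalues hA (k + 2)]
  exact le_trans (by gcongr) (pow_mul_sub_le_sum_pow_mul hσ k fun i ↦ b i u * b i v)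

theorem eigenvalues_pow_sub_le_trace_pow {i₀ : V} {σ : ℝ}
    (hσ : ∀ i ≠ i₀, |hA.eigenvalues i| ≤ σ) (k : ℕ) :
    hA.eigenvalues i₀ ^ (k + 2) - σ ^ k * ((A ^ 2).trace - hA.eigenvalues i₀ ^ 2) ≤
      (A ^ (k + 2)).trace := by
  have h := pow_mul_sub_le_sum_pow_mul hσ k fun _ ↦ 1
  simpa only [trace_pow_eq_sum_eigenvalues hA, ← Finset.sum_erase_eq_sub (Finset.mem_univ i₀),
    abs_one, mul_one] using h

end HermitianMatrix

section AdjMatrix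

open scoped Finset Matrix

variable {V : Type*} (G : SimpleGraph V) [DecidableRel G.Adj]

theorem isHermitian_adjMatrix : (G.adjMatrix ℝ).IsHermitian := by
  rw [Matrix.IsHermitian, Matrix.conjTranspose_eq_transpose_of_trivial, transpose_adjMatrix]

theorem adjMatrix_apply_nonneg (u v : V) : 0 ≤ G.adjMatrix ℝ u v := by
  rw [adjMatrix_apply]
  split_ifs <;> norm_num

theorem sq_sum_adjMatrix_mul_le (S T : Finset V) (x y : V → ℝ) :
    (∑ u ∈ S, ∑ v ∈ T, G.adjMatrix ℝ u v * (x u * y v)) ^ 2 ≤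
      #(G.interedges S T) * ((∑ u ∈ S, x u ^ 2) * ∑ v ∈ T, y v ^ 2) := by
  have hcard : (#(G.interedges S T) : ℝ) = ∑ e ∈ S ×ˢ T, G.adjMatrix ℝ e.1 e.2 ^ 2 := by
    simp only [adjMatrix_apply, ite_pow, one_pow, ne_eq, OfNat.ofNat_ne_zero, not_false_eq_true,
      zero_pow, Finset.sum_boole, interedges_def]
  rw [← Finset.sum_product', hcard, Finset.sum_mul_sum, ← Finset.sum_product']
  simpa only [mul_pow] using
    Finset.sum_mul_sq_le_sq_mul_sq (S ×ˢ T) (fun e ↦ G.adjMatrix ℝ e.1 e.2) fun e ↦ x e.1 * y e.2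

variable [Fintype V]

theorem adjMatrix_mulVec_mono {x y : V → ℝ} (h : x ≤ y) :
    G.adjMatrix ℝ *ᵥ x ≤ G.adjMatrix ℝ *ᵥ y := fun v ↦ by
  rw [adjMatrix_mulVec_apply, adjMatrix_mulVec_apply]
  exact Finset.sum_le_sum fun u _ ↦ h u

theorem adjMatrix_pow_succ_apply_le [DecidableEq V] (k : ℕ) (u v : V) :
    (G.adjMatrix ℝ ^ (k + 1)) u v ≤ (Fintype.card V : ℝ) ^ k := by
  induction k generalizing u with
  | zero =>
    rw [zero_add, pow_one, pow_zero, adjMatrix_apply]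
    split_ifs <;> norm_num
  | succ k ih =>
    rw [pow_succ', adjMatrix_mul_apply]
    calc ∑ w ∈ G.neighborFinset u, (G.adjMatrix ℝ ^ (k + 1)) w v
        ≤ #(G.neighborFinset u) • (Fintype.card V : ℝ) ^ k :=
          Finset.sum_le_card_nsmul _ _ _ fun w _ ↦ ih w
      _ ≤ Fintype.card V • (Fintype.card V : ℝ) ^ k :=
          nsmul_le_nsmul_left (by positivity) (Finset.card_le_univ _)
      _ = (Fintype.card V : ℝ) ^ (k + 1) := by rw [nsmul_eq_mul, pow_succ']

theorem adjMatrix_sq_apply_self [DecidableEq V] (v : V) :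
    (G.adjMatrix ℝ ^ 2) v v = G.degree v := by
  rw [sq, adjMatrix_mul_self_apply_self]

theorem adjMatrix_mulVec_eq_sum_filter {S : Finset V} {x : V → ℝ} (hx : ∀ u ∉ S, x u = 0) (v : V) :
    (G.adjMatrix ℝ *ᵥ x) v = ∑ u ∈ S with G.Adj v u, x u := by
  rw [adjMatrix_mulVec_apply, neighborFinset_eq_filter]
  refine (Finset.sum_subset (Finset.filter_subset_filter _ (Finset.subset_univ S)) ?_).symm
  intro u hu huS
  exact hx u fun hS ↦ huS (Finset.mem_filter.2 ⟨hS, (Finset.mem_filter.1 hu).2⟩)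

theorem dotProduct_adjMatrix_mulVec_eq_sum (x y : V → ℝ) :
    x ⬝ᵥ G.adjMatrix ℝ *ᵥ y = ∑ u, ∑ v, G.adjMatrix ℝ u v * (x u * y v) := by
  simp only [dotProduct, Matrix.mulVec, Finset.mul_sum]
  exact Finset.sum_congr rfl fun u _ ↦ Finset.sum_congr rfl fun v _ ↦ mul_left_comm _ _ _

theorem specRad_eq_sSup_spectrum {V : Type} [Fintype V] [DecidableEq V] (G : SimpleGraph V)
    [DecidableRel G.Adj] : specRad G = sSup (spectrum ℝ (G.adjMatrix ℝ)) := by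
  rw [specRad]
  convert rfl

theorem exists_eigenvalues_eq_specRad {V : Type} [Fintype V] [DecidableEq V] [Nonempty V]
    (G : SimpleGraph V) [DecidableRel G.Adj] :
    ∃ i₀, (isHermitian_adjMatrix G).eigenvalues i₀ = specRad G := by
  obtain ⟨i₀, hi₀⟩ := Finite.exists_max (isHermitian_adjMatrix G).eigenvalues
  refine ⟨i₀, ?_⟩
  rw [specRad_eq_sSup_spectrum, (isHermitian_adjMatrix G).spectrum_real_eq_range_eigenvalues]
  exact (IsGreatest.csSup_eq ⟨Set.mem_range_self i₀, Set.forall_mem_range.2 hi₀⟩).symm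

end AdjMatrix

section IsSubeigenvector

open scoped Finset Matrix

theorem mul_le_sq_div_four_of_add_le {a b n : ℕ} (h : a + b ≤ n) : a * b ≤ n ^ 2 / 4 := by
  rw [Nat.le_div_iff_mul_le (by norm_num)]
  nlinarith [Nat.pow_le_pow_left h 2, two_mul_le_add_sq a b]

/-- A nonzero nonnegative vector `x` with `μ • x ≤ A *ᵥ x`, where `A` is the adjacency matrix.
Such vectors replace Perron–Frobenius theory: positive parts and absolute values of eigenvectors
are of this kind. -/
structure IsSubeigenvector {V : Type*} [Fintype V] (G : SimpleGraph V) [DecidableRel G.Adj] (μ : ℝ)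
    (x : V → ℝ) : Prop where
  nonneg : 0 ≤ x
  ne_zero : x ≠ 0
  smul_le : μ • x ≤ G.adjMatrix ℝ *ᵥ x

section Eigenvector

variable {V : Type*} [Fintype V] {G : SimpleGraph V} [DecidableRel G.Adj] {f : V → ℝ} {μ ν : ℝ}

theorem isSubeigenvector_posPart (hf : G.adjMatrix ℝ *ᵥ f = μ • f) (hν : ν ≤ μ)
    (hpos : ∃ u, 0 < f u) : IsSubeigenvector G ν f⁺ where
  nonneg := posPart_nonneg f
  ne_zero := by
    obtain ⟨u, hu⟩ := hpos
    exact fun h ↦ hu.not_ge (posPart_eq_zero.1 h u)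
  smul_le v := by
    rcases le_total (f v) 0 with hv | hv
    · have hzero : f⁺ v = 0 := posPart_eq_zero.2 hv
      have hnonneg := adjMatrix_mulVec_mono G (posPart_nonneg f) v
      rw [Matrix.mulVec_zero] at hnonneg
      rwa [Pi.smul_apply, hzero, smul_zero]
    · calc ν • f⁺ v = ν * f v := congrArg (ν * ·) (posPart_of_nonneg hv)
        _ ≤ μ * f v := by gcongr
        _ = (G.adjMatrix ℝ *ᵥ f) v := by rw [hf, Pi.smul_apply, smul_eq_mul]
        _ ≤ (G.adjMatrix ℝ *ᵥ f⁺) v := adjMatrix_mulVec_mono G (le_posPart f) v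

theorem isSubeigenvector_negPart (hf : G.adjMatrix ℝ *ᵥ f = μ • f) (hν : ν ≤ μ)
    (hneg : ∃ u, f u < 0) : IsSubeigenvector G ν f⁻ := by
  rw [← posPart_neg]
  exact isSubeigenvector_posPart (by rw [Matrix.mulVec_neg, hf, smul_neg]) hν
    (by simpa only [Pi.neg_apply, neg_pos] using hneg)

theorem isSubeigenvector_abs (hf : G.adjMatrix ℝ *ᵥ f = μ • f) (hν : ν ≤ μ) (hf0 : f ≠ 0) :
    IsSubeigenvector G ν |f| where
  nonneg := abs_nonneg f
  ne_zero h := hf0 (funext fun v ↦ abs_eq_zero.1 (congrFun h v))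
  smul_le v := by
    calc ν * |f v| ≤ |μ| * |f v| := by
          gcongr
          exact hν.trans (le_abs_self μ)
      _ = |(G.adjMatrix ℝ *ᵥ f) v| := by rw [hf, Pi.smul_apply, smul_eq_mul, abs_mul]
      _ ≤ (G.adjMatrix ℝ *ᵥ |f|) v := by
          rw [adjMatrix_mulVec_apply, adjMatrix_mulVec_apply]
          exact Finset.abs_sum_le_sum_abs f _

end Eigenvector

namespace IsSubeigenvector

section Wheel

variable {V : Type*} [Fintype V] {G : SimpleGraph V} [DecidableRel G.Adj] {μ : ℝ} {x : V → ℝ}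
  {w : V}

theorem mul_le_degreeIn_mul (hx : IsSubeigenvector G μ x) (hw : ∀ u, x u ≤ x w) (v : V) :
    μ * x v ≤ degreeIn G {u | 0 < x u} v * x w := by
  calc μ * x v ≤ (G.adjMatrix ℝ *ᵥ x) v := hx.smul_le v
    _ = ∑ u ∈ {u | 0 < x u} with G.Adj v u, x u :=
        adjMatrix_mulVec_eq_sum_filter G (fun u hu ↦ by
          simpa using (hx.nonneg u).antisymm' (by simpa using hu)) v
    _ ≤ degreeIn G {u | 0 < x u} v * x w := by
        rw [degreeIn, ← nsmul_eq_mul]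
        exact Finset.sum_le_card_nsmul _ _ _ fun u _ ↦ hw u

theorem exists_pos_forall_le (hx : IsSubeigenvector G μ x) : ∃ w, 0 < x w ∧ ∀ u, x u ≤ x w := by
  obtain ⟨v, hv⟩ := Function.ne_iff.1 hx.ne_zero
  have : Nonempty V := ⟨v⟩
  obtain ⟨w, hw⟩ := Finite.exists_max x
  exact ⟨w, ((hx.nonneg v).lt_of_ne' hv).trans_le (hw v), hw⟩

/-- The vertex `w` maximises `x`; the second inequality counts the walks of length two from it. -/
theorem exists_sq_le_card_interedges (hx : IsSubeigenvector G μ x) (hμ : 0 < μ) :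
    ∃ (w : V) (N : Finset V), (∀ u ∈ N, G.Adj w u) ∧ μ ≤ #N ∧
      μ ^ 2 ≤ #N * (#{u | 0 < x u} - #N : ℝ) + #(G.interedges N N) := by
  classical
  obtain ⟨w, hw0, hw⟩ := hx.exists_pos_forall_le
  set U : Finset V := {u | 0 < x u}
  set N : Finset V := {u ∈ U | G.Adj w u}
  have hNU : N ⊆ U := Finset.filter_subset _ _
  have hdegree : ∀ v, (degreeIn G U v : ℝ) ≤ (#U - #N) + degreeIn G N v := fun v ↦ by
    have hsdiff : (degreeIn G (U \ N) v : ℝ) ≤ #(U \ N) := mod_cast degreeIn_le_card G (U \ N) v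
    rw [Finset.card_sdiff_of_subset hNU, Nat.cast_sub (Finset.card_le_card hNU)] at hsdiff
    rw [← degreeIn_sdiff_add_degreeIn G hNU v, Nat.cast_add]
    gcongr
  refine ⟨w, N, fun u hu ↦ (Finset.mem_filter.1 hu).2,
    le_of_mul_le_mul_right (hx.mul_le_degreeIn_mul hw w) hw0, le_of_mul_le_mul_right ?_ hw0⟩
  calc μ ^ 2 * x w = μ * (μ * x w) := by ring
    _ ≤ μ * ∑ u ∈ N, x u := by
        gcongr
        refine (hx.smul_le w).trans_eq (adjMatrix_mulVec_eq_sum_filter G (fun u hu ↦ ?_) w)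
        simpa using (hx.nonneg u).antisymm' (by simpa [U] using hu)
    _ = ∑ u ∈ N, μ * x u := Finset.mul_sum _ _ _
    _ ≤ ∑ u ∈ N, ((#U - #N) + degreeIn G N u) * x w :=
        Finset.sum_le_sum fun u _ ↦ (hx.mul_le_degreeIn_mul hw u).trans
          (mul_le_mul_of_nonneg_right (hdegree u) hw0.le)
    _ = (#N * (#U - #N : ℝ) + #(G.interedges N N)) * x w := by
        rw [← Finset.sum_mul, Finset.sum_add_distrib, Finset.sum_const, nsmul_eq_mul,
          card_interedges_eq_sum_degreeIn, Nat.cast_sum]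

end Wheel

variable {V : Type} [Fintype V] {G : SimpleGraph V} [DecidableRel G.Adj] {μ : ℝ} {x y : V → ℝ}
  {l : ℕ}

theorem hasCycleLen (hx : IsSubeigenvector G μ x) (hμ : 0 < μ) (hl3 : 3 ≤ l)
    (hl : l ≤ 2 * μ - #{u | 0 < x u}) : HasCycleLen G l := by
  obtain ⟨w, N, hwN, hμN, hN⟩ := hx.exists_sq_le_card_interedges hμ
  obtain ⟨m, rfl⟩ := Nat.exists_eq_add_of_le' hl3
  refine hasCycleLen_of_mul_card_lt_card_interedges hwN ?_
  push_cast at hl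
  have hreal : (m * #N : ℝ) < #(G.interedges N N) := by nlinarith [sq_nonneg (μ - #N)]
  exact_mod_cast hreal

theorem hasCycleLen_three (hx : IsSubeigenvector G μ x)
    (hμ : √(Fintype.card V ^ 2 / 4 : ℕ) < μ) : HasCycleLen G 3 := by
  have hμ0 : 0 < μ := (Real.sqrt_nonneg _).trans_lt hμ
  obtain ⟨w, N, hwN, -, hN⟩ := hx.exists_sq_le_card_interedges hμ0
  obtain ⟨r, hr⟩ := Nat.exists_eq_add_of_le (Finset.card_le_univ N)
  refine hasCycleLen_of_mul_card_lt_card_interedges (m := 0) hwN ?_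
  have hmul : #N * r ≤ Fintype.card V ^ 2 / 4 := mul_le_sq_div_four_of_add_le hr.ge
  have hU : (#{u | 0 < x u} : ℝ) ≤ #N + r := by
    exact_mod_cast hr ▸ Finset.card_le_univ {u | 0 < x u}
  have hreal : (0 : ℝ) < #(G.interedges N N) := by
    have := (Real.sqrt_lt' hμ0).1 hμ
    have : (#N * r : ℝ) ≤ (Fintype.card V ^ 2 / 4 : ℕ) := mod_cast hmul
    nlinarith [(Nat.cast_nonneg #N : (0 : ℝ) ≤ #N)]
  rw [zero_mul]
  exact_mod_cast hreal

theorem hasCycleLen_of_mul_eq_zero (hx : IsSubeigenvector G μ x) (hy : IsSubeigenvector G μ y)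
    (hxy : ∀ v, x v * y v = 0) (hμ : 0 < μ) (hl3 : 3 ≤ l) (hl : l ≤ 2 * μ - Fintype.card V / 2) :
    HasCycleLen G l := by
  classical
  have hdisj : Disjoint ({u | 0 < x u} : Finset V) ({u | 0 < y u} : Finset V) :=
    Finset.disjoint_filter.2 fun v _ hxv hyv ↦ (mul_pos hxv hyv).ne' (hxy v)
  have hcard : (#{u | 0 < x u} + #{u | 0 < y u} : ℝ) ≤ Fintype.card V := by
    rw [← Nat.cast_add, ← Finset.card_union_of_disjoint hdisj]
    exact_mod_cast Finset.card_le_univ _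
  rcases le_total (#{u | 0 < x u} : ℝ) #{u | 0 < y u} with h | h
  · exact hx.hasCycleLen hμ hl3 (by linarith)
  · exact hy.hasCycleLen hμ hl3 (by linarith)

end IsSubeigenvector

section TwoEigenvectors

variable {V : Type} [Fintype V] {G : SimpleGraph V} [DecidableRel G.Adj] {μ ν : ℝ} {f g : V → ℝ}
  {l : ℕ}

theorem hasCycleLen_of_eigenvector_mul_neg (hf : G.adjMatrix ℝ *ᵥ f = μ • f) (hν : ν ≤ μ)
    {u v : V} (huv : f u * f v < 0) (hν0 : 0 < ν) (hl3 : 3 ≤ l)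
    (hl : l ≤ 2 * ν - Fintype.card V / 2) : HasCycleLen G l := by
  obtain ⟨hpos, hneg⟩ : (∃ a, 0 < f a) ∧ ∃ a, f a < 0 := by
    rcases mul_neg_iff.1 huv with h | h
    exacts [⟨⟨u, h.1⟩, v, h.2⟩, ⟨⟨v, h.2⟩, u, h.1⟩]
  refine (isSubeigenvector_posPart hf hν hpos).hasCycleLen_of_mul_eq_zero
    (isSubeigenvector_negPart hf hν hneg) (fun a ↦ ?_) hν0 hl3 hl
  rw [Pi.posPart_apply, Pi.negPart_apply]
  rcases le_total (f a) 0 with ha | ha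
  · rw [posPart_eq_zero.2 ha, zero_mul]
  · rw [negPart_eq_zero.2 ha, mul_zero]

theorem mul_eq_zero_of_dotProduct_eq_zero {V : Type*} [Fintype V] {f g : V → ℝ}
    (hf : ∀ u v, 0 ≤ f u * f v) (hg : ∀ u v, 0 ≤ g u * g v) (hfg : f ⬝ᵥ g = 0) (u : V) :
    f u * g u = 0 := by
  have hnonneg : ∀ v, 0 ≤ f u * g u * (f v * g v) := fun v ↦ by
    rw [mul_mul_mul_comm]
    exact mul_nonneg (hf u v) (hg u v)
  have hsum : ∑ v, f u * g u * (f v * g v) = 0 := by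
    rw [← Finset.mul_sum]
    exact mul_eq_zero_of_right _ hfg
  exact mul_self_eq_zero.1
    ((Finset.sum_eq_zero_iff_of_nonneg fun v _ ↦ hnonneg v).1 hsum u (Finset.mem_univ u))

theorem hasCycleLen_of_dotProduct_eq_zero {μ' : ℝ} (hf : G.adjMatrix ℝ *ᵥ f = μ • f) (hν : ν ≤ μ)
    (hf0 : f ≠ 0) (hg : G.adjMatrix ℝ *ᵥ g = μ' • g) (hν' : ν ≤ μ') (hg0 : g ≠ 0)
    (hfg : f ⬝ᵥ g = 0) (hν0 : 0 < ν) (hl3 : 3 ≤ l) (hl : l ≤ 2 * ν - Fintype.card V / 2) :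
    HasCycleLen G l := by
  by_contra hcycle
  have hf1 : ∀ u v, 0 ≤ f u * f v := fun u v ↦ not_lt.1 fun h ↦
    hcycle (hasCycleLen_of_eigenvector_mul_neg hf hν h hν0 hl3 hl)
  have hg1 : ∀ u v, 0 ≤ g u * g v := fun u v ↦ not_lt.1 fun h ↦
    hcycle (hasCycleLen_of_eigenvector_mul_neg hg hν' h hν0 hl3 hl)
  refine hcycle ((isSubeigenvector_abs hf hν hf0).hasCycleLen_of_mul_eq_zero
    (isSubeigenvector_abs hg hν' hg0) (fun v ↦ ?_) hν0 hl3 hl)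
  rw [Pi.abs_apply, Pi.abs_apply, ← abs_mul, mul_eq_zero_of_dotProduct_eq_zero hf1 hg1 hfg v,
    abs_zero]

end TwoEigenvectors

end IsSubeigenvector

section QuadraticForm

open scoped Finset Matrix

variable {V : Type*} [Fintype V] {G : SimpleGraph V} [DecidableRel G.Adj]

theorem dotProduct_adjMatrix_mulVec_comm (x y : V → ℝ) :
    x ⬝ᵥ G.adjMatrix ℝ *ᵥ y = y ⬝ᵥ G.adjMatrix ℝ *ᵥ x := by
  rw [Matrix.dotProduct_mulVec, ← Matrix.mulVec_transpose, transpose_adjMatrix, dotProduct_comm]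

theorem dotProduct_adjMatrix_mulVec_eq_sum_of_support {S T : Finset V} {x y : V → ℝ}
    (hx : ∀ u ∉ S, x u = 0) (hy : ∀ v ∉ T, y v = 0) :
    x ⬝ᵥ G.adjMatrix ℝ *ᵥ y = ∑ u ∈ S, ∑ v ∈ T, G.adjMatrix ℝ u v * (x u * y v) := by
  classical
  rw [dotProduct_adjMatrix_mulVec_eq_sum]
  refine (Finset.sum_subset_zero_on_sdiff (Finset.subset_univ S) (fun u hu ↦ ?_) fun u _ ↦ ?_).symm
  · simp only [hx u (Finset.mem_sdiff.1 hu).2, zero_mul, mul_zero, Finset.sum_const_zero]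
  · refine Finset.sum_subset (Finset.subset_univ T) fun v _ hv ↦ ?_
    rw [hy v hv, mul_zero, mul_zero]

theorem sq_le_card_interedges_of_smul_le {S T : Finset V} {x y : V → ℝ} {ν : ℝ}
    (hx0 : 0 ≤ x) (hy0 : 0 ≤ y) (hx : ∀ u ∉ S, x u = 0) (hy : ∀ v ∉ T, y v = 0)
    (hxy0 : x ≠ 0 ∨ y ≠ 0) (hxy : ν • x ≤ G.adjMatrix ℝ *ᵥ y) (hyx : ν • y ≤ G.adjMatrix ℝ *ᵥ x)
    (hν : 0 < ν) : ν ^ 2 ≤ #(G.interedges S T) := by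
  set t : ℝ := x ⬝ᵥ G.adjMatrix ℝ *ᵥ y with ht
  have hxt : ν * (x ⬝ᵥ x) ≤ t := by
    rw [← smul_eq_mul, ← dotProduct_smul]
    exact dotProduct_le_dotProduct_of_nonneg_left hxy hx0
  have hyt : ν * (y ⬝ᵥ y) ≤ t := by
    rw [ht, dotProduct_adjMatrix_mulVec_comm, ← smul_eq_mul, ← dotProduct_smul]
    exact dotProduct_le_dotProduct_of_nonneg_left hyx hy0
  have hsq : ∀ (R : Finset V) (z : V → ℝ), ∑ u ∈ R, z u ^ 2 ≤ z ⬝ᵥ z := fun R z ↦ by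
    simp only [dotProduct, ← sq]
    exact Finset.sum_le_univ_sum_of_nonneg fun u ↦ sq_nonneg _
  have hx2 : 0 ≤ x ⬝ᵥ x := Finset.sum_nonneg fun u _ ↦ mul_self_nonneg (x u)
  have hy2 : 0 ≤ y ⬝ᵥ y := Finset.sum_nonneg fun u _ ↦ mul_self_nonneg (y u)
  have ht2 : t ^ 2 ≤ #(G.interedges S T) * ((x ⬝ᵥ x) * (y ⬝ᵥ y)) := by
    rw [ht, dotProduct_adjMatrix_mulVec_eq_sum_of_support hx hy]
    refine (sq_sum_adjMatrix_mul_le G S T x y).trans ?_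
    gcongr
    · exact hsq S x
    · exact hsq T y
  have ht0 : 0 < t := by
    rcases hxy0 with h | h
    · exact (mul_pos hν (hx2.lt_of_ne' (dotProduct_self_eq_zero.not.2 h))).trans_le hxt
    · exact (mul_pos hν (hy2.lt_of_ne' (dotProduct_self_eq_zero.not.2 h))).trans_le hyt
  have hprod : 0 < (x ⬝ᵥ x) * (y ⬝ᵥ y) :=
    pos_of_mul_pos_right ((sq_pos_of_pos ht0).trans_le ht2) (Nat.cast_nonneg _)
  refine le_of_mul_le_mul_right (le_trans ?_ ht2) hprod
  calc ν ^ 2 * ((x ⬝ᵥ x) * (y ⬝ᵥ y)) = ν * (x ⬝ᵥ x) * (ν * (y ⬝ᵥ y)) := by ring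
    _ ≤ t * t := by gcongr
    _ = t ^ 2 := (sq t).symm

theorem smul_posPart_le_mulVec_negPart {f : V → ℝ} {μ ν : ℝ}
    (hf : G.adjMatrix ℝ *ᵥ f = μ • f) (hν : ν ≤ -μ) : ν • f⁺ ≤ G.adjMatrix ℝ *ᵥ f⁻ := fun v ↦ by
  rcases le_total (f v) 0 with hv | hv
  · have hzero : f⁺ v = 0 := posPart_eq_zero.2 hv
    have hnonneg := adjMatrix_mulVec_mono G (negPart_nonneg f) v
    rw [Matrix.mulVec_zero] at hnonneg
    rwa [Pi.smul_apply, hzero, smul_zero]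
  · calc ν • f⁺ v = ν * f v := congrArg (ν * ·) (posPart_of_nonneg hv)
      _ ≤ -μ * f v := by gcongr
      _ = (G.adjMatrix ℝ *ᵥ (-f)) v := by
          rw [Matrix.mulVec_neg, hf, Pi.neg_apply, Pi.smul_apply, smul_eq_mul, neg_mul]
      _ ≤ (G.adjMatrix ℝ *ᵥ f⁻) v := adjMatrix_mulVec_mono G (neg_le_negPart f) v

theorem smul_negPart_le_mulVec_posPart {f : V → ℝ} {μ ν : ℝ}
    (hf : G.adjMatrix ℝ *ᵥ f = μ • f) (hν : ν ≤ -μ) : ν • f⁻ ≤ G.adjMatrix ℝ *ᵥ f⁺ := by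
  have hneg := smul_posPart_le_mulVec_negPart (G := G) (f := -f) (μ := μ)
    (by rw [Matrix.mulVec_neg, hf, smul_neg]) hν
  rwa [posPart_neg, negPart_neg] at hneg

theorem exists_sq_le_card_interedges_compl [DecidableEq V] {f : V → ℝ} {μ ν : ℝ}
    (hf : G.adjMatrix ℝ *ᵥ f = μ • f) (hf0 : f ≠ 0) (hν : 0 < ν) (hμ : μ ≤ -ν) :
    ∃ U : Finset V, ν ^ 2 ≤ #(G.interedges U Uᶜ) := by
  refine ⟨({u | 0 < f u} : Finset V),
    sq_le_card_interedges_of_smul_le (posPart_nonneg f) (negPart_nonneg f)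
    (fun u hu ↦ ?_) (fun u hu ↦ ?_) ?_ (smul_posPart_le_mulVec_negPart hf (le_neg.2 hμ))
    (smul_negPart_le_mulVec_posPart hf (le_neg.2 hμ)) hν⟩
  · exact posPart_eq_zero.2 (by simpa using hu)
  · exact negPart_eq_zero.2 (le_of_lt (by simpa using hu))
  · by_contra! h
    exact hf0 (by rw [← posPart_sub_negPart f, h.1, h.2, sub_zero])

theorem dotProduct_adjMatrix_mulVec_le_sum_add [DecidableEq V] {x : V → ℝ}
    (hx : ∀ u v, 0 ≤ x u * x v) (S : Finset V) :
    x ⬝ᵥ G.adjMatrix ℝ *ᵥ x ≤ ∑ u ∈ S, ∑ v ∈ S, G.adjMatrix ℝ u v * (x u * x v) +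
      2 * ∑ u ∈ Sᶜ, x u * (G.adjMatrix ℝ *ᵥ x) u := by
  have hcompl : ∑ u ∈ Sᶜ, x u * (G.adjMatrix ℝ *ᵥ x) u =
      ∑ u ∈ Sᶜ, ∑ v, G.adjMatrix ℝ u v * (x u * x v) := by
    simp only [Matrix.mulVec, dotProduct, Finset.mul_sum, mul_left_comm]
  have hcross : ∑ u ∈ S, ∑ v ∈ Sᶜ, G.adjMatrix ℝ u v * (x u * x v) ≤
      ∑ u ∈ Sᶜ, ∑ v, G.adjMatrix ℝ u v * (x u * x v) := by
    rw [Finset.sum_comm]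
    refine Finset.sum_le_sum fun v _ ↦ ?_
    simp only [(isSymm_adjMatrix G).apply v, mul_comm (x _) (x v)]
    exact Finset.sum_le_univ_sum_of_nonneg fun u ↦
      mul_nonneg (adjMatrix_apply_nonneg G v u) (hx v u)
  have hsplit : ∑ u ∈ S, ∑ v, G.adjMatrix ℝ u v * (x u * x v) =
      ∑ u ∈ S, ∑ v ∈ S, G.adjMatrix ℝ u v * (x u * x v) +
        ∑ u ∈ S, ∑ v ∈ Sᶜ, G.adjMatrix ℝ u v * (x u * x v) := by
    rw [← Finset.sum_add_distrib]
    exact Finset.sum_congr rfl fun u _ ↦ (Finset.sum_add_sum_compl S _).symm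
  rw [dotProduct_adjMatrix_mulVec_eq_sum, ← Finset.sum_add_sum_compl S, hcompl]
  linarith

end QuadraticForm

section NearlyBipartite

open scoped Finset Matrix

variable {V : Type*} {G : SimpleGraph V} [DecidableRel G.Adj] {x : V → ℝ} {ρ d : ℝ}
  {U W : Finset V}

theorem sum_adjMatrix_mul_eq_zero_of_not_adj (hU : ∀ a ∈ U, ∀ b ∈ U, ¬G.Adj a b) :
    ∑ u ∈ U, ∑ v ∈ U, G.adjMatrix ℝ u v * (x u * x v) = 0 :=
  Finset.sum_eq_zero fun a ha ↦ Finset.sum_eq_zero fun b hb ↦ by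
    rw [adjMatrix_apply, if_neg (hU a ha b hb), zero_mul]

variable [Fintype V]

theorem two_mul_sum_adjMatrix_mul_le_sqrt (hx1 : x ⬝ᵥ x ≤ 1) (hUW : Disjoint U W) :
    2 * ∑ u ∈ U, ∑ v ∈ W, G.adjMatrix ℝ u v * (x u * x v) ≤ √(#U * #W) := by
  classical
  set P := ∑ u ∈ U, x u ^ 2
  set Q := ∑ v ∈ W, x v ^ 2
  have hPQ : P + Q ≤ 1 := by
    rw [← Finset.sum_union hUW]
    refine (Finset.sum_le_univ_sum_of_nonneg fun u ↦ sq_nonneg (x u)).trans (hx1.trans' ?_)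
    simp only [dotProduct, ← sq, le_refl]
  have hPQ4 : 4 * (P * Q) ≤ 1 := by
    have hPQ0 : 0 ≤ P + Q := add_nonneg (Finset.sum_nonneg fun _ _ ↦ sq_nonneg _)
      (Finset.sum_nonneg fun _ _ ↦ sq_nonneg _)
    nlinarith [sq_nonneg (P - Q)]
  refine Real.le_sqrt_of_sq_le ?_
  calc (2 * ∑ u ∈ U, ∑ v ∈ W, G.adjMatrix ℝ u v * (x u * x v)) ^ 2
      = 4 * (∑ u ∈ U, ∑ v ∈ W, G.adjMatrix ℝ u v * (x u * x v)) ^ 2 := by ring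
    _ ≤ 4 * (#(G.interedges U W) * (P * Q)) := by
        gcongr
        exact sq_sum_adjMatrix_mul_le G U W x x
    _ = #(G.interedges U W) * (4 * (P * Q)) := by ring
    _ ≤ #(G.interedges U W) * 1 := by gcongr
    _ ≤ #U * #W := by
        rw [mul_one]
        exact_mod_cast card_interedges_le_mul G U W

theorem sq_adjMatrix_mulVec_apply_le_degree (hx1 : x ⬝ᵥ x ≤ 1) (v : V) :
    (G.adjMatrix ℝ *ᵥ x) v ^ 2 ≤ G.degree v := by
  rw [adjMatrix_mulVec_apply]
  calc (∑ u ∈ G.neighborFinset v, x u) ^ 2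
      ≤ #(G.neighborFinset v) * ∑ u ∈ G.neighborFinset v, x u ^ 2 := sq_sum_le_card_mul_sum_sq
    _ ≤ #(G.neighborFinset v) * 1 := by
        gcongr
        refine (Finset.sum_le_univ_sum_of_nonneg fun u ↦ sq_nonneg (x u)).trans (hx1.trans' ?_)
        simp only [dotProduct, ← sq, le_refl]
    _ = G.degree v := by rw [mul_one, card_neighborFinset_eq_degree]

theorem IsSubeigenvector.mul_mulVec_apply_le (hx : IsSubeigenvector G ρ x) (hρ : 0 < ρ)
    (hx1 : x ⬝ᵥ x ≤ 1) (v : V) : x v * (G.adjMatrix ℝ *ᵥ x) v ≤ G.degree v / ρ := by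
  have hnonneg := (mul_nonneg hρ.le (hx.nonneg v)).trans (hx.smul_le v)
  rw [le_div_iff₀ hρ]
  calc x v * (G.adjMatrix ℝ *ᵥ x) v * ρ = ρ * x v * (G.adjMatrix ℝ *ᵥ x) v := by ring
    _ ≤ (G.adjMatrix ℝ *ᵥ x) v * (G.adjMatrix ℝ *ᵥ x) v :=
        mul_le_mul_of_nonneg_right (hx.smul_le v) hnonneg
    _ ≤ G.degree v := by
        rw [← sq]
        exact sq_adjMatrix_mulVec_apply_le_degree hx1 v

theorem IsSubeigenvector.le_dotProduct (hx : IsSubeigenvector G ρ x) (hx1 : x ⬝ᵥ x = 1) :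
    ρ ≤ x ⬝ᵥ G.adjMatrix ℝ *ᵥ x := by
  calc ρ = x ⬝ᵥ ρ • x := by rw [dotProduct_smul, hx1, smul_eq_mul, mul_one]
    _ ≤ x ⬝ᵥ G.adjMatrix ℝ *ᵥ x := dotProduct_le_dotProduct_of_nonneg_left hx.smul_le hx.nonneg

theorem IsSubeigenvector.le_sqrt_add [DecidableEq V] (hx : IsSubeigenvector G ρ x)
    (hx1 : x ⬝ᵥ x = 1) (hρ : 0 < ρ) (hUW : Disjoint U W) (hU : ∀ a ∈ U, ∀ b ∈ U, ¬G.Adj a b)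
    (hW : ∀ a ∈ W, ∀ b ∈ W, ¬G.Adj a b) (hd : ∀ v ∉ U ∪ W, G.degree v ≤ d) :
    ρ ≤ √(#U * #W) + 2 * (#(U ∪ W)ᶜ * (d / ρ)) := by
  have hUW' : ∑ u ∈ U ∪ W, ∑ v ∈ U ∪ W, G.adjMatrix ℝ u v * (x u * x v) =
      2 * ∑ u ∈ U, ∑ v ∈ W, G.adjMatrix ℝ u v * (x u * x v) := by
    have hswap : ∑ u ∈ W, ∑ v ∈ U, G.adjMatrix ℝ u v * (x u * x v) =
        ∑ u ∈ U, ∑ v ∈ W, G.adjMatrix ℝ u v * (x u * x v) := by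
      rw [Finset.sum_comm]
      simp only [(isSymm_adjMatrix G).apply, mul_comm]
    simp only [Finset.sum_union hUW, Finset.sum_add_distrib, hswap,
      sum_adjMatrix_mul_eq_zero_of_not_adj hU, sum_adjMatrix_mul_eq_zero_of_not_adj hW]
    ring
  have hcompl : ∑ u ∈ (U ∪ W)ᶜ, x u * (G.adjMatrix ℝ *ᵥ x) u ≤ #(U ∪ W)ᶜ * (d / ρ) := by
    rw [← nsmul_eq_mul]
    refine Finset.sum_le_card_nsmul _ _ _ fun v hv ↦ (hx.mul_mulVec_apply_le hρ hx1.le v).trans ?_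
    gcongr
    exact hd v (Finset.mem_compl.1 hv)
  have hmain := (hx.le_dotProduct hx1).trans
    (dotProduct_adjMatrix_mulVec_le_sum_add (fun u v ↦ mul_nonneg (hx.nonneg u) (hx.nonneg v))
      (U ∪ W))
  rw [hUW'] at hmain
  linarith [two_mul_sum_adjMatrix_mul_le_sqrt (G := G) hx1.le hUW]

theorem half_sub_quarter_le_sqrt {n : ℕ} (hn : 4 ≤ n) :
    (n / 2 - 1 / 4 : ℝ) ≤ √(n ^ 2 / 4 : ℕ) := by
  refine Real.le_sqrt_of_sq_le ?_
  have hfloor : (n : ℝ) ^ 2 ≤ 4 * (n ^ 2 / 4 : ℕ) + 3 := by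
    exact_mod_cast (by omega : n ^ 2 ≤ 4 * (n ^ 2 / 4) + 3)
  have hnR : (4 : ℝ) ≤ n := mod_cast hn
  nlinarith

theorem IsSubeigenvector.exists_lt_degree (hx : IsSubeigenvector G ρ x) (hx1 : x ⬝ᵥ x = 1)
    (hn : 10 ≤ Fintype.card V) (hρ : √(Fintype.card V ^ 2 / 4 : ℕ) < ρ) (hUW : Disjoint U W)
    (hU : ∀ a ∈ U, ∀ b ∈ U, ¬G.Adj a b) (hW : ∀ a ∈ W, ∀ b ∈ W, ¬G.Adj a b) :
    ∃ v, v ∉ U ∧ v ∉ W ∧ Fintype.card V / 40 < (G.degree v : ℝ) := by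
  classical
  by_contra! hd
  have hρ0 : 0 < ρ := (Real.sqrt_nonneg _).trans_lt hρ
  have hρn := (half_sub_quarter_le_sqrt (by omega : 4 ≤ Fintype.card V)).trans_lt hρ
  have hle := hx.le_sqrt_add hx1 hρ0 hUW hU hW (d := Fintype.card V / 40) fun v hv ↦ by
    rw [Finset.mem_union, not_or] at hv
    exact hd v hv.1 hv.2
  have hcard : #U + #W + #(U ∪ W)ᶜ = Fintype.card V := by
    rw [← Finset.card_union_of_disjoint hUW, Finset.card_add_card_compl]
  rcases Nat.eq_zero_or_pos #(U ∪ W)ᶜ with hz | hz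
  · have hprod : (#U * #W : ℝ) ≤ (Fintype.card V ^ 2 / 4 : ℕ) :=
      mod_cast mul_le_sq_div_four_of_add_le (by omega)
    rw [hz, Nat.cast_zero, zero_mul, mul_zero, add_zero] at hle
    exact (hle.trans (Real.sqrt_le_sqrt hprod)).not_gt hρ
  · have hcardR : (#U + #W + #(U ∪ W)ᶜ : ℝ) = Fintype.card V := mod_cast hcard
    have hamgm : √(#U * #W) ≤ (#U + #W : ℝ) / 2 := by
      rw [Real.sqrt_le_left (by positivity)]
      nlinarith [sq_nonneg (#U - #W : ℝ)]
    have hnR : (10 : ℝ) ≤ Fintype.card V := mod_cast hn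
    have hratio : (Fintype.card V / 40 / ρ : ℝ) ≤ 1 / 16 := by
      rw [div_le_iff₀ hρ0]
      linarith
    have hzR : (1 : ℝ) ≤ #(U ∪ W)ᶜ := mod_cast hz
    nlinarith

end NearlyBipartite

section NegativeEigenvalue

open scoped Finset Matrix

variable {V : Type*} {G : SimpleGraph V} [DecidableRel G.Adj] {U W : Finset V} {d : ℝ} {M : ℕ}

theorem exists_subset_card_le_degreeIn_add (hd : 0 < d)
    (h : #U * #W - d ^ 2 ≤ #(G.interedges U W)) :
    ∃ U₀ ⊆ U, #U ≤ #U₀ + d ∧ ∀ u ∈ U₀, #W ≤ degreeIn G W u + d := by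
  classical
  set B : Finset V := {u ∈ U | ¬(#W : ℝ) ≤ degreeIn G W u + d}
  refine ⟨{u ∈ U | (#W : ℝ) ≤ degreeIn G W u + d}, Finset.filter_subset _ _, ?_,
    fun u hu ↦ (Finset.mem_filter.1 hu).2⟩
  have hmissing : #B * d ≤ #U * #W - #(G.interedges U W) := by
    calc #B * d = ∑ _ ∈ B, d := by rw [Finset.sum_const, nsmul_eq_mul]
      _ ≤ ∑ u ∈ B, (#W - degreeIn G W u : ℝ) := Finset.sum_le_sum fun u hu ↦ by
          linarith [(Finset.mem_filter.1 hu).2]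
      _ ≤ ∑ u ∈ U, (#W - degreeIn G W u : ℝ) :=
          Finset.sum_le_sum_of_subset_of_nonneg (Finset.filter_subset _ _) fun u _ _ ↦
            sub_nonneg.2 (mod_cast degreeIn_le_card G W u)
      _ = #U * #W - #(G.interedges U W) := by
          rw [Finset.sum_sub_distrib, Finset.sum_const, nsmul_eq_mul,
            card_interedges_eq_sum_degreeIn, Nat.cast_sum]
  have hB : #B ≤ d := le_of_mul_le_mul_right (by linarith) hd
  have hsplit : (#{u ∈ U | (#W : ℝ) ≤ degreeIn G W u + d} + #B : ℝ) = #U :=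
    mod_cast Finset.card_filter_add_card_filter_not (s := U) fun u ↦
      (#W : ℝ) ≤ degreeIn G W u + d
  linarith

theorem card_add_degreeIn_le {W₀ : Finset V} (h : W₀ ⊆ W) (v : V) :
    #W₀ + degreeIn G W v ≤ #W + degreeIn G W₀ v := by
  classical
  have hsdiff := degreeIn_le_card G (W \ W₀) v
  have hcard := Finset.card_sdiff_add_card_eq_card h
  have hdegree := degreeIn_sdiff_add_degreeIn G h v
  omega

theorem isLinked_of_card_le_degreeIn_add (hU : M < #U) (hW : M + 2 * d < #W)
    (h : ∀ u ∈ U, #W ≤ degreeIn G W u + d) : IsLinked G U M where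
  lt_card := hU
  exists_adj v hv w hw F hF := by
    have hlt : (#W + #F : ℝ) < degreeIn G W v + degreeIn G W w := by
      have hF' : (#F : ℝ) ≤ M := mod_cast hF
      linarith [h v hv, h w hw]
    obtain ⟨u, -, hu⟩ := exists_common_neighbor_of_card_lt (mod_cast hlt)
    exact ⟨u, hu⟩

theorem card_add_card_add_degree_le [Fintype V] (hUW : Disjoint U W) (v : V) :
    #U + #W + G.degree v ≤ Fintype.card V + (degreeIn G U v + degreeIn G W v) := by
  classical
  have hle := card_add_degreeIn_le (G := G) (Finset.subset_univ (U ∪ W)) v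
  have hunion : degreeIn G (U ∪ W) v ≤ degreeIn G U v + degreeIn G W v := by
    unfold degreeIn
    rw [Finset.filter_union]
    exact Finset.card_union_le _ _
  have huniv : degreeIn G Finset.univ v = G.degree v := by
    rw [← card_neighborFinset_eq_degree, neighborFinset_eq_filter, degreeIn]
  rw [Finset.card_union_of_disjoint hUW, Finset.card_univ] at hle
  omega

theorem half_sub_le_of_sq_div_four_sub_le_mul {a b : ℝ} (hd : 0 ≤ d)
    (h : (a + b) ^ 2 / 4 - d ^ 2 ≤ a * b) : (a + b) / 2 - d ≤ a ∧ (a + b) / 2 - d ≤ b := by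
  have habs := abs_le_of_sq_le_sq' (by nlinarith : (a - b) ^ 2 ≤ (2 * d) ^ 2) (by positivity)
  constructor <;> linarith

theorem exists_isLinked_isLinked [Fintype V] [DecidableEq V] (hd : 0 < d)
    (hU : (Fintype.card V : ℝ) ^ 2 / 4 - d ^ 2 ≤ #(G.interedges U Uᶜ))
    (hM : M + 4 * d < Fintype.card V / 2) :
    ∃ U₀ W₀, IsLinked G U₀ M ∧ IsLinked G W₀ M ∧
      ∀ v, G.degree v ≤ degreeIn G U₀ v + degreeIn G W₀ v + 2 * d := by
  have hcard : (#U + #Uᶜ : ℝ) = Fintype.card V := mod_cast Finset.card_add_card_compl U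
  have hle : (#(G.interedges U Uᶜ) : ℝ) ≤ #U * #Uᶜ := mod_cast card_interedges_le_mul G U Uᶜ
  rw [← hcard] at hU hM
  obtain ⟨hUcard, hWcard⟩ := half_sub_le_of_sq_div_four_sub_le_mul hd.le (hU.trans hle)
  have hmissing : (#U * #Uᶜ - d ^ 2 : ℝ) ≤ #(G.interedges U Uᶜ) := by
    nlinarith [sq_nonneg (#U - #Uᶜ : ℝ)]
  obtain ⟨U₀, hU₀, hU₀card, hU₀deg⟩ := exists_subset_card_le_degreeIn_add hd hmissing
  rw [card_interedges_swap, mul_comm] at hmissing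
  obtain ⟨W₀, hW₀, hW₀card, hW₀deg⟩ := exists_subset_card_le_degreeIn_add hd hmissing
  have hU₀W₀ : ∀ u ∈ U₀, #W₀ ≤ degreeIn G W₀ u + d := fun u hu ↦ by
    have h : (#W₀ + degreeIn G Uᶜ u : ℝ) ≤ #Uᶜ + degreeIn G W₀ u :=
      mod_cast card_add_degreeIn_le hW₀ u
    linarith [hU₀deg u hu]
  have hW₀U₀ : ∀ w ∈ W₀, #U₀ ≤ degreeIn G U₀ w + d := fun w hw ↦ by
    have h : (#U₀ + degreeIn G U w : ℝ) ≤ #U + degreeIn G U₀ w :=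
      mod_cast card_add_degreeIn_le hU₀ w
    linarith [hW₀deg w hw]
  refine ⟨U₀, W₀, isLinked_of_card_le_degreeIn_add ?_ ?_ hU₀W₀,
    isLinked_of_card_le_degreeIn_add ?_ ?_ hW₀U₀, fun v ↦ ?_⟩
  · exact_mod_cast (by linarith : (M : ℝ) < #U₀)
  · linarith
  · exact_mod_cast (by linarith : (M : ℝ) < #W₀)
  · linarith
  · have hdisj : Disjoint U₀ W₀ := disjoint_compl_right.mono hU₀ hW₀
    have h : (#U₀ + #W₀ + G.degree v : ℝ) ≤
        Fintype.card V + (degreeIn G U₀ v + degreeIn G W₀ v) :=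
      mod_cast card_add_card_add_degree_le hdisj v
    linarith

theorem IsSubeigenvector.hasCycleLen_odd_of_isLinked {V : Type} [Fintype V] {G : SimpleGraph V}
    [DecidableRel G.Adj] {x : V → ℝ} {ρ : ℝ} {U W : Finset V} {j : ℕ}
    (hx : IsSubeigenvector G ρ x) (hx1 : x ⬝ᵥ x = 1) (hn : 10 ≤ Fintype.card V)
    (hρ : √(Fintype.card V ^ 2 / 4 : ℕ) < ρ) (hU : IsLinked G U M) (hW : IsLinked G W M)
    (hdeg : ∀ v, (G.degree v : ℝ) ≤ degreeIn G U v + degreeIn G W v + (Fintype.card V / 40 - 4))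
    (hM : 2 * j + 6 ≤ M) : HasCycleLen G (2 * j + 5) := by
  by_contra hcycle
  obtain ⟨v, hvU, hvW, hv⟩ := hx.exists_lt_degree hx1 hn hρ
    (U := {v | 3 ≤ degreeIn G W v}) (W := {v | ¬3 ≤ degreeIn G W v ∧ 3 ≤ degreeIn G U v})
    (Finset.disjoint_filter.2 fun v _ h h' ↦ h'.1 h)
    (fun a ha b hb hab ↦ hcycle (hW.hasCycleLen_odd hM hab (Finset.mem_filter.1 ha).2
      (Finset.mem_filter.1 hb).2))
    (fun a ha b hb hab ↦ hcycle (hU.hasCycleLen_odd hM hab (Finset.mem_filter.1 ha).2.2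
      (Finset.mem_filter.1 hb).2.2))
  simp only [Finset.mem_filter_univ, not_and, not_le] at hvU hvW
  have hsum : (degreeIn G U v + degreeIn G W v : ℝ) ≤ 4 := by
    have := hvW hvU
    exact_mod_cast (by omega : degreeIn G U v + degreeIn G W v ≤ 4)
  linarith [hdeg v]

theorem IsSubeigenvector.hasCycleLen_of_eigenvalue_le_neg {V : Type} [Fintype V]
    {G : SimpleGraph V} [DecidableRel G.Adj] {x f : V → ℝ} {ρ μ ν : ℝ} {l : ℕ}
    (hx : IsSubeigenvector G ρ x) (hx1 : x ⬝ᵥ x = 1) (hρ : √(Fintype.card V ^ 2 / 4 : ℕ) < ρ)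
    (hf : G.adjMatrix ℝ *ᵥ f = μ • f) (hf0 : f ≠ 0) (hν : 0 < ν) (hμ : μ ≤ -ν)
    (hνn : (Fintype.card V : ℝ) ^ 2 / 4 - (Fintype.card V / 100) ^ 2 ≤ ν ^ 2)
    (hn : 800 ≤ Fintype.card V) (hl3 : 3 ≤ l) (hl : 4 * l ≤ Fintype.card V) :
    HasCycleLen G l := by
  classical
  have hnR : (800 : ℝ) ≤ Fintype.card V := mod_cast hn
  have hlR : (4 * l : ℝ) ≤ Fintype.card V := mod_cast hl
  obtain ⟨U, hU⟩ := exists_sq_le_card_interedges_compl hf hf0 hν hμ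
  obtain ⟨U₀, W₀, hU₀, hW₀, hdeg⟩ := exists_isLinked_isLinked (M := l + 1) (by positivity)
    (hνn.trans hU) (by push_cast; linarith)
  rcases Nat.even_or_odd' l with ⟨j, rfl | rfl⟩
  · obtain ⟨j, rfl⟩ := Nat.exists_eq_add_of_le' (by omega : 2 ≤ j)
    exact hU₀.hasCycleLen_even (by omega)
  · obtain rfl | hj : j = 1 ∨ 2 ≤ j := by omega
    · exact hx.hasCycleLen_three hρ
    obtain ⟨j, rfl⟩ := Nat.exists_eq_add_of_le' hj
    exact hx.hasCycleLen_odd_of_isLinked hx1 (by omega) hρ hU₀ hW₀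
      (fun v ↦ (hdeg v).trans (by linarith)) (by omega)

end NegativeEigenvalue

section ManyWalks

open scoped Finset Matrix

variable {V : Type*} [Fintype V] [DecidableEq V] {G : SimpleGraph V} [DecidableRel G.Adj]

theorem exists_adj_lt_adjMatrix_pow_apply {k : ℕ} {u v : V} {F : Finset V} {c : ℝ} (hc : 0 ≤ c)
    (h : #F * (Fintype.card V : ℝ) ^ k + Fintype.card V * c < (G.adjMatrix ℝ ^ (k + 2)) u v) :
    ∃ a ∉ F, G.Adj u a ∧ c < (G.adjMatrix ℝ ^ (k + 1)) a v := by
  by_contra! hle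
  refine h.not_ge ?_
  rw [pow_succ', adjMatrix_mul_apply, ← Finset.sum_filter_add_sum_filter_not _ (· ∈ F)]
  refine add_le_add ?_ ?_
  · refine (Finset.sum_le_card_nsmul _ _ _ fun a _ ↦ adjMatrix_pow_succ_apply_le G k a v).trans ?_
    rw [nsmul_eq_mul]
    gcongr
    exact fun a ha ↦ (Finset.mem_filter.1 ha).2
  · refine (Finset.sum_le_card_nsmul _ _ c fun a ha ↦ ?_).trans ?_
    · rw [Finset.mem_filter, mem_neighborFinset] at ha
      exact hle a ha.2 ha.1
    · rw [nsmul_eq_mul]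
      gcongr
      exact Finset.card_le_univ _

theorem exists_isPath_of_lt_adjMatrix_pow_apply {k M : ℕ} {F : Finset V} {u v : V} (huv : u ≠ v)
    (hu : u ∉ F) (hv : v ∉ F) (hM : #F + k + 1 ≤ M)
    (h : k * M * (Fintype.card V : ℝ) ^ k < (G.adjMatrix ℝ ^ (k + 1)) u v * Fintype.card V) :
    ∃ p : G.Walk u v, p.IsPath ∧ p.length = k + 1 ∧ ∀ x ∈ p.support, x ∉ F := by
  induction k generalizing F u with
  | zero =>
    have hadj : G.Adj u v := by
      by_contra hnadj
      simp [adjMatrix_apply, hnadj] at h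
    exact ⟨hadj.toWalk, Walk.IsPath.of_adj hadj, rfl, by simp [hu, hv]⟩
  | succ k ih =>
    have hn : (0 : ℝ) < Fintype.card V := mod_cast Fintype.card_pos_iff.2 ⟨u⟩
    set c : ℝ := k * M * (Fintype.card V : ℝ) ^ k / Fintype.card V
    have hc : Fintype.card V * c = k * M * (Fintype.card V : ℝ) ^ k := mul_div_cancel₀ _ hn.ne'
    have hcard : (#(insert v F) : ℝ) ≤ M := by
      exact_mod_cast (Finset.card_insert_le v F).trans (by omega)
    obtain ⟨a, ha, hua, hlt⟩ : ∃ a ∉ insert v F, G.Adj u a ∧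
        c < (G.adjMatrix ℝ ^ (k + 1)) a v := by
      refine exists_adj_lt_adjMatrix_pow_apply (by positivity) (lt_of_mul_lt_mul_right ?_ hn.le)
      calc (#(insert v F) * (Fintype.card V : ℝ) ^ k + Fintype.card V * c) * Fintype.card V
          ≤ (M * (Fintype.card V : ℝ) ^ k + Fintype.card V * c) * Fintype.card V := by gcongr
        _ = (k + 1 : ℕ) * M * (Fintype.card V : ℝ) ^ (k + 1) := by
            rw [hc]
            push_cast
            ring
        _ < (G.adjMatrix ℝ ^ (k + 2)) u v * Fintype.card V := h
    rw [Finset.mem_insert, not_or] at ha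
    obtain ⟨p, hp, hlen, hpF⟩ := ih (F := insert u F) ha.1 (by simp [ha.2, hua.ne'])
      (by simp [hv, huv.symm]) (by grind [Finset.card_insert_le]) ((div_lt_iff₀ hn).1 hlt)
    refine ⟨.cons hua p, hp.cons fun hup ↦ hpF u hup (Finset.mem_insert_self u F), by simp [hlen],
      fun x hx ↦ ?_⟩
    rcases List.mem_cons.1 hx with rfl | hx
    · exact hu
    · exact fun hxF ↦ hpF x hx (Finset.mem_insert_of_mem hxF)

theorem adjMatrix_pow_apply_mul_card_le_of_not_isPath {k : ℕ} {u v : V} (huv : u ≠ v)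
    (h : ∀ p : G.Walk u v, p.IsPath → p.length ≠ k + 1) :
    (G.adjMatrix ℝ ^ (k + 1)) u v * Fintype.card V ≤
      k * (k + 1) * (Fintype.card V : ℝ) ^ k := by
  by_contra! hlt
  obtain ⟨p, hp, hlen, -⟩ := exists_isPath_of_lt_adjMatrix_pow_apply (k := k) (M := k + 1) huv
    (Finset.notMem_empty u) (Finset.notMem_empty v) (by simp) (by exact_mod_cast hlt)
  exact h p hp hlen

theorem trace_adjMatrix_pow_le_of_not_hasCycleLen {V : Type} [Fintype V] [DecidableEq V]
    {G : SimpleGraph V} [DecidableRel G.Adj] {k : ℕ} (hk : 1 ≤ k)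
    (hcycle : ¬HasCycleLen G (k + 2)) :
    (G.adjMatrix ℝ ^ (k + 2)).trace ≤ k * (k + 1) * (Fintype.card V : ℝ) ^ (k + 1) := by
  have hdiag : ∀ u, (G.adjMatrix ℝ ^ (k + 2)) u u ≤ k * (k + 1) * (Fintype.card V : ℝ) ^ k := by
    intro u
    have hn : (0 : ℝ) < Fintype.card V := mod_cast Fintype.card_pos_iff.2 ⟨u⟩
    refine le_of_mul_le_mul_right ?_ hn
    rw [pow_succ', adjMatrix_mul_apply, Finset.sum_mul]
    refine (Finset.sum_le_card_nsmul _ _ (k * (k + 1) * (Fintype.card V : ℝ) ^ k)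
      fun v hv ↦ ?_).trans ?_
    · rw [mem_neighborFinset] at hv
      refine adjMatrix_pow_apply_mul_card_le_of_not_isPath hv.ne' fun p hp hlen ↦ hcycle ?_
      have := hasCycleLen_of_isPath hp (by omega) hv
      rwa [hlen] at this
    · rw [nsmul_eq_mul, mul_comm]
      gcongr
      exact Finset.card_le_univ _
  calc (G.adjMatrix ℝ ^ (k + 2)).trace
      ≤ Fintype.card V • (k * (k + 1) * (Fintype.card V : ℝ) ^ k) :=
        Finset.sum_le_card_nsmul _ _ _ fun u _ ↦ hdiag u
    _ = k * (k + 1) * (Fintype.card V : ℝ) ^ (k + 1) := by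
        rw [nsmul_eq_mul]
        ring

end ManyWalks

section ShortCycles

open scoped Finset Matrix

/-- Every eigenvalue of `G`, other than the one of index `i₀`, is in absolute value at most
`1 - γ` times that one. -/
def HasSpectralGap {V : Type*} [Fintype V] [DecidableEq V] (G : SimpleGraph V) [DecidableRel G.Adj]
    (i₀ : V) (γ : ℝ) : Prop :=
  ∀ i ≠ i₀, |(isHermitian_adjMatrix G).eigenvalues i| ≤
    (1 - γ) * (isHermitian_adjMatrix G).eigenvalues i₀

variable {V : Type*} [Fintype V] [DecidableEq V] {G : SimpleGraph V} [DecidableRel G.Adj]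

theorem trace_adjMatrix_sq_le {ρ : ℝ} (hρ : ∀ i, (isHermitian_adjMatrix G).eigenvalues i ≤ ρ) :
    (G.adjMatrix ℝ ^ 2).trace ≤ ρ * Fintype.card V := by
  have h := dotProduct_mulVec_le_mul_dotProduct (isHermitian_adjMatrix G) hρ fun _ ↦ 1
  have htrace : (G.adjMatrix ℝ ^ 2).trace = (fun _ ↦ (1 : ℝ)) ⬝ᵥ G.adjMatrix ℝ *ᵥ fun _ ↦ 1 := by
    simp only [Matrix.trace, Matrix.diag, adjMatrix_sq_apply_self, dotProduct, one_mul,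
      adjMatrix_mulVec_apply, Finset.sum_const, nsmul_eq_mul, mul_one,
      card_neighborFinset_eq_degree]
  rw [htrace]
  refine h.trans_eq ?_
  simp only [dotProduct, mul_one, Finset.sum_const, Finset.card_univ, nsmul_eq_mul]

theorem HasSpectralGap.half_mul_pow_le_trace {i₀ : V} {γ ρ : ℝ} {k : ℕ}
    (hgap : HasSpectralGap G i₀ γ) (hρ : (isHermitian_adjMatrix G).eigenvalues i₀ = ρ)
    (hγ0 : 0 ≤ γ) (hγ1 : γ ≤ 1) (hρn : Fintype.card V ≤ 2 * ρ + 1 / 2) (hγρ : 1 ≤ γ * ρ)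
    (hk : 1 ≤ k) : γ / 2 * ρ ^ (k + 2) ≤ (G.adjMatrix ℝ ^ (k + 2)).trace := by
  have hρ0 : 0 ≤ ρ := by nlinarith
  have hmax : ∀ i, (isHermitian_adjMatrix G).eigenvalues i ≤ ρ := fun i ↦ by
    rcases eq_or_ne i i₀ with rfl | hi
    · exact hρ.le
    · exact (le_abs_self _).trans ((hgap i hi).trans (by rw [hρ]; nlinarith))
  have hlower := eigenvalues_pow_sub_le_trace_pow (isHermitian_adjMatrix G) hgap k
  rw [hρ] at hlower
  have hpow : (1 - γ) ^ k ≤ 1 - γ := pow_le_of_le_one (by linarith) (by linarith) (by omega)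
  have hrest : (G.adjMatrix ℝ ^ 2).trace - ρ ^ 2 ≤ ρ ^ 2 + ρ / 2 := by
    nlinarith [trace_adjMatrix_sq_le hmax]
  have herror : ((1 - γ) * ρ) ^ k * ((G.adjMatrix ℝ ^ 2).trace - ρ ^ 2) ≤
      (1 - γ / 2) * ρ ^ (k + 2) := by
    calc ((1 - γ) * ρ) ^ k * ((G.adjMatrix ℝ ^ 2).trace - ρ ^ 2)
        ≤ ((1 - γ) * ρ) ^ k * (ρ ^ 2 + ρ / 2) := by
          have : 0 ≤ 1 - γ := by linarith
          gcongr
      _ = (1 - γ) ^ k * (ρ ^ k * (ρ ^ 2 + ρ / 2)) := by rw [mul_pow, mul_assoc]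
      _ ≤ (1 - γ) * (ρ ^ k * (ρ ^ 2 + ρ / 2)) := by gcongr
      _ = ρ ^ k * ((1 - γ) * (ρ ^ 2 + ρ / 2)) := by ring
      _ ≤ ρ ^ k * ((1 - γ / 2) * ρ ^ 2) :=
          mul_le_mul_of_nonneg_left (by nlinarith) (by positivity)
      _ = (1 - γ / 2) * ρ ^ (k + 2) := by ring
  linarith

theorem HasSpectralGap.hasCycleLen_short {V : Type} [Fintype V] [DecidableEq V]
    {G : SimpleGraph V} [DecidableRel G.Adj] {i₀ : V} {γ ρ : ℝ} {k : ℕ}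
    (hgap : HasSpectralGap G i₀ γ) (hρ : (isHermitian_adjMatrix G).eigenvalues i₀ = ρ)
    (hγ0 : 0 ≤ γ) (hγ1 : γ ≤ 1) (hρn : Fintype.card V ≤ 2 * ρ + 1 / 2) (hγρ : 1 ≤ γ * ρ)
    (hk : 1 ≤ k) (hn : 2 * (k * (k + 1)) * 3 ^ (k + 2) < γ * Fintype.card V) :
    HasCycleLen G (k + 2) := by
  by_contra hcycle
  have hn0 : (0 : ℝ) < Fintype.card V := mod_cast Fintype.card_pos_iff.2 ⟨i₀⟩
  have hρ1 : 1 ≤ ρ := by nlinarith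
  have hle := (hgap.half_mul_pow_le_trace hρ hγ0 hγ1 hρn hγρ hk).trans
    (trace_adjMatrix_pow_le_of_not_hasCycleLen hk hcycle)
  have hpow : (Fintype.card V : ℝ) ^ (k + 2) ≤ 3 ^ (k + 2) * ρ ^ (k + 2) := by
    rw [← mul_pow]
    gcongr
    linarith
  have hmul : γ * Fintype.card V * (Fintype.card V : ℝ) ^ (k + 1) ≤
      2 * (k * (k + 1)) * 3 ^ (k + 2) * (Fintype.card V : ℝ) ^ (k + 1) := by
    calc γ * Fintype.card V * (Fintype.card V : ℝ) ^ (k + 1)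
        = γ * (Fintype.card V : ℝ) ^ (k + 2) := by ring
      _ ≤ γ * (3 ^ (k + 2) * ρ ^ (k + 2)) := by gcongr
      _ = 2 * 3 ^ (k + 2) * (γ / 2 * ρ ^ (k + 2)) := by ring
      _ ≤ 2 * 3 ^ (k + 2) * (k * (k + 1) * (Fintype.card V : ℝ) ^ (k + 1)) := by gcongr
      _ = 2 * (k * (k + 1)) * 3 ^ (k + 2) * (Fintype.card V : ℝ) ^ (k + 1) := by ring
  exact (le_of_mul_le_mul_right hmul (by positivity)).not_gt hn

end ShortCycles

section HittingSet

open scoped Finset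

variable {X Y : Type*} [Fintype Y]

theorem exists_mul_card_le_card_filter_mem [Nonempty Y] [DecidableEq Y] {B : Finset X}
    {S : X → Finset Y} {c : ℝ} (hS : ∀ x ∈ B, c * Fintype.card Y ≤ #(S x)) :
    ∃ y, c * #B ≤ #{x ∈ B | y ∈ S x} := by
  have hcount : ∑ x ∈ B, #(S x) = ∑ y, #{x ∈ B | y ∈ S x} := by
    simpa [Finset.bipartiteAbove, Finset.bipartiteBelow] using
      Finset.sum_card_bipartiteAbove_eq_sum_card_bipartiteBelow (s := B) (t := Finset.univ)
        fun x y ↦ y ∈ S x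
  have hle : ∑ _y : Y, c * #B ≤ ∑ y, (#{x ∈ B | y ∈ S x} : ℝ) := by
    calc ∑ _y : Y, c * #B = #B • (c * Fintype.card Y) := by
          rw [Finset.sum_const, Finset.card_univ, nsmul_eq_mul, nsmul_eq_mul]
          ring
      _ ≤ ∑ x ∈ B, (#(S x) : ℝ) := Finset.card_nsmul_le_sum _ _ _ hS
      _ = ∑ y, (#{x ∈ B | y ∈ S x} : ℝ) := mod_cast hcount
  obtain ⟨y, -, hy⟩ := Finset.exists_le_of_sum_le Finset.univ_nonempty hle
  exact ⟨y, hy⟩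

theorem exists_card_le_forall_mem_exists_mem [Nonempty Y] {j : ℕ} {B : Finset X}
    {S : X → Finset Y} {c : ℝ} (hc : c ≤ 1) (hS : ∀ x ∈ B, c * Fintype.card Y ≤ #(S x))
    (hj : (1 - c) ^ j * #B < 1) : ∃ T : Finset Y, #T ≤ j ∧ ∀ x ∈ B, ∃ y ∈ T, y ∈ S x := by
  classical
  induction j generalizing B with
  | zero =>
    have hB : B = ∅ := by
      rw [pow_zero, one_mul] at hj
      exact Finset.card_eq_zero.1 (by exact_mod_cast Nat.lt_one_iff.1 (by exact_mod_cast hj))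
    exact ⟨∅, by simp, by simp [hB]⟩
  | succ j ih =>
    obtain ⟨y, hy⟩ := exists_mul_card_le_card_filter_mem hS
    have hrest : (#{x ∈ B | y ∉ S x} : ℝ) ≤ (1 - c) * #B := by
      have h : (#{x ∈ B | y ∈ S x} + #{x ∈ B | y ∉ S x} : ℝ) = #B :=
        mod_cast Finset.card_filter_add_card_filter_not (s := B) (y ∈ S ·)
      linarith
    obtain ⟨T, hT, hTB⟩ := ih (B := {x ∈ B | y ∉ S x})
      (fun x hx ↦ hS x (Finset.mem_filter.1 hx).1) <| by
        refine lt_of_le_of_lt ?_ hj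
        rw [pow_succ, mul_assoc]
        exact mul_le_mul_of_nonneg_left hrest (pow_nonneg (by linarith) j)
    refine ⟨insert y T, (Finset.card_insert_le y T).trans (by omega), fun x hx ↦ ?_⟩
    by_cases hyx : y ∈ S x
    · exact ⟨y, Finset.mem_insert_self y T, hyx⟩
    · obtain ⟨z, hz, hzx⟩ := hTB x (Finset.mem_filter.2 ⟨hx, hyx⟩)
      exact ⟨z, Finset.mem_insert_of_mem hz, hzx⟩

end HittingSet

section Connectors

open scoped Finset

variable {V : Type*} [Fintype V] {G : SimpleGraph V} [DecidableRel G.Adj]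

open scoped Classical in
/-- The pairs of a neighbour of `u` and a neighbour of `v` that are joined by a path of length
`r + 1`. -/
noncomputable def connectors (G : SimpleGraph V) [DecidableRel G.Adj] (r : ℕ) (u v : V) :
    Finset (V × V) :=
  {p ∈ G.neighborFinset u ×ˢ G.neighborFinset v |
    ∃ q : G.Walk p.1 p.2, q.IsPath ∧ q.length = r + 1}

theorem adjMatrix_pow_apply_eq_sum_neighborFinset [DecidableEq V] (r : ℕ) (u v : V) :
    (G.adjMatrix ℝ ^ (r + 3)) u v =
      ∑ p ∈ G.neighborFinset u ×ˢ G.neighborFinset v, (G.adjMatrix ℝ ^ (r + 1)) p.1 p.2 := by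
  rw [pow_succ', adjMatrix_mul_apply, Finset.sum_product]
  refine Finset.sum_congr rfl fun a _ ↦ ?_
  rw [pow_succ, mul_adjMatrix_apply]

theorem mem_connectors {r : ℕ} {u v : V} {p : V × V} :
    p ∈ connectors G r u v ↔ (G.Adj u p.1 ∧ G.Adj v p.2) ∧
      ∃ q : G.Walk p.1 p.2, q.IsPath ∧ q.length = r + 1 := by
  simp only [connectors, Finset.mem_filter, Finset.mem_product, mem_neighborFinset]

theorem adjMatrix_pow_apply_mul_card_le_of_notMem_connectors [DecidableEq V] {r : ℕ} {u v : V}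
    {p : V × V} (hp : p ∈ G.neighborFinset u ×ˢ G.neighborFinset v)
    (hpC : p ∉ connectors G r u v) (hne : p.1 ≠ p.2) :
    (G.adjMatrix ℝ ^ (r + 1)) p.1 p.2 * Fintype.card V ≤
      r * (r + 1) * (Fintype.card V : ℝ) ^ r := by
  refine adjMatrix_pow_apply_mul_card_le_of_not_isPath hne fun q hq hlen ↦ hpC ?_
  rw [Finset.mem_product, mem_neighborFinset, mem_neighborFinset] at hp
  exact mem_connectors.2 ⟨hp, q, hq, hlen⟩

theorem adjMatrix_pow_apply_le_card_connectors [DecidableEq V] (r : ℕ) (u v : V) :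
    (G.adjMatrix ℝ ^ (r + 3)) u v ≤ #(connectors G r u v) * (Fintype.card V : ℝ) ^ r +
      (r * (r + 1) + 1) * (Fintype.card V : ℝ) ^ (r + 1) := by
  set n : ℝ := (Fintype.card V : ℝ) with hn_def
  have hn : 0 < n := Nat.cast_pos.2 (Fintype.card_pos_iff.2 ⟨u⟩)
  set W := G.neighborFinset u ×ˢ G.neighborFinset v
  set C := connectors G r u v
  set D : Finset (V × V) := Finset.univ.diag
  have hgood : ∑ p ∈ W with p ∈ C ∪ D, (G.adjMatrix ℝ ^ (r + 1)) p.1 p.2 ≤ (#C + n) * n ^ r := by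
    refine (Finset.sum_le_card_nsmul _ _ (n ^ r)
      fun p _ ↦ adjMatrix_pow_succ_apply_le G r p.1 p.2).trans ?_
    rw [nsmul_eq_mul]
    gcongr
    calc (#{p ∈ W | p ∈ C ∪ D} : ℝ) ≤ (#C + #D : ℕ) := by
          refine Nat.cast_le.2 ((Finset.card_le_card fun p hp ↦ ?_).trans
            (Finset.card_union_le C D))
          exact (Finset.mem_filter.1 hp).2
      _ = #C + n := by rw [Finset.diag_card, Nat.cast_add, Finset.card_univ]
  have hrest : ∑ p ∈ W with p ∉ C ∪ D, (G.adjMatrix ℝ ^ (r + 1)) p.1 p.2 ≤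
      n ^ 2 * (r * (r + 1) * n ^ r / n) := by
    refine (Finset.sum_le_card_nsmul _ _ (r * (r + 1) * n ^ r / n) fun p hp ↦ ?_).trans ?_
    · obtain ⟨hpW, hpCD⟩ := Finset.mem_filter.1 hp
      rw [Finset.mem_union, not_or, Finset.mem_diag] at hpCD
      exact (le_div_iff₀ hn).2 <| adjMatrix_pow_apply_mul_card_le_of_notMem_connectors hpW hpCD.1
        fun h ↦ hpCD.2 ⟨Finset.mem_univ _, h⟩
    · rw [nsmul_eq_mul]
      gcongr
      rw [hn_def, sq, ← Nat.cast_mul, ← Fintype.card_prod]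
      exact Nat.cast_le.2 (Finset.card_le_univ _)
  calc (G.adjMatrix ℝ ^ (r + 3)) u v
      ≤ (#C + n) * n ^ r + n ^ 2 * (r * (r + 1) * n ^ r / n) := by
        rw [adjMatrix_pow_apply_eq_sum_neighborFinset,
          ← Finset.sum_filter_add_sum_filter_not _ (· ∈ C ∪ D)]
        exact add_le_add hgood hrest
    _ = #C * n ^ r + (r * (r + 1) + 1) * n ^ (r + 1) := by
        field_simp
        ring

theorem mul_sq_card_le_card_connectors [DecidableEq V] {r : ℕ} {u v : V} {c : ℝ}
    (hpow : 2 * c * (Fintype.card V : ℝ) ^ (r + 2) ≤ (G.adjMatrix ℝ ^ (r + 3)) u v)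
    (hc : r * (r + 1) + 1 ≤ c * Fintype.card V) :
    c * Fintype.card V ^ 2 ≤ #(connectors G r u v) := by
  have hn : (0 : ℝ) < Fintype.card V := Nat.cast_pos.2 (Fintype.card_pos_iff.2 ⟨u⟩)
  refine le_of_mul_le_mul_right ?_ (pow_pos hn r)
  have hmul := mul_le_mul_of_nonneg_right hc (pow_pos hn (r + 1)).le
  have h := hpow.trans (adjMatrix_pow_apply_le_card_connectors r u v)
  calc c * Fintype.card V ^ 2 * (Fintype.card V : ℝ) ^ r
      = 2 * c * (Fintype.card V : ℝ) ^ (r + 2) -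
        c * Fintype.card V * (Fintype.card V : ℝ) ^ (r + 1) := by ring
    _ ≤ #(connectors G r u v) * (Fintype.card V : ℝ) ^ r := by linarith

/-- Any two vertices of `K` have neighbours that are joined by a path of length `r + 1`
inside `F`. -/
def IsConnectingSet (G : SimpleGraph V) (r : ℕ) (K F : Finset V) : Prop :=
  ∀ u ∈ K, ∀ v ∈ K, ∃ a b, G.Adj u a ∧ G.Adj v b ∧
    ∃ q : G.Walk a b, q.IsPath ∧ q.length = r + 1 ∧ ∀ x ∈ q.support, x ∈ F

theorem exists_isConnectingSet {r j : ℕ} {K : Finset V} {c : ℝ} (hc : c ≤ 1)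
    (hK : ∀ u ∈ K, ∀ v ∈ K, c * Fintype.card V ^ 2 ≤ #(connectors G r u v))
    (hj : (1 - c) ^ j * (Fintype.card V : ℝ) ^ 2 < 1) :
    ∃ F, #F ≤ j * (r + 2) ∧ IsConnectingSet G r K F := by
  classical
  rcases isEmpty_or_nonempty V with hV | hV
  · exact ⟨∅, by simp, fun u ↦ isEmptyElim u⟩
  obtain ⟨T, hT, hTK⟩ : ∃ T : Finset (V × V), #T ≤ j ∧
      ∀ x ∈ K ×ˢ K, ∃ p ∈ T, p ∈ connectors G r x.1 x.2 := by
    refine exists_card_le_forall_mem_exists_mem hc (fun x hx ↦ ?_) (lt_of_le_of_lt ?_ hj)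
    · rw [Fintype.card_prod, Nat.cast_mul, ← sq]
      exact hK _ (Finset.mem_product.1 hx).1 _ (Finset.mem_product.1 hx).2
    · refine mul_le_mul_of_nonneg_left ?_ (pow_nonneg (by linarith) j)
      rw [Finset.card_product, Nat.cast_mul, ← sq]
      gcongr
      exact Finset.card_le_univ K
  have hsupport : ∀ p : V × V, ∃ P : Finset V, #P ≤ r + 2 ∧
      ((∃ q : G.Walk p.1 p.2, q.IsPath ∧ q.length = r + 1) →
        ∃ q : G.Walk p.1 p.2, q.IsPath ∧ q.length = r + 1 ∧ ∀ x ∈ q.support, x ∈ P) := by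
    intro p
    by_cases hp : ∃ q : G.Walk p.1 p.2, q.IsPath ∧ q.length = r + 1
    · obtain ⟨q, hq, hlen⟩ := hp
      refine ⟨q.support.toFinset, ?_, fun _ ↦ ⟨q, hq, hlen, fun x ↦ List.mem_toFinset.2⟩⟩
      exact (List.toFinset_card_le _).trans (by rw [Walk.length_support, hlen])
    · exact ⟨∅, by simp, fun h ↦ absurd h hp⟩
  choose P hPcard hP using hsupport
  refine ⟨T.biUnion P, (Finset.card_biUnion_le_card_mul T P _ fun p _ ↦ hPcard p).trans
    (Nat.mul_le_mul_right _ hT), fun u hu v hv ↦ ?_⟩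
  obtain ⟨p, hpT, hp⟩ := hTK (u, v) (Finset.mk_mem_product hu hv)
  obtain ⟨⟨hup, hvp⟩, hpath⟩ := mem_connectors.1 hp
  obtain ⟨q, hq, hlen, hqP⟩ := hP p hpath
  exact ⟨p.1, p.2, hup, hvp, q, hq, hlen,
    fun x hx ↦ Finset.mem_biUnion.2 ⟨p, hpT, hqP x hx⟩⟩

theorem IsConnectingSet.hasCycleLen {V : Type} {G : SimpleGraph V} [DecidableEq V]
    [DecidableRel G.Adj] {r m : ℕ} {K F : Finset V} (hF : IsConnectingSet G r K F)
    (hm : m * #(K \ F) < #(G.interedges (K \ F) (K \ F))) : HasCycleLen G (m + r + 4) := by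
  obtain ⟨u, v, p, hp, hplen, hpK⟩ := exists_isPath_of_mul_card_lt_card_interedges hm
  have hK : ∀ x ∈ p.support, x ∈ K ∧ x ∉ F := fun x hx ↦ Finset.mem_sdiff.1 (hpK x hx)
  obtain ⟨a, b, hua, hvb, q, hq, hqlen, hqF⟩ :=
    hF u (hK u p.start_mem_support).1 v (hK v p.end_mem_support).1
  have hpq : p.support.Disjoint q.reverse.support := fun x hxp hxq ↦
    (hK x hxp).2 (hqF x (by simpa using hxq))
  have hcycle := hasCycleLen_of_isPath (isPath_append_cons hp hq.reverse hvb hpq)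
    (by simp; omega) hua.symm
  convert hcycle using 1
  simp
  omega

end Connectors

section HeavySet

open scoped Finset Matrix

variable {V : Type*} [Fintype V] {f : V → ℝ} {t : ℝ}

/-- The vertices at which the square of `f` is at least `t` divided by the number of vertices. For
a unit vector `f` this is at least the fraction `t` of the average of `f ^ 2`. -/
noncomputable def heavySet (f : V → ℝ) (t : ℝ) : Finset V :=
  {u | t / Fintype.card V ≤ f u ^ 2}

theorem div_card_le_mul_of_mem_heavySet (ht : 0 ≤ t) {u v : V} (huv : 0 ≤ f u * f v)
    (hu : u ∈ heavySet f t) (hv : v ∈ heavySet f t) : t / Fintype.card V ≤ f u * f v := by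
  refine le_of_sq_le_sq ?_ huv
  rw [mul_pow, sq]
  exact mul_le_mul (Finset.mem_filter.1 hu).2 (Finset.mem_filter.1 hv).2 (by positivity)
    (sq_nonneg _)

theorem sum_compl_heavySet_sq_le [DecidableEq V] (ht : 0 ≤ t) :
    ∑ u ∈ (heavySet f t)ᶜ, f u ^ 2 ≤ t := by
  have hlight : ∀ u ∈ (heavySet f t)ᶜ, f u ^ 2 ≤ t / Fintype.card V := fun u hu ↦ by
    rw [heavySet, Finset.mem_compl, Finset.mem_filter_univ, not_le] at hu
    exact hu.le
  calc ∑ u ∈ (heavySet f t)ᶜ, f u ^ 2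
      ≤ #(heavySet f t)ᶜ * (t / Fintype.card V) := by
        rw [← nsmul_eq_mul]
        exact Finset.sum_le_card_nsmul _ _ _ hlight
    _ ≤ Fintype.card V * (t / Fintype.card V) := by
        gcongr
        exact Finset.card_le_univ _
    _ ≤ t := by
        rw [mul_div_left_comm]
        exact mul_le_of_le_one_right ht (div_self_le_one _)

theorem sq_mul_one_sub_le_card_interedges_heavySet {G : SimpleGraph V} [DecidableRel G.Adj]
    {ρ : ℝ} (hf : G.adjMatrix ℝ *ᵥ f = ρ • f) (hf1 : f ⬝ᵥ f = 1) (hf0 : ∀ u v, 0 ≤ f u * f v)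
    (hρ : 0 ≤ ρ) (ht0 : 0 ≤ t) (ht : t ≤ 1 / 2) :
    (ρ * (1 - 2 * t)) ^ 2 ≤ #(G.interedges (heavySet f t) (heavySet f t)) := by
  classical
  set K := heavySet f t
  have hsum : ∑ u, f u ^ 2 = 1 := by
    rw [← hf1, dotProduct]
    simp only [sq]
  have hK : ∑ u ∈ K, f u ^ 2 ≤ 1 := hsum ▸
    Finset.sum_le_sum_of_subset_of_nonneg (Finset.subset_univ K) fun u _ _ ↦ sq_nonneg (f u)
  have hcompl : ∑ u ∈ Kᶜ, f u * (G.adjMatrix ℝ *ᵥ f) u = ρ * ∑ u ∈ Kᶜ, f u ^ 2 := by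
    rw [hf, Finset.mul_sum]
    exact Finset.sum_congr rfl fun u _ ↦ by
      rw [Pi.smul_apply, smul_eq_mul]
      ring
  have hinner := dotProduct_adjMatrix_mulVec_le_sum_add (G := G) hf0 K
  rw [hcompl, hf, dotProduct_smul, hf1, smul_eq_mul, mul_one] at hinner
  have hlow : ρ * (1 - 2 * t) ≤ ∑ u ∈ K, ∑ v ∈ K, G.adjMatrix ℝ u v * (f u * f v) := by
    have := mul_le_mul_of_nonneg_left (sum_compl_heavySet_sq_le (f := f) ht0) hρ
    linarith
  calc (ρ * (1 - 2 * t)) ^ 2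
      ≤ (∑ u ∈ K, ∑ v ∈ K, G.adjMatrix ℝ u v * (f u * f v)) ^ 2 :=
        pow_le_pow_left₀ (mul_nonneg hρ (by linarith)) hlow 2
    _ ≤ #(G.interedges K K) * ((∑ u ∈ K, f u ^ 2) * ∑ v ∈ K, f v ^ 2) :=
        sq_sum_adjMatrix_mul_le G K K f f
    _ ≤ #(G.interedges K K) :=
        mul_le_of_le_one_right (Nat.cast_nonneg _)
          (mul_le_one₀ hK (Finset.sum_nonneg fun u _ ↦ sq_nonneg (f u)) hK)

end HeavySet

section LongCycles

open scoped Finset Matrix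

variable {V : Type*} [Fintype V] [DecidableEq V] {G : SimpleGraph V} [DecidableRel G.Adj]

theorem card_interedges_le_card_interedges_sdiff_add (K F : Finset V) :
    #(G.interedges K K) ≤ #(G.interedges (K \ F) (K \ F)) + 2 * (#F * Fintype.card V) := by
  have hle : ∀ T : Finset V, #(G.interedges (K ∩ F) T) ≤ #F * Fintype.card V := fun T ↦
    (card_interedges_le_mul G _ _).trans
      (Nat.mul_le_mul (Finset.card_le_card Finset.inter_subset_right) (Finset.card_le_univ T))
  have hsplit := card_interedges_sdiff G (Finset.inter_subset_left : K ∩ F ⊆ K)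
  rw [Finset.sdiff_inter_self_left] at hsplit
  linarith [hle (K \ F), hle K]

theorem HasSpectralGap.mul_pow_le_adjMatrix_pow_apply {i₀ u v : V} {γ ρ t : ℝ} {r : ℕ}
    (hgap : HasSpectralGap G i₀ γ) (hρ : (isHermitian_adjMatrix G).eigenvalues i₀ = ρ)
    (hγ1 : γ ≤ 1) (hρn : Fintype.card V / 3 ≤ ρ) (ht : 0 ≤ t) (hr : (1 - γ) ^ (r + 1) ≤ t / 18)
    (huv : t / Fintype.card V ≤ (isHermitian_adjMatrix G).eigenvectorBasis i₀ u *
      (isHermitian_adjMatrix G).eigenvectorBasis i₀ v) :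
    t / (18 * 3 ^ (r + 1)) * (Fintype.card V : ℝ) ^ (r + 2) ≤ (G.adjMatrix ℝ ^ (r + 3)) u v := by
  set n : ℝ := (Fintype.card V : ℝ)
  have hn : 0 < n := Nat.cast_pos.2 (Fintype.card_pos_iff.2 ⟨u⟩)
  have hρ0 : 0 ≤ ρ := by linarith
  have hlower := eigenvalues_pow_mul_sub_le_pow_apply (isHermitian_adjMatrix G) hgap
    (hρ.symm ▸ mul_nonneg (by linarith) hρ0) (r + 1) u v
  rw [hρ, adjMatrix_sq_apply_self, adjMatrix_sq_apply_self] at hlower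
  have hdegree : ∀ w, (G.degree w : ℝ) ≤ n := fun w ↦ Nat.cast_le.2 (G.degree_lt_card_verts w).le
  have hmain : ρ ^ (r + 1) * (t / 9 * n) ≤ ρ ^ (r + 1 + 2) * (t / n) := by
    calc ρ ^ (r + 1) * (t / 9 * n) = ρ ^ (r + 1) * ((n / 3) ^ 2 * (t / n)) := by
          field_simp
          norm_num
      _ ≤ ρ ^ (r + 1) * (ρ ^ 2 * (t / n)) := by gcongr
      _ = ρ ^ (r + 1 + 2) * (t / n) := by rw [pow_add ρ (r + 1) 2, mul_assoc]
  have herror : ((1 - γ) * ρ) ^ (r + 1) * ((G.degree u + G.degree v) / 2) ≤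
      ρ ^ (r + 1) * (t / 18 * n) := by
    calc ((1 - γ) * ρ) ^ (r + 1) * ((G.degree u + G.degree v) / 2)
        ≤ ((1 - γ) * ρ) ^ (r + 1) * n := by
          have : 0 ≤ 1 - γ := by linarith
          gcongr
          linarith [hdegree u, hdegree v]
      _ = (1 - γ) ^ (r + 1) * (ρ ^ (r + 1) * n) := by rw [mul_pow, mul_assoc]
      _ ≤ t / 18 * (ρ ^ (r + 1) * n) := by gcongr
      _ = ρ ^ (r + 1) * (t / 18 * n) := by ring
  calc t / (18 * 3 ^ (r + 1)) * n ^ (r + 2) = (n / 3) ^ (r + 1) * (t / 18 * n) := by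
        rw [div_pow]
        field_simp
        ring
    _ ≤ ρ ^ (r + 1) * (t / 18 * n) := by gcongr
    _ = ρ ^ (r + 1) * (t / 9 * n) - ρ ^ (r + 1) * (t / 18 * n) := by ring
    _ ≤ _ := by linarith [mul_le_mul_of_nonneg_left huv (pow_nonneg hρ0 (r + 1 + 2))]

theorem HasSpectralGap.exists_isConnectingSet_heavySet {i₀ : V} {γ ρ t c : ℝ} {r j : ℕ}
    (hgap : HasSpectralGap G i₀ γ) (hρ : (isHermitian_adjMatrix G).eigenvalues i₀ = ρ)
    (hγ1 : γ ≤ 1) (hρn : Fintype.card V / 3 ≤ ρ)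
    (hsign : ∀ u v, 0 ≤ (isHermitian_adjMatrix G).eigenvectorBasis i₀ u *
      (isHermitian_adjMatrix G).eigenvectorBasis i₀ v)
    (ht : 0 ≤ t) (hr : (1 - γ) ^ (r + 1) ≤ t / 18) (hc : c ≤ t / (36 * 3 ^ (r + 1))) (hc1 : c ≤ 1)
    (hcn : r * (r + 1) + 1 ≤ c * Fintype.card V)
    (hj : (1 - c) ^ j * (Fintype.card V : ℝ) ^ 2 < 1) :
    ∃ F, #F ≤ j * (r + 2) ∧
      IsConnectingSet G r (heavySet ((isHermitian_adjMatrix G).eigenvectorBasis i₀) t) F := by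
  refine exists_isConnectingSet hc1 (fun u hu v hv ↦ mul_sq_card_le_card_connectors ?_ hcn) hj
  refine le_trans ?_ (hgap.mul_pow_le_adjMatrix_pow_apply hρ hγ1 hρn ht hr
    (div_card_le_mul_of_mem_heavySet ht (hsign u v) hu hv))
  gcongr
  calc 2 * c ≤ 2 * (t / (36 * 3 ^ (r + 1))) := by gcongr
    _ = t / (18 * 3 ^ (r + 1)) := by
        field_simp
        ring

theorem mul_card_sdiff_lt_card_interedges {K F : Finset V} {ρ ε : ℝ} {m : ℕ}
    (hε : ε ≤ 1 / 4) (hn : 4 ≤ ε * Fintype.card V)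
    (hρ : Fintype.card V / 2 - 1 / 4 ≤ ρ)
    (hK : (ρ * (1 - 2 * (ε / 4))) ^ 2 ≤ #(G.interedges K K)) (hF : #F ≤ ε / 8 * Fintype.card V)
    (hm : m ≤ (1 / 4 - ε) * Fintype.card V) :
    m * #(K \ F) < #(G.interedges (K \ F) (K \ F)) := by
  have hsdiff : (#(G.interedges K K) : ℝ) ≤
      #(G.interedges (K \ F) (K \ F)) + 2 * (#F * Fintype.card V) :=
    mod_cast card_interedges_le_card_interedges_sdiff_add (G := G) K F
  set n : ℝ := (Fintype.card V : ℝ)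
  have hn0 : 0 ≤ n := Nat.cast_nonneg _
  have hn16 : 16 ≤ n := by nlinarith
  have hedges : (n ^ 2 / 4 - n / 4) * (1 - ε) ≤ (ρ * (1 - 2 * (ε / 4))) ^ 2 := by
    rw [mul_pow]
    exact mul_le_mul (by nlinarith) (by nlinarith [sq_nonneg ε]) (by linarith) (sq_nonneg ρ)
  have hcard : (m : ℝ) * #(K \ F) ≤ (1 / 4 - ε) * n * n := by
    have : (#(K \ F) : ℝ) ≤ n := Nat.cast_le.2 (Finset.card_le_univ _)
    gcongr
  have hremoved : #F * n ≤ ε / 8 * n * n := by gcongr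
  have hlt : (m : ℝ) * #(K \ F) < #(G.interedges (K \ F) (K \ F)) := by nlinarith
  exact_mod_cast hlt

theorem HasSpectralGap.hasCycleLen_long {V : Type} [Fintype V] [DecidableEq V]
    {G : SimpleGraph V} [DecidableRel G.Adj] {i₀ : V} {γ ρ ε c : ℝ} {r j m : ℕ}
    (hgap : HasSpectralGap G i₀ γ) (hρ : (isHermitian_adjMatrix G).eigenvalues i₀ = ρ)
    (hγ1 : γ ≤ 1) (hρn : Fintype.card V / 2 - 1 / 4 ≤ ρ)
    (hsign : ∀ u v, 0 ≤ (isHermitian_adjMatrix G).eigenvectorBasis i₀ u *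
      (isHermitian_adjMatrix G).eigenvectorBasis i₀ v)
    (hε0 : 0 < ε) (hε : ε ≤ 1 / 4) (hn : 4 ≤ ε * Fintype.card V)
    (hr : (1 - γ) ^ (r + 1) ≤ ε / 4 / 18) (hc : c ≤ ε / 4 / (36 * 3 ^ (r + 1)))
    (hcn : r * (r + 1) + 1 ≤ c * Fintype.card V)
    (hj : (1 - c) ^ j * (Fintype.card V : ℝ) ^ 2 < 1)
    (hjn : j * (r + 2) ≤ ε / 8 * Fintype.card V) (hm : m ≤ (1 / 4 - ε) * Fintype.card V) :
    HasCycleLen G (m + r + 4) := by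
  have : (16 : ℝ) ≤ Fintype.card V := by nlinarith
  have hc1 : c ≤ 1 := hc.trans <| (div_le_self (by positivity)
    (one_le_mul_of_one_le_of_one_le (by norm_num) (one_le_pow₀ (by norm_num)))).trans (by linarith)
  obtain ⟨F, hFcard, hF⟩ := hgap.exists_isConnectingSet_heavySet hρ hγ1 (by linarith) hsign
    (by positivity) hr hc hc1 hcn hj
  have hFn : (#F : ℝ) ≤ ε / 8 * Fintype.card V := by
    refine le_trans ?_ hjn
    exact_mod_cast hFcard
  have hK := sq_mul_one_sub_le_card_interedges_heavySet (t := ε / 4) (ρ := ρ)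
    (hρ ▸ (isHermitian_adjMatrix G).mulVec_eigenvectorBasis i₀)
    (dotProduct_eigenvectorBasis_self (isHermitian_adjMatrix G) i₀) hsign (by linarith)
    (by linarith) (by linarith)
  exact hF.hasCycleLen (mul_card_sdiff_lt_card_interedges hε hn hρn hK hFn hm)

end LongCycles

section AllCycles

open Filter
open scoped Finset Matrix

theorem eventually_exists_pow_mul_sq_lt_one {q δ : ℝ} (hq0 : 0 ≤ q) (hq1 : q < 1) (hδ : 0 < δ) :
    ∀ᶠ n : ℕ in atTop, ∃ j : ℕ, j ≤ δ * n ∧ q ^ j * (n : ℝ) ^ 2 < 1 := by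
  have hfloor : Tendsto (fun n : ℕ ↦ ⌊δ * (n : ℝ)⌋₊) atTop atTop :=
    tendsto_nat_floor_atTop.comp (tendsto_natCast_atTop_atTop.const_mul_atTop hδ)
  have hdecay : Tendsto (fun j : ℕ ↦ (j : ℝ) ^ 2 * q ^ j) atTop (nhds 0) :=
    tendsto_pow_const_mul_const_pow_of_abs_lt_one 2 (by rwa [abs_of_nonneg hq0])
  filter_upwards [(hdecay.comp hfloor).eventually_lt_const (show 0 < δ ^ 2 / 4 by positivity),
    hfloor.eventually_ge_atTop 1] with n hlt hone
  set j := ⌊δ * (n : ℝ)⌋₊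
  have hone' : (1 : ℝ) ≤ j := mod_cast hone
  have hle : δ * n ≤ 2 * j := by linarith [Nat.lt_floor_add_one (δ * (n : ℝ))]
  refine ⟨j, Nat.floor_le (by positivity), lt_of_mul_lt_mul_left ?_ (sq_nonneg δ)⟩
  calc δ ^ 2 * (q ^ j * (n : ℝ) ^ 2) = q ^ j * (δ * n) ^ 2 := by ring
    _ ≤ q ^ j * (2 * j) ^ 2 := by gcongr
    _ = 4 * ((j : ℝ) ^ 2 * q ^ j) := by ring
    _ < δ ^ 2 * 1 := by
        have : (j : ℝ) ^ 2 * q ^ j < δ ^ 2 / 4 := hlt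
        linarith

theorem eventually_le_mul_natCast (a : ℝ) {b : ℝ} (hb : 0 < b) :
    ∀ᶠ n : ℕ in atTop, a ≤ b * n :=
  (tendsto_natCast_atTop_atTop.const_mul_atTop hb).eventually_ge_atTop a

theorem HasSpectralGap.hasCycleLen_of_le {V : Type} [Fintype V] [DecidableEq V]
    {G : SimpleGraph V} [DecidableRel G.Adj] {i₀ : V} {γ ρ : ℝ} {r l : ℕ}
    (hgap : HasSpectralGap G i₀ γ) (hρ : (isHermitian_adjMatrix G).eigenvalues i₀ = ρ)
    (hγ0 : 0 < γ) (hγ1 : γ ≤ 1) (hρn : Fintype.card V / 2 - 1 / 4 ≤ ρ)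
    (hn : 2 * ((r + 1) * (r + 2)) * 3 ^ (r + 3) + 1 ≤ γ * Fintype.card V) (hl3 : 3 ≤ l)
    (hlr : l ≤ r + 3) : HasCycleLen G l := by
  obtain ⟨k, rfl⟩ := Nat.exists_eq_add_of_le' (show 2 ≤ l by omega)
  have hkr : (k : ℝ) ≤ r + 1 := mod_cast (by omega : k ≤ r + 1)
  have hlarge : 2 * (k * (k + 1) : ℝ) * 3 ^ (k + 2) ≤ 2 * ((r + 1) * (r + 2)) * 3 ^ (r + 3) := by
    have hpow : (3 : ℝ) ^ (k + 2) ≤ 3 ^ (r + 3) := pow_le_pow_right₀ (by norm_num) (by omega)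
    have hprod : (k * (k + 1) : ℝ) ≤ (r + 1) * (r + 2) := by gcongr ?_ * ?_; linarith
    exact mul_le_mul (by linarith) hpow (by positivity) (by positivity)
  have hγρ : 1 ≤ γ * ρ := by
    have hprod : (4 : ℝ) ≤ 2 * ((r + 1) * (r + 2)) := by nlinarith [r.cast_nonneg (α := ℝ)]
    have hthree : (4 : ℝ) ≤ 2 * ((r + 1) * (r + 2)) * 3 ^ (r + 3) :=
      hprod.trans (le_mul_of_one_le_right (by linarith) (one_le_pow₀ (by norm_num)))
    nlinarith [mul_le_mul_of_nonneg_left hρn hγ0.le]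
  exact hgap.hasCycleLen_short hρ hγ0.le hγ1 (by linarith) hγρ (by omega) (by linarith)

theorem exists_forall_hasCycleLen_of_hasSpectralGap {ε γ : ℝ} (hε0 : 0 < ε) (hε : ε < 1 / 4)
    (hγ0 : 0 < γ) (hγ1 : γ < 1) :
    ∃ N, ∀ (V : Type) [Fintype V] [DecidableEq V] (G : SimpleGraph V) [DecidableRel G.Adj] (i₀ : V),
      N ≤ Fintype.card V →
      Fintype.card V / 2 - 1 / 4 ≤ (isHermitian_adjMatrix G).eigenvalues i₀ →
      HasSpectralGap G i₀ γ →
      (∀ u v, 0 ≤ (isHermitian_adjMatrix G).eigenvectorBasis i₀ u *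
        (isHermitian_adjMatrix G).eigenvectorBasis i₀ v) →
      ∀ l : ℕ, 3 ≤ l → l ≤ (1 / 4 - ε) * Fintype.card V → HasCycleLen G l := by
  obtain ⟨r, hr⟩ := exists_pow_lt_of_lt_one (show 0 < ε / 4 / 18 by positivity)
    (show 1 - γ < 1 by linarith)
  have hr' : (1 - γ) ^ (r + 1) ≤ ε / 4 / 18 :=
    (pow_le_pow_of_le_one (by linarith) (by linarith) r.le_succ).trans hr.le
  set c : ℝ := ε / 4 / (36 * 3 ^ (r + 1))
  have hc0 : 0 < c := by positivity
  have hc1 : c < 1 := (div_le_self (by positivity) (one_le_mul_of_one_le_of_one_le (by norm_num)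
    (one_le_pow₀ (by norm_num)))).trans_lt (by linarith)
  obtain ⟨N, hN⟩ := eventually_atTop.1 <|
    (eventually_exists_pow_mul_sq_lt_one (q := 1 - c) (δ := ε / 8 / (r + 2)) (by linarith)
      (by linarith) (by positivity)).and <| (eventually_le_mul_natCast 4 hε0).and <|
    (eventually_le_mul_natCast (r * (r + 1) + 1) hc0).and <|
    eventually_le_mul_natCast (2 * ((r + 1) * (r + 2)) * 3 ^ (r + 3) + 1) hγ0
  refine ⟨N, fun V _ _ G _ i₀ hcard hρn hgap hsign l hl3 hl ↦ ?_⟩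
  obtain ⟨⟨j, hjn, hj⟩, hεn, hcn, hγn⟩ := hN _ hcard
  rcases Nat.lt_or_ge l (r + 4) with hlr | hlr
  · exact hgap.hasCycleLen_of_le rfl hγ0 hγ1.le hρn hγn hl3 (by omega)
  · obtain ⟨m, rfl⟩ := Nat.exists_eq_add_of_le' hlr
    have hjr : (j * (r + 2) : ℝ) ≤ ε / 8 * Fintype.card V := by
      rw [← le_div_iff₀ (by positivity)]
      exact hjn.trans_eq (div_mul_eq_mul_div _ _ _)
    have hm : (m : ℝ) ≤ (1 / 4 - ε) * Fintype.card V :=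
      (Nat.cast_le.2 (by omega : m ≤ m + (r + 4))).trans hl
    exact hgap.hasCycleLen_long rfl hγ1.le hρn hsign hε0 hε.le hεn hr' le_rfl hcn hj hjr hm

theorem hasCycleLen_or_hasSpectralGap {V : Type} [Fintype V] [DecidableEq V] {G : SimpleGraph V}
    [DecidableRel G.Adj] {i₀ : V} {γ : ℝ} {l : ℕ}
    (hρ : √(Fintype.card V ^ 2 / 4 : ℕ) < (isHermitian_adjMatrix G).eigenvalues i₀)
    (hγ0 : 0 ≤ γ) (hγ : γ ≤ 1 / 10 ^ 4) (hn : 10 ^ 4 ≤ Fintype.card V) (hl3 : 3 ≤ l)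
    (hl : 4 * l ≤ Fintype.card V) :
    HasCycleLen G l ∨ HasSpectralGap G i₀ γ ∧
      ∀ u v, 0 ≤ (isHermitian_adjMatrix G).eigenvectorBasis i₀ u *
        (isHermitian_adjMatrix G).eigenvectorBasis i₀ v := by
  set hA := isHermitian_adjMatrix G
  set ρ := hA.eigenvalues i₀
  have hρn : (Fintype.card V / 2 - 1 / 4 : ℝ) ≤ ρ :=
    (half_sub_quarter_le_sqrt (by omega)).trans hρ.le
  have hnR : (10 ^ 4 : ℝ) ≤ Fintype.card V := mod_cast hn
  have hlR : (4 * l : ℝ) ≤ Fintype.card V := mod_cast hl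
  have hν : (1 - γ) * ρ ≤ ρ := by nlinarith
  have hν0 : 0 < (1 - γ) * ρ := mul_pos (by linarith) (by linarith)
  have hlν : (l : ℝ) ≤ 2 * ((1 - γ) * ρ) - Fintype.card V / 2 := by nlinarith
  have hνn : (Fintype.card V : ℝ) ^ 2 / 4 - (Fintype.card V / 100) ^ 2 ≤ ((1 - γ) * ρ) ^ 2 := by
    have hle : (1 - 1 / 10 ^ 4) * (Fintype.card V / 2 - 1 / 4) ≤ (1 - γ) * ρ :=
      mul_le_mul (by linarith) hρn (by linarith) (by linarith)
    refine le_trans ?_ (pow_le_pow_left₀ (mul_nonneg (by norm_num) (by linarith)) hle 2)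
    nlinarith
  have hunit i : hA.eigenvectorBasis i ⬝ᵥ hA.eigenvectorBasis i = 1 :=
    dotProduct_eigenvectorBasis_self hA i
  have hne i : ⇑(hA.eigenvectorBasis i) ≠ 0 := fun h ↦ by simpa [h] using hunit i
  have heig i := hA.mulVec_eigenvectorBasis i
  by_contra! hcycle
  refine (hcycle.2 fun i hi ↦ abs_le.2 ⟨?_, ?_⟩).elim ?_
  · by_contra! hneg
    have hx1 : |⇑(hA.eigenvectorBasis i₀)| ⬝ᵥ |⇑(hA.eigenvectorBasis i₀)| = 1 := by
      rw [← hunit i₀]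
      simp only [dotProduct, Pi.abs_apply, abs_mul_abs_self]
    have habs := isSubeigenvector_abs (heig i₀) le_rfl (hne i₀)
    exact hcycle.1 <| habs.hasCycleLen_of_eigenvalue_le_neg hx1 hρ (heig i) (hne i) hν0 hneg.le
      hνn (by omega) hl3 hl
  · by_contra! hsecond
    exact hcycle.1 <| hasCycleLen_of_dotProduct_eq_zero (heig i₀) hν (hne i₀) (heig i) hsecond.le
      (hne i) (dotProduct_eigenvectorBasis_of_ne hA hi.symm) hν0 hl3 hlν
  · rintro u ⟨v, huv⟩
    exact hcycle.1 (hasCycleLen_of_eigenvector_mul_neg (heig i₀) hν huv hν0 hl3 hlν)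

end AllCycles

theorem spectral_consecutive_cycles_general (ε : ℝ) (hε0 : 0 < ε) (hε : ε < 1 / 4) :
    ∃ N : ℕ, ∀ (V : Type) [Fintype V], N ≤ Fintype.card V → ∀ G : SimpleGraph V,
      √(Fintype.card V ^ 2 / 4 : ℕ) < specRad G →
      ∀ l : ℕ, 3 ≤ l → l ≤ (1 / 4 - ε) * Fintype.card V → HasCycleLen G l := by
  classical
  obtain ⟨N, hN⟩ := exists_forall_hasCycleLen_of_hasSpectralGap hε0 hε
    (show (0 : ℝ) < 1 / 10 ^ 4 by norm_num) (by norm_num)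
  refine ⟨max N (10 ^ 4), fun V _ hn G hG l hl3 hl ↦ ?_⟩
  obtain ⟨hnN, hn4⟩ := max_le_iff.1 hn
  have : Nonempty V := Fintype.card_pos_iff.1 (by omega)
  obtain ⟨i₀, hi₀⟩ := exists_eigenvalues_eq_specRad G
  rw [← hi₀] at hG
  have hl4 : 4 * l ≤ Fintype.card V := by
    have : (4 * l : ℝ) ≤ Fintype.card V := by nlinarith
    exact_mod_cast this
  obtain hcycle | ⟨hgap, hsign⟩ :=
    hasCycleLen_or_hasSpectralGap hG (by norm_num) le_rfl hn4 hl3 hl4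
  · exact hcycle
  · exact hN V G i₀ hnN ((half_sub_quarter_le_sqrt (by omega)).trans hG.le) hgap hsign l hl3 hl

/-- Theorem 1.8: Nikiforov's problem, `C ≥ 1/4`. -/
theorem spectral_consecutive_cycles (ε : ℝ) (hε0 : 0 < ε) (hε : ε < 1 / 4) :
    ∃ N : ℕ, ∀ n : ℕ, N ≤ n → ∀ G : SimpleGraph (Fin n),
      Real.sqrt ((n ^ 2 / 4 : ℕ) : ℝ) < specRad G →
      ∀ l : ℕ, 3 ≤ l → (l : ℝ) ≤ (1 / 4 - ε) * (n : ℝ) → HasCycleLen G l := by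
  obtain ⟨N, hN⟩ := spectral_consecutive_cycles_general ε hε0 hε
  exact ⟨N, fun n hn G ↦ by simpa only [Fintype.card_fin] using hN (Fin n) (by simpa using hn) G⟩
end

section
/- Let k ≥ 0 be an integer and let G be a simple graph of order n ≥ 6k+5. Suppose that any two distinct nonadjacent vertices of G have degree sum at most n−1 (i.e. G equals its n-closure). If e(G) > C(n−k−1, 2) + (k+1)², then ω(G) ≥ n−k, i.e. G contains a clique on n−k vertices. -/
open SimpleGraph

/-!
Take a maximal clique `K` containing every vertex of degree at least `n / 2`; these vertices are
pairwise adjacent because `G` is closed. Put `t = |K|` and `m = n - t`. A vertex `v ∉ K` misses some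
`w ∈ K`, and `deg w ≥ t - 1`, so closedness gives `deg v ≤ m`. Hence
`2e = t(t - 1) + ∑_{v ∉ K} (d_K(v) + deg v)` is at most `t(t - 1) + 2m²`. Suppose `m ≥ k + 1`. If
`m < n / 2`, convexity of `m ↦ C(n - m, 2) + m²` bounds `e` by the value at `m = k + 1`: at the
other end `m = (n - 1) / 2` the function is no larger, because `n ≥ 6k + 5`. If `m ≥ n / 2`, the
bounds `d_K(v) ≤ t - 1` and `deg v ≤ (n - 1) / 2` give `8e ≤ n(3n - 5)`, which is smaller still.
-/

open Finset

section Counting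

variable {V : Type*} {G : SimpleGraph V} {K : Finset V} {v : V}

lemma exists_not_adj_of_isMaximalClique {s : Set V} (hs : Maximal G.IsClique s)
    (hv : v ∉ s) : ∃ w ∈ s, ¬G.Adj v w := by
  by_contra! hall
  have hins : G.IsClique (insert v s) := hs.prop.insert fun w hw _ => hall w hw
  exact hv (hs.le_of_ge hins (Set.subset_insert v s) (Set.mem_insert v s))

section Neighbors

variable [DecidableEq V] [Fintype (G.neighborSet v)]

lemma card_neighborFinset_inter_le_degree : #(G.neighborFinset v ∩ K) ≤ G.degree v :=
  card_le_card inter_subset_left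

lemma card_neighborFinset_inter_of_isClique (hK : G.IsClique (K : Set V)) (hv : v ∈ K) :
    #(G.neighborFinset v ∩ K) = #K - 1 := by
  rw [← card_erase_of_mem hv]
  congr 1
  ext w
  simp only [mem_inter, mem_neighborFinset, mem_erase]
  exact ⟨fun h => ⟨h.1.ne', h.2⟩, fun h => ⟨hK hv h.2 h.1.symm, h.2⟩⟩

lemma card_neighborFinset_inter_lt_of_isMaximalClique (hK : Maximal G.IsClique (K : Set V))
    (hv : v ∉ K) : #(G.neighborFinset v ∩ K) < #K := by
  obtain ⟨w, hwK, hvw⟩ := exists_not_adj_of_isMaximalClique hK hv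
  refine card_lt_card (ssubset_iff_of_subset inter_subset_right |>.2 ⟨w, hwK, ?_⟩)
  simp [hvw]

end Neighbors

variable (G) in
lemma sum_card_neighborFinset_inter_comm [DecidableEq V] [G.LocallyFinite] (s t : Finset V) :
    ∑ v ∈ s, #(G.neighborFinset v ∩ t) = ∑ v ∈ t, #(G.neighborFinset v ∩ s) := by
  classical
  have hinter (v : V) (u : Finset V) : G.neighborFinset v ∩ u = {w ∈ u | G.Adj v w} := by
    ext w
    simp [and_comm]
  simp only [hinter]
  simpa only [bipartiteAbove, bipartiteBelow, G.adj_comm] using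
    sum_card_bipartiteAbove_eq_sum_card_bipartiteBelow (s := s) (t := t) G.Adj

variable [Fintype V] [DecidableRel G.Adj]

lemma two_mul_card_edgeFinset_eq_of_isClique [DecidableEq V] (hK : G.IsClique (K : Set V)) :
    2 * #G.edgeFinset =
      #K * (#K - 1) + ∑ v ∈ Kᶜ, (#(G.neighborFinset v ∩ K) + G.degree v) := by
  have hdeg : ∀ v ∈ K, G.degree v = (#K - 1) + #(G.neighborFinset v ∩ Kᶜ) := fun v hv => by
    rw [← card_neighborFinset_inter_of_isClique hK hv, ← sdiff_eq_inter_compl,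
      card_inter_add_card_sdiff, card_neighborFinset_eq_degree]
  calc 2 * #G.edgeFinset = ∑ v ∈ K, G.degree v + ∑ v ∈ Kᶜ, G.degree v := by
        rw [← G.sum_degrees_eq_twice_card_edges, sum_add_sum_compl]
    _ = #K * (#K - 1) + ∑ v ∈ K, #(G.neighborFinset v ∩ Kᶜ) + ∑ v ∈ Kᶜ, G.degree v := by
        rw [sum_congr rfl hdeg, sum_add_distrib, sum_const, smul_eq_mul]
    _ = #K * (#K - 1) + ∑ v ∈ Kᶜ, (#(G.neighborFinset v ∩ K) + G.degree v) := by
        rw [sum_card_neighborFinset_inter_comm, sum_add_distrib, add_assoc]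

lemma eight_mul_card_edgeFinset_le_of_isMaximalClique (hK : Maximal G.IsClique (K : Set V))
    (hdeg : ∀ v ∉ K, 2 * G.degree v < Fintype.card V) (hhalf : 2 * #K ≤ Fintype.card V) :
    8 * #G.edgeFinset + 5 * Fintype.card V ≤ 3 * Fintype.card V ^ 2 := by
  classical
  -- `d_K(v) ≤ #K - 1` and `2 * deg v ≤ n - 1`, with the subtracted terms moved to the left.
  have hsum : ∑ v ∈ Kᶜ, (2 * (#(G.neighborFinset v ∩ K) + G.degree v) + 3) ≤
      #Kᶜ * (2 * #K + Fintype.card V) := by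
    refine sum_le_card_nsmul _ _ _ fun v hv => ?_
    have hvK := mem_compl.1 hv
    have hinter := card_neighborFinset_inter_lt_of_isMaximalClique hK hvK
    have hlight := hdeg v hvK
    lia
  rw [sum_add_distrib, sum_const, smul_eq_mul, ← mul_sum] at hsum
  have hedges := two_mul_card_edgeFinset_eq_of_isClique hK.prop
  have hcard := card_add_card_compl K
  have hsq : #K * (#K - 1) + #K = #K * #K := by
    cases #K <;> simp [mul_add]
  set n := Fintype.card V
  calc 8 * #G.edgeFinset + 5 * n ≤ 4 * (2 * #G.edgeFinset + #K) + 6 * #Kᶜ := by lia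
    _ = 4 * (#K * #K) +
          2 * (2 * ∑ v ∈ Kᶜ, (#(G.neighborFinset v ∩ K) + G.degree v) + #Kᶜ * 3) := by linarith
    _ ≤ 4 * (#K * #K) + 2 * (#Kᶜ * (2 * #K + n)) := by gcongr
    _ = 2 * n ^ 2 + n * (2 * #K) := by rw [← hcard]; ring
    _ ≤ 2 * n ^ 2 + n * n := by gcongr
    _ = 3 * n ^ 2 := by ring

end Counting

section Closed

variable {V : Type*} {G : SimpleGraph V} {K : Finset V} {c : ℕ}

/-- `G` coincides with its Bondy–Chvátal `c`-closure: no two distinct nonadjacent vertices have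
degree sum at least `c`. -/
def IsDegreeSumClosed (G : SimpleGraph V) [G.LocallyFinite] (c : ℕ) : Prop :=
  ∀ ⦃u v : V⦄, u ≠ v → ¬G.Adj u v → G.degree u + G.degree v < c

namespace IsDegreeSumClosed

lemma isClique_setOf_le_two_mul_degree [G.LocallyFinite] (hG : IsDegreeSumClosed G c) :
    G.IsClique {v | c ≤ 2 * G.degree v} := by
  intro u (hu : c ≤ 2 * G.degree u) v (hv : c ≤ 2 * G.degree v) huv
  by_contra hadj
  have hlt := hG huv hadj
  lia

lemma exists_isMaximalClique_two_mul_degree_lt [Finite V] [G.LocallyFinite]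
    (hG : IsDegreeSumClosed G c) :
    ∃ K : Finset V, Maximal G.IsClique (K : Set V) ∧ ∀ v ∉ K, 2 * G.degree v < c := by
  obtain ⟨s, hsub, hs⟩ := Finite.exists_le_maximal hG.isClique_setOf_le_two_mul_degree
  lift s to Finset V using s.toFinite
  exact ⟨s, hs, fun v hv => not_le.1 fun hle => hv (hsub hle)⟩

lemma degree_add_card_le [G.LocallyFinite] (hG : IsDegreeSumClosed G c)
    (hK : Maximal G.IsClique (K : Set V)) {v : V} (hv : v ∉ K) : G.degree v + #K ≤ c := by
  classical
  obtain ⟨w, hwK, hvw⟩ := exists_not_adj_of_isMaximalClique hK hv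
  have hlt : G.degree v + G.degree w < c := hG (fun h => hv (h ▸ hwK)) hvw
  have hw : #K - 1 ≤ G.degree w :=
    card_neighborFinset_inter_of_isClique hK.prop hwK ▸ card_neighborFinset_inter_le_degree
  lia

lemma card_edgeFinset_le [Fintype V] [DecidableEq V] [DecidableRel G.Adj]
    (hG : IsDegreeSumClosed G c) (hK : Maximal G.IsClique (K : Set V)) :
    #G.edgeFinset ≤ (#K).choose 2 + #Kᶜ * (c - #K) := by
  have hsum : ∑ v ∈ Kᶜ, (#(G.neighborFinset v ∩ K) + G.degree v) ≤ #Kᶜ * (2 * (c - #K)) := by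
    refine sum_le_card_nsmul _ _ _ fun v hv => ?_
    have hinter : #(G.neighborFinset v ∩ K) ≤ G.degree v := card_neighborFinset_inter_le_degree
    have hdeg := hG.degree_add_card_le hK (mem_compl.1 hv)
    lia
  have hedges := two_mul_card_edgeFinset_eq_of_isClique hK.prop
  have hchoose : #K * (#K - 1) = 2 * (#K).choose 2 := by
    rw [Nat.choose_two_right, Nat.mul_div_cancel' (Nat.even_mul_pred_self _).two_dvd]
  linarith

end IsDegreeSumClosed

end Closed

section Arithmetic

lemma choose_two_add_sq_le_of_le {a m n : ℕ} (ham : a ≤ m) (hmn : 3 * (a + m) < 2 * n) :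
    (n - m).choose 2 + m ^ 2 ≤ (n - a).choose 2 + a ^ 2 := by
  have hdiff : (0 : ℚ) ≤ (m - a) * (2 * n - 1 - 3 * (a + m)) := by
    refine mul_nonneg (sub_nonneg.2 (mod_cast ham)) ?_
    have : (3 * (a + m) + 1 : ℚ) ≤ 2 * n := mod_cast hmn
    linarith
  qify
  rw [Nat.cast_choose_two, Nat.cast_choose_two, Nat.cast_sub (by lia), Nat.cast_sub (by lia)]
  linarith

lemma three_mul_sq_le_eight_mul_choose_two_add_sq {k n : ℕ} (hn : 6 * k + 5 ≤ n) :
    3 * n ^ 2 ≤ 8 * ((n - k - 1).choose 2 + (k + 1) ^ 2) + 5 * n := by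
  obtain ⟨x, rfl⟩ := Nat.exists_eq_add_of_le hn
  rw [show 6 * k + 5 + x - k - 1 = 5 * k + x + 4 by lia]
  qify
  rw [Nat.cast_choose_two]
  push_cast
  have hgap : (0 : ℚ) ≤ x ^ 2 + (4 * k + 3) * x + 6 * k + 6 := by positivity
  linarith

end Arithmetic

theorem clique_of_closed_general {V : Type*} [Fintype V] {G : SimpleGraph V} [DecidableRel G.Adj]
    {k : ℕ} (hn : 6 * k + 5 ≤ Fintype.card V) (hG : IsDegreeSumClosed G (Fintype.card V))
    (he : (Fintype.card V - k - 1).choose 2 + (k + 1) ^ 2 < #G.edgeFinset) :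
    ∃ S : Finset V, G.IsNClique (Fintype.card V - k) S := by
  classical
  obtain ⟨K, hK, hlight⟩ := hG.exists_isMaximalClique_two_mul_degree_lt
  suffices hlarge : Fintype.card V - k ≤ #K by
    obtain ⟨S, hSK, hS⟩ := exists_subset_card_eq hlarge
    exact ⟨S, hK.prop.subset (mod_cast hSK), hS⟩
  by_contra! hsmall
  rcases le_or_gt (2 * #K) (Fintype.card V) with hhalf | hhalf
  · have hupper := eight_mul_card_edgeFinset_le_of_isMaximalClique hK hlight hhalf
    have hlower := three_mul_sq_le_eight_mul_choose_two_add_sq hn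
    lia
  · have hcard := card_add_card_compl K
    have hupper := hG.card_edgeFinset_le hK
    have hmono : (Fintype.card V - #Kᶜ).choose 2 + #Kᶜ ^ 2 ≤
        (Fintype.card V - (k + 1)).choose 2 + (k + 1) ^ 2 :=
      choose_two_add_sq_le_of_le (by lia) (by lia)
    rw [← card_compl, ← sq] at hupper
    rw [show Fintype.card V - #Kᶜ = #K by lia, ← Nat.sub_sub] at hmono
    exact (hupper.trans hmono).not_gt he

lemma degCount_eq_degree {V : Type} (G : SimpleGraph V) (v : V) [Fintype (G.neighborSet v)] :
    degCount G v = G.degree v := by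
  rw [degCount, Nat.card_eq_fintype_card, G.card_neighborSet_eq_degree]

lemma edgeCount_eq_card_edgeFinset {V : Type} (G : SimpleGraph V) [Fintype G.edgeSet] :
    edgeCount G = #G.edgeFinset := by
  rw [edgeCount, Nat.card_eq_fintype_card, edgeFinset_card]

/-- Lemma 2.4: closed graphs with many edges have a large clique. -/
theorem clique_of_closed (k n : ℕ) (G : SimpleGraph (Fin n)) (hn : 6 * k + 5 ≤ n)
    (hcl : ∀ u v : Fin n, u ≠ v → ¬ G.Adj u v → degCount G u + degCount G v ≤ n - 1)
    (he : (n - k - 1).choose 2 + (k + 1) ^ 2 < edgeCount G) :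
    ∃ S : Finset (Fin n), S.card = n - k ∧ G.IsClique (↑S : Set (Fin n)) := by
  classical
  have hG : IsDegreeSumClosed G n := fun u v huv hadj => by
    have hle := hcl u v huv hadj
    rw [degCount_eq_degree, degCount_eq_degree] at hle
    lia
  rw [edgeCount_eq_card_edgeFinset] at he
  obtain ⟨S, hS⟩ := clique_of_closed_general (G := G) (k := k) (by simpa) (by simpa) (by simpa)
  exact ⟨S, by simpa using hS.card_eq, hS.isClique⟩
end

section
/- Let n and k be integers with n ≥ 2k+1 ≥ 1, and let G be a simple graph of order n that is a subgraph of some member of the family F_{n,k}. If ρ(G) ≥ ρ(L_{n,k}), then G is isomorphic to L_{n,k}. -/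
open SimpleGraph

/-!
Let `S` be a set of `n - k` vertices of `G` such that every vertex outside `S` has at most one
neighbour in `S`. Take a nonnegative eigenvector `x` of `G` for `ρ(G)` and let `v` maximize `x` on
`S`. Redirecting every edge between `Sᶜ` and `S` to `v`, and then adding all missing edges between
`v` and `Sᶜ`, inside `S` and inside `Sᶜ`, produces a copy `L` of `L_{n,k}` without decreasing the
quadratic form `xᵀ A x`. If `ρ(L) ≤ ρ(G)`, the Rayleigh principle for `L` then forces
`A_L x = ρ(G) x = A_G x`. As `L` is connected, `x` is positive, so comparing the rows of `A_L` and
`A_G` first at `v` and then at the other vertices shows that the two graphs have the same edges.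
-/

open Matrix Finset

section RayleighPrinciple

variable {V : Type*} [Fintype V] [DecidableEq V]

lemma isGreatest_sSup_spectrum {𝕜 : Type*} [RCLike 𝕜] [Nonempty V] {A : Matrix V V 𝕜}
    (hA : A.IsHermitian) : IsGreatest (spectrum ℝ A) (sSup (spectrum ℝ A)) := by
  have hfin : (spectrum ℝ A).Finite := A.finite_real_spectrum
  have hne : (spectrum ℝ A).Nonempty :=
    hA.spectrum_real_eq_range_eigenvalues ▸ Set.range_nonempty _
  exact ⟨hne.csSup_mem hfin, fun _ => le_csSup hfin.bddAbove⟩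

variable {A : Matrix V V ℝ} {c : ℝ}

lemma mulVec_eq_smul_of_mul_dotProduct_self_le (hA : A.IsHermitian)
    (hc : c ∈ upperBounds (spectrum ℝ A)) {x : V → ℝ}
    (hx : c * (x ⬝ᵥ x) ≤ x ⬝ᵥ A *ᵥ x) : A *ᵥ x = c • x := by
  open scoped MatrixOrder in
  have hpsd : (algebraMap ℝ (Matrix V V ℝ) c - A).PosSemidef :=
    Matrix.le_iff.1 (le_algebraMap_of_spectrum_le hc hA)
  have hmul : (algebraMap ℝ (Matrix V V ℝ) c - A) *ᵥ x = c • x - A *ᵥ x := by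
    rw [sub_mulVec, Algebra.algebraMap_eq_smul_one, smul_mulVec, one_mulVec]
  have hzero : x ⬝ᵥ (algebraMap ℝ (Matrix V V ℝ) c - A) *ᵥ x = 0 := by
    refine le_antisymm ?_ (hpsd.dotProduct_mulVec_nonneg x)
    rwa [hmul, dotProduct_sub, dotProduct_smul, smul_eq_mul, sub_nonpos]
  rw [← sub_eq_zero, ← neg_sub, neg_eq_zero, ← hmul]
  exact (hpsd.dotProduct_mulVec_zero_iff x).1 hzero

-- Replacing an eigenvector by its entrywise absolute value does not decrease the quadratic form.
lemma exists_nonneg_eigenvector_of_isGreatest_spectrum (hA : A.IsHermitian)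
    (hA₀ : ∀ a b, 0 ≤ A a b) (hc : IsGreatest (spectrum ℝ A) c) :
    ∃ x : V → ℝ, 0 ≤ x ∧ x ≠ 0 ∧ A *ᵥ x = c • x := by
  have hev : Module.End.HasEigenvalue A.toLin' c := by
    rw [Module.End.hasEigenvalue_iff_mem_spectrum, spectrum_toLin']
    exact hc.1
  obtain ⟨y, hy⟩ := hev.exists_hasEigenvector
  refine ⟨|y|, abs_nonneg y, fun h => hy.2 (funext fun a => abs_eq_zero.1 (congrFun h a)),
    mulVec_eq_smul_of_mul_dotProduct_self_le hA hc.2 ?_⟩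
  have hnorm : |y| ⬝ᵥ |y| = y ⬝ᵥ y := by simp [dotProduct]
  calc c * (|y| ⬝ᵥ |y|) = y ⬝ᵥ A *ᵥ y := by
        rw [hnorm, ← toLin'_apply, hy.apply_eq_smul, dotProduct_smul, smul_eq_mul]
    _ ≤ |y| ⬝ᵥ A *ᵥ |y| := by
        simp only [dotProduct, mulVec, mul_sum, Pi.abs_apply]
        gcongr ∑ a, ∑ b, ?_ with a _ b _
        calc y a * (A a b * y b) = A a b * (y a * y b) := by ring
          _ ≤ A a b * (|y a| * |y b|) := by
            rw [← abs_mul]; exact mul_le_mul_of_nonneg_left (le_abs_self _) (hA₀ a b)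
          _ = |y a| * (A a b * |y b|) := by ring

end RayleighPrinciple

section QuadraticForm

variable {V R : Type*} [Fintype V] [CommSemiring R] {A B : Matrix V V R}

lemma dotProduct_mulVec_eq_sum_add_sum_compl_of_isSymm [DecidableEq V] (hA : A.IsSymm)
    (x : V → R) (S : Finset V) :
    x ⬝ᵥ A *ᵥ x = ∑ a ∈ S, ∑ b ∈ S, A a b * (x a * x b)
      + ∑ a ∈ Sᶜ, ∑ b ∈ Sᶜ, A a b * (x a * x b)
      + 2 * ∑ a ∈ Sᶜ, x a * ∑ b ∈ S, A a b * x b := by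
  have hsplit : x ⬝ᵥ A *ᵥ x = ∑ a, (∑ b ∈ S, A a b * (x a * x b)
      + ∑ b ∈ Sᶜ, A a b * (x a * x b)) := by
    simp only [sum_add_sum_compl, dotProduct, mulVec, mul_sum, mul_left_comm]
  have hcross : ∑ a ∈ Sᶜ, x a * ∑ b ∈ S, A a b * x b
      = ∑ a ∈ Sᶜ, ∑ b ∈ S, A a b * (x a * x b) := by
    simp only [mul_sum, mul_left_comm]
  have hswap : ∑ a ∈ S, ∑ b ∈ Sᶜ, A a b * (x a * x b)
      = ∑ a ∈ Sᶜ, ∑ b ∈ S, A a b * (x a * x b) := by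
    rw [sum_comm]
    exact sum_congr rfl fun a _ => sum_congr rfl fun b _ => by rw [hA.apply, mul_comm (x b)]
  rw [hsplit, ← sum_add_sum_compl S, sum_add_distrib, sum_add_distrib, hswap, hcross]
  ring

lemma dotProduct_mulVec_le_of_isSymm [PartialOrder R] [IsOrderedRing R] (hA : A.IsSymm)
    (hB : B.IsSymm) {x : V → R} (hx : 0 ≤ x) (S : Finset V)
    (hdiag : ∀ a b, (a ∈ S ↔ b ∈ S) → A a b ≤ B a b)
    (hcross : ∀ a ∉ S, ∑ b ∈ S, A a b * x b ≤ ∑ b ∈ S, B a b * x b) :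
    x ⬝ᵥ A *ᵥ x ≤ x ⬝ᵥ B *ᵥ x := by
  classical
  have hterm (a b : V) (hab : a ∈ S ↔ b ∈ S) : A a b * (x a * x b) ≤ B a b * (x a * x b) :=
    mul_le_mul_of_nonneg_right (hdiag a b hab) (mul_nonneg (hx a) (hx b))
  rw [dotProduct_mulVec_eq_sum_add_sum_compl_of_isSymm hA x S,
    dotProduct_mulVec_eq_sum_add_sum_compl_of_isSymm hB x S]
  refine add_le_add (add_le_add ?_ ?_) (mul_le_mul_of_nonneg_left ?_ zero_le_two)
  · exact sum_le_sum fun a ha => sum_le_sum fun b hb => hterm a b (iff_of_true ha hb)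
  · exact sum_le_sum fun a ha => sum_le_sum fun b hb =>
      hterm a b (iff_of_false (mem_compl.1 ha) (mem_compl.1 hb))
  · exact sum_le_sum fun a ha => mul_le_mul_of_nonneg_left (hcross a (mem_compl.1 ha)) (hx a)

end QuadraticForm

section AdjMatrix

variable {V R : Type*} [Semiring R] [PartialOrder R] {G H : SimpleGraph V}
  [DecidableRel G.Adj] [DecidableRel H.Adj]

lemma adjMatrix_le_adjMatrix_apply [ZeroLEOneClass R] {a b : V} (h : G.Adj a b → H.Adj a b) :
    G.adjMatrix R a b ≤ H.adjMatrix R a b := by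
  simp only [adjMatrix_apply]
  split_ifs with hG hH
  · rfl
  · exact absurd (h hG) hH
  · exact zero_le_one
  · rfl

variable [Fintype V] {x : V → R}

-- At a zero of `x` the eigenvalue equation makes `x` vanish at all neighbours.
lemma pos_of_adjMatrix_mulVec_eq_smul [IsOrderedRing R] (hG : G.Preconnected) (hx : 0 ≤ x)
    (hx₀ : x ≠ 0) {c : R} (hc : G.adjMatrix R *ᵥ x = c • x) (a : V) : 0 < x a := by
  have hadj {a b : V} (hab : G.Adj a b) (ha : x a = 0) : x b = 0 := by
    have hsum : ∑ u ∈ G.neighborFinset a, x u = 0 := by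
      rw [← adjMatrix_mulVec_apply, hc, Pi.smul_apply, ha, smul_zero]
    exact (sum_eq_zero_iff_of_nonneg fun u _ => hx u).1 hsum b ((G.mem_neighborFinset a b).2 hab)
  have hwalk {a b : V} (p : G.Walk a b) : x a = 0 → x b = 0 := by
    induction p with
    | nil => exact id
    | cons hab _ ih => exact fun ha => ih (hadj hab ha)
  refine (hx a).lt_of_ne' fun ha => hx₀ (funext fun b => ?_)
  obtain ⟨p⟩ := hG a b
  exact hwalk p ha

lemma neighborFinset_eq_of_subset_of_mulVec_apply_eq [IsOrderedCancelAddMonoid R]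
    (hx : ∀ b, 0 < x b) {a : V} (hsub : G.neighborFinset a ⊆ H.neighborFinset a)
    (heq : (G.adjMatrix R *ᵥ x) a = (H.adjMatrix R *ᵥ x) a) :
    G.neighborFinset a = H.neighborFinset a := by
  simp only [adjMatrix_mulVec_apply] at heq
  refine hsub.antisymm fun b hbH => by_contra fun hbG => heq.not_lt ?_
  exact sum_lt_sum_of_subset hsub hbH hbG (hx b) fun c _ _ => (hx c).le

end AdjMatrix

lemma exists_equiv_apply_eq_and_mem_iff {V W : Type*} [Finite V] [Finite W]
    (hcard : Nat.card V = Nat.card W) {S : Finset V} {T : Finset W} (hST : #S = #T) {v : V} {w : W}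
    (hv : v ∈ S) (hw : w ∈ T) :
    ∃ e : V ≃ W, e v = w ∧ ∀ a, e a ∈ T ↔ a ∈ S := by
  classical
  obtain ⟨e₀⟩ := Finite.card_eq.1 hcard
  obtain ⟨σ, hσ⟩ := Equiv.Perm.exists_map_finset_eq (S.map e₀.toEmbedding) T (by rwa [card_map])
  have hmem (a : V) : σ (e₀ a) ∈ T ↔ a ∈ S := by simp [← hσ]
  have hswap (b : W) : Equiv.swap (σ (e₀ v)) w b ∈ T ↔ b ∈ T := by
    have hσv : σ (e₀ v) ∈ T := (hmem v).2 hv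
    rw [Equiv.swap_apply_def]
    split_ifs with h₁ h₂
    · exact iff_of_true hw (h₁ ▸ hσv)
    · exact iff_of_true hσv (h₂ ▸ hw)
    · rfl
  exact ⟨(e₀.trans σ).trans (Equiv.swap (σ (e₀ v)) w), Equiv.swap_apply_left _ _,
    fun a => (hswap _).trans (hmem a)⟩

section SpecRad

variable {V W : Type}

lemma specRad_eq_sSup_spectrum_adjMatrix [Fintype V] [DecidableEq V] (G : SimpleGraph V)
    [DecidableRel G.Adj] :
    specRad G = sSup (spectrum ℝ (G.adjMatrix ℝ)) := by
  unfold specRad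
  congr!

lemma isGreatest_specRad [Fintype V] [DecidableEq V] [Nonempty V] (G : SimpleGraph V)
    [DecidableRel G.Adj] :
    IsGreatest (spectrum ℝ (G.adjMatrix ℝ)) (specRad G) := by
  rw [specRad_eq_sSup_spectrum_adjMatrix]
  exact isGreatest_sSup_spectrum (G.isHermitian_adjMatrix ℝ)

lemma specRad_congr [Finite V] [Finite W] {G : SimpleGraph V} {H : SimpleGraph W}
    (e : G ≃g H) : specRad G = specRad H := by
  classical
  have := Fintype.ofFinite V
  have := Fintype.ofFinite W
  rw [specRad_eq_sSup_spectrum_adjMatrix, specRad_eq_sSup_spectrum_adjMatrix,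
    ← e.reindex_adjMatrix ℝ, ← coe_reindexAlgEquiv ℝ ℝ, AlgEquiv.spectrum_eq]

end SpecRad

/-- The clique on `S ∪ {v}` and the clique on `Sᶜ ∪ {v}`, glued along the vertex `v`. For `v ∈ S`
this is `L_{n,k}` up to isomorphism, with `n` the number of all vertices and `n - k` that of `S`. -/
def gluedCliques {V : Type*} (v : V) (S : Set V) : SimpleGraph V where
  Adj a b := a ≠ b ∧ (a = v ∨ b = v ∨ (a ∈ S ↔ b ∈ S))
  symm := ⟨by intro a b h; tauto⟩
  loopless := ⟨fun _ h => h.1 rfl⟩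

section GluedCliques

variable {V W : Type*} {v : V} {w : W}

lemma gluedCliques_adj {S : Set V} {a b : V} :
    (gluedCliques v S).Adj a b ↔ a ≠ b ∧ (a = v ∨ b = v ∨ (a ∈ S ↔ b ∈ S)) :=
  Iff.rfl

lemma preconnected_gluedCliques (v : V) (S : Set V) : (gluedCliques v S).Preconnected := by
  have hv (a : V) : (gluedCliques v S).Reachable v a := by
    obtain rfl | hav := eq_or_ne v a
    · rfl
    · exact Adj.reachable ⟨hav, .inl rfl⟩
  exact fun a b => (hv a).symm.trans (hv b)

/-- Transport of `gluedCliques v S` along a bijection of the vertices. The sets are compared through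
membership rather than images. -/
def gluedCliquesIso {S : Set V} {T : Set W} (e : V ≃ W) (hv : e v = w)
    (hS : ∀ a, e a ∈ T ↔ a ∈ S) : gluedCliques v S ≃g gluedCliques w T where
  toEquiv := e
  map_rel_iff' := by simp [gluedCliques_adj, ← hv, hS]

lemma lgraph_eq_gluedCliques {n k : ℕ} (hkn : k < n) :
    Lgraph n k = gluedCliques ⟨0, hkn.pos⟩ {i | i.val < n - k} := by
  ext a b
  simp only [Lgraph, fromRel_adj, gluedCliques_adj, Fin.ext_iff, Set.mem_ofPred_eq]
  omega

lemma nonempty_gluedCliques_iso_lgraph [Finite V] {n k : ℕ} (hkn : k < n) (hV : Nat.card V = n)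
    {S : Finset V} (hS : #S = n - k) (hv : v ∈ S) :
    Nonempty (gluedCliques v (S : Set V) ≃g Lgraph n k) := by
  let T : Finset (Fin n) := {i | i.val < n - k}
  have hT : #S = #T := by rw [hS, Fin.card_filter_val_lt, min_eq_right (n.sub_le k)]
  have h0 : ⟨0, hkn.pos⟩ ∈ T := by simpa [T] using hkn
  obtain ⟨e, he, hmem⟩ :=
    exists_equiv_apply_eq_and_mem_iff (hV.trans (Nat.card_fin n).symm) hT hv h0
  rw [lgraph_eq_gluedCliques hkn]
  exact ⟨gluedCliquesIso e he fun a => by simpa [T] using hmem a⟩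

end GluedCliques

section Comparison

variable {V R : Type*} [Fintype V] {G : SimpleGraph V} {S : Finset V} {v : V} {x : V → R}

open scoped Classical in
lemma dotProduct_adjMatrix_mulVec_le_gluedCliques [CommSemiring R] [PartialOrder R]
    [IsOrderedRing R] (hG : ∀ u ∉ S, (G.neighborSet u ∩ S).Subsingleton) (hv : v ∈ S) (hx : 0 ≤ x)
    (hmax : ∀ b ∈ S, x b ≤ x v) :
    x ⬝ᵥ G.adjMatrix R *ᵥ x ≤ x ⬝ᵥ (gluedCliques v (S : Set V)).adjMatrix R *ᵥ x := by
  refine dotProduct_mulVec_le_of_isSymm G.isSymm_adjMatrix (isSymm_adjMatrix _) hx S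
    (fun a b hab => adjMatrix_le_adjMatrix_apply fun h => ⟨h.ne, .inr (.inr hab)⟩) fun u hu => ?_
  have hGu : #{b ∈ S | G.Adj u b} ≤ 1 := card_le_one.2 fun a ha b hb =>
    hG u hu (mem_filter.1 ha).symm (mem_filter.1 hb).symm
  have hLu : ∀ b ∈ S, (gluedCliques v (S : Set V)).Adj u b ↔ b = v := by
    intro b hb
    have huv : u ≠ v := fun h => hu (h ▸ hv)
    have hub : u ≠ b := fun h => hu (h ▸ hb)
    simp [gluedCliques_adj, huv, hub, hu, hb]
  calc ∑ b ∈ S, G.adjMatrix R u b * x b = ∑ b ∈ S with G.Adj u b, x b := by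
        simp [adjMatrix_apply, sum_filter]
    _ ≤ #{b ∈ S | G.Adj u b} • x v :=
        sum_le_card_nsmul _ _ _ fun b hb => hmax b (mem_filter.1 hb).1
    _ ≤ 1 • x v := nsmul_le_nsmul_left (hx v) hGu
    _ = ∑ b ∈ S, (gluedCliques v (S : Set V)).adjMatrix R u b * x b := by
        rw [one_nsmul, ← sum_ite_eq_of_mem' S v x hv]
        exact sum_congr rfl fun b hb => by simp [adjMatrix_apply, hLu b hb]

open scoped Classical in
lemma eq_gluedCliques_of_adjMatrix_mulVec_eq [Semiring R] [PartialOrder R]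
    [IsOrderedCancelAddMonoid R]
    (hG : ∀ u ∉ S, (G.neighborSet u ∩ S).Subsingleton) (hv : v ∈ S) (hx : ∀ a, 0 < x a)
    (heq : G.adjMatrix R *ᵥ x = (gluedCliques v (S : Set V)).adjMatrix R *ᵥ x) :
    G = gluedCliques v (S : Set V) := by
  have hrow (a : V) (hsub : ∀ b, G.Adj a b → (gluedCliques v (S : Set V)).Adj a b) (b : V) :
      G.Adj a b ↔ (gluedCliques v (S : Set V)).Adj a b := by
    have hnbr := neighborFinset_eq_of_subset_of_mulVec_apply_eq hx
      (fun c hc => by simpa using hsub c (by simpa using hc)) (congrFun heq a)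
    simpa using Finset.ext_iff.1 hnbr b
  have hGv (b : V) (hb : v ≠ b) : G.Adj v b :=
    (hrow v (fun c hc => ⟨hc.ne, .inl rfl⟩) b).2 ⟨hb, .inl rfl⟩
  have hcross {u b : V} (hu : u ∉ S) (hb : b ∈ S) (hub : G.Adj u b) : b = v :=
    hG u hu ⟨hub, hb⟩ ⟨(hGv u fun h => hu (h ▸ hv)).symm, hv⟩
  have hle {a b : V} (hab : G.Adj a b) : (gluedCliques v (S : Set V)).Adj a b := by
    refine ⟨hab.ne, ?_⟩
    by_cases ha : a ∈ S <;> by_cases hb : b ∈ S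
    · exact .inr (.inr (iff_of_true ha hb))
    · exact .inl (hcross hb ha hab.symm)
    · exact .inr (.inl (hcross ha hb hab))
    · exact .inr (.inr (iff_of_false ha hb))
  ext a b
  exact hrow a (fun _ => hle) b

end Comparison

lemma exists_mem_eq_gluedCliques_of_specRad_le {V : Type} [Finite V] {G : SimpleGraph V}
    {S : Finset V} (hS : S.Nonempty) (hG : ∀ u ∉ S, (G.neighborSet u ∩ S).Subsingleton) :
    ∃ v ∈ S, specRad (gluedCliques v (S : Set V)) ≤ specRad G →
      G = gluedCliques v (S : Set V) := by
  classical
  have := Fintype.ofFinite V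
  have : Nonempty V := hS.to_type
  obtain ⟨x, hx, hx₀, hGx⟩ := exists_nonneg_eigenvector_of_isGreatest_spectrum
    (G.isHermitian_adjMatrix ℝ) (fun a b => by rw [adjMatrix_apply]; positivity)
    (isGreatest_specRad G)
  obtain ⟨v, hv, hmax⟩ := S.exists_max_image x hS
  refine ⟨v, hv, fun hle => ?_⟩
  have hLx : (gluedCliques v (S : Set V)).adjMatrix ℝ *ᵥ x = specRad G • x := by
    refine mulVec_eq_smul_of_mul_dotProduct_self_le (isHermitian_adjMatrix ℝ _)
      (upperBounds_mono_mem hle (isGreatest_specRad _).2) ?_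
    rw [← smul_eq_mul, ← dotProduct_smul, ← hGx]
    exact dotProduct_adjMatrix_mulVec_le_gluedCliques hG hv hx hmax
  exact eq_gluedCliques_of_adjMatrix_mulVec_eq hG hv
    (pos_of_adjMatrix_mulVec_eq_smul (preconnected_gluedCliques v _) hx hx₀ hLx)
    (hGx.trans hLx.symm)

lemma exists_card_eq_and_neighborSet_inter_subsingleton {n k : ℕ} {G F : SimpleGraph (Fin n)}
    (hF : MemF n k F) (hGF : IsSubgraphOf G F) :
    ∃ S : Finset (Fin n), #S = n - k ∧ ∀ u ∉ S, (G.neighborSet u ∩ S).Subsingleton := by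
  obtain ⟨K, hK, -, -, hattach, -⟩ := hF
  obtain ⟨f, hf⟩ := hGF
  have hsurj : Function.Surjective f := Finite.surjective_of_injective hf
  refine ⟨K.preimage f hf.injOn, ?_, fun u hu a ha b hb => hf ?_⟩
  · rw [card_preimage, filter_true_of_mem fun y _ => Set.mem_range.2 (hsurj y), hK]
  · exact (hattach ⟨f u, by simpa using hu⟩).unique ⟨mem_preimage.1 ha.2, f.map_adj ha.1⟩
      ⟨mem_preimage.1 hb.2, f.map_adj hb.1⟩

theorem extremal_specRad_general {V : Type} [Finite V] {n k : ℕ} (hkn : k < n)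
    (hV : Nat.card V = n) (G : SimpleGraph V)
    (hG : ∃ S : Finset V, #S = n - k ∧ ∀ u ∉ S, (G.neighborSet u ∩ S).Subsingleton)
    (hr : specRad (Lgraph n k) ≤ specRad G) :
    Nonempty (G ≃g Lgraph n k) := by
  obtain ⟨S, hS, hG⟩ := hG
  have hne : S.Nonempty := card_pos.1 (hS ▸ Nat.sub_pos_of_lt hkn)
  obtain ⟨v, hv, heq⟩ := exists_mem_eq_gluedCliques_of_specRad_le hne hG
  obtain ⟨e⟩ := nonempty_gluedCliques_iso_lgraph hkn hV hS hv
  rw [heq ((specRad_congr e).trans_le hr)]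
  exact ⟨e⟩

/-- Lemma 3.5 (a): extremal graph in the family `F_{n,k}` for the spectral radius. -/
theorem extremal_specRad (n k : ℕ) (hn : 2 * k + 1 ≤ n) (G : SimpleGraph (Fin n))
    (hF : ∃ F : SimpleGraph (Fin n), MemF n k F ∧ IsSubgraphOf G F)
    (hr : specRad (Lgraph n k) ≤ specRad G) :
    Nonempty (G ≃g Lgraph n k) := by
  obtain ⟨F, hF, hGF⟩ := hF
  exact extremal_specRad_general (by omega) (Nat.card_fin n) G
    (exists_card_eq_and_neighborSet_inter_subsingleton hF hGF) hr
end

section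
/- Let n and k be integers with n ≥ 2k+1 ≥ 1, and let G be a simple graph of order n that is a subgraph of some member of the family F_{n,k}. If q(G) ≥ q(L_{n,k}), then G is isomorphic to L_{n,k}. -/
open SimpleGraph

/-!
Place `G` inside a member of `F_{n,k}` with core clique `K`, and let `x ≥ 0` maximise the quadratic
form `∑_{uv ∈ E(G)} (x u + x v)²` of the signless Laplacian of `G` relative to `∑ (x u)²`. Add to
`G` all missing edges inside `K`, outside `K`, and from the vertices outside `K` to their anchors in
`K`; then move every anchor to a vertex of `K` where `x` is largest. Neither change decreases the
form, and the result is a copy of `L_{n,k}`. As `q(G) ≥ q(L_{n,k})`, both changes leave the form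
unchanged and `x` is a Perron vector of the connected graph `L_{n,k}`, so `x` is positive. Hence no
edge was added: the vertices of `G` outside `K` are pairwise adjacent, so they already share one
anchor.
-/

open Finset Matrix

section Hermitian

variable {ι : Type*} [Fintype ι] [DecidableEq ι] {A : Matrix ι ι ℝ}

lemma posSemidef_sSup_spectrum_smul_one_sub (hA : A.IsHermitian) :
    (sSup (spectrum ℝ A) • (1 : Matrix ι ι ℝ) - A).PosSemidef := by
  rw [posSemidef_iff_isHermitian_and_spectrum_nonneg]
  refine ⟨(isHermitian_one.smul (IsSelfAdjoint.all _)).sub hA, ?_⟩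
  rw [← Algebra.algebraMap_eq_smul_one, ← spectrum.singleton_sub_eq]
  rintro _ ⟨_, rfl, μ, hμ, rfl⟩
  exact sub_nonneg.2 (le_csSup A.finite_real_spectrum.bddAbove hμ)

lemma dotProduct_smul_one_sub_mulVec (μ : ℝ) (A : Matrix ι ι ℝ) (x : ι → ℝ) :
    x ⬝ᵥ (μ • (1 : Matrix ι ι ℝ) - A) *ᵥ x = μ * (x ⬝ᵥ x) - x ⬝ᵥ A *ᵥ x := by
  rw [sub_mulVec, smul_mulVec, one_mulVec, dotProduct_sub, dotProduct_smul, smul_eq_mul]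

lemma dotProduct_mulVec_le_sSup_spectrum_mul (hA : A.IsHermitian) (x : ι → ℝ) :
    x ⬝ᵥ A *ᵥ x ≤ sSup (spectrum ℝ A) * (x ⬝ᵥ x) := by
  have h := (posSemidef_sSup_spectrum_smul_one_sub hA).dotProduct_mulVec_nonneg x
  rwa [star_trivial, dotProduct_smul_one_sub_mulVec, sub_nonneg] at h

lemma mulVec_eq_sSup_spectrum_smul (hA : A.IsHermitian) {x : ι → ℝ}
    (hx : x ⬝ᵥ A *ᵥ x = sSup (spectrum ℝ A) * (x ⬝ᵥ x)) :
    A *ᵥ x = sSup (spectrum ℝ A) • x := by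
  have h := ((posSemidef_sSup_spectrum_smul_one_sub hA).dotProduct_mulVec_zero_iff x).1
  rw [star_trivial, dotProduct_smul_one_sub_mulVec, hx, sub_self, sub_mulVec,
    smul_mulVec, one_mulVec, sub_eq_zero] at h
  exact (h rfl).symm

lemma exists_ne_zero_mulVec_eq_sSup_spectrum_smul [Nonempty ι] (hA : A.IsHermitian) :
    ∃ x ≠ 0, A *ᵥ x = sSup (spectrum ℝ A) • x := by
  have hne : (spectrum ℝ A).Nonempty := by
    rw [hA.spectrum_real_eq_range_eigenvalues]
    exact Set.range_nonempty _
  have hmem := hne.csSup_mem A.finite_real_spectrum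
  rw [← spectrum_toLin', ← Module.End.hasEigenvalue_iff_mem_spectrum] at hmem
  obtain ⟨x, hx⟩ := hmem.exists_hasEigenvector
  rw [spectrum_toLin'] at hx
  exact ⟨x, hx.2, by simpa only [toLin'_apply] using hx.apply_eq_smul⟩

end Hermitian

section EdgeForm

variable {V : Type*} {G H : SimpleGraph V} [Fintype G.edgeSet]

/-- The quadratic form `∑_{uv ∈ E(G)} (x u + x v)²` of the signless Laplacian of `G`. -/
def edgeForm (G : SimpleGraph V) [Fintype G.edgeSet] (x : V → ℝ) : ℝ :=
  ∑ e ∈ G.edgeFinset, (e.map x).add ^ 2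

lemma edgeForm_mono [Fintype H.edgeSet] (hGH : G ≤ H) (x : V → ℝ) :
    edgeForm G x ≤ edgeForm H x :=
  sum_le_sum_of_subset_of_nonneg (edgeFinset_mono hGH) fun _ _ _ ↦ sq_nonneg _

lemma edgeForm_strictMono [Fintype H.edgeSet] (hGH : G < H) {x : V → ℝ}
    (hx : ∀ u, 0 < x u) : edgeForm G x < edgeForm H x := by
  obtain ⟨e, heH, heG⟩ := exists_of_ssubset (edgeFinset_strict_mono hGH)
  refine sum_lt_sum_of_subset (edgeFinset_mono hGH.le) heH heG ?_ fun _ _ _ ↦ sq_nonneg _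
  induction e with | _ u v
  exact pow_pos (add_pos (hx u) (hx v)) 2

lemma edgeForm_le_edgeForm_abs (x : V → ℝ) : edgeForm G x ≤ edgeForm G |x| := by
  refine sum_le_sum fun e _ ↦ ?_
  induction e with | _ u v
  exact sq_le_sq.2 ((abs_add_le (x u) (x v)).trans (le_abs_self _))

lemma edgeForm_sup [Fintype H.edgeSet] [Fintype (G ⊔ H).edgeSet] (hGH : Disjoint G H)
    (x : V → ℝ) : edgeForm (G ⊔ H) x = edgeForm G x + edgeForm H x := by
  classical
  rw [edgeForm, edgeFinset_sup, sum_union (disjoint_edgeFinset.2 hGH), edgeForm, edgeForm]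

end EdgeForm

section SignlessLaplacian

variable {V : Type*} [Fintype V] [DecidableEq V] {G : SimpleGraph V} [DecidableRel G.Adj]

/-- The signless Laplacian matrix `D(G) + A(G)`, the counterpart of `SimpleGraph.lapMatrix`. -/
def signlessLapMatrix (G : SimpleGraph V) [DecidableRel G.Adj] : Matrix V V ℝ :=
  G.degMatrix ℝ + G.adjMatrix ℝ

lemma isHermitian_signlessLapMatrix (G : SimpleGraph V) [DecidableRel G.Adj] :
    (signlessLapMatrix G).IsHermitian :=
  (G.isHermitian_degMatrix ℝ).add (G.isHermitian_adjMatrix ℝ)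

lemma signlessLapMatrix_mulVec_apply (x : V → ℝ) (u : V) :
    (signlessLapMatrix G *ᵥ x) u = G.degree u * x u + ∑ v ∈ G.neighborFinset u, x v := by
  rw [signlessLapMatrix, add_mulVec, Pi.add_apply, degMatrix_mulVec_apply, adjMatrix_mulVec_apply]

lemma signlessLapMatrix_eq_incMatrix_mul_transpose :
    signlessLapMatrix G = G.incMatrix ℝ * (G.incMatrix ℝ)ᵀ := by
  ext u v
  rw [incMatrix_mul_transpose, signlessLapMatrix, Matrix.add_apply, degMatrix, adjMatrix_apply]
  rcases eq_or_ne u v with rfl | huv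
  · simp
  · simp [huv]

lemma incMatrix_transpose_mulVec_apply [Fintype G.edgeSet] (x : V → ℝ) (e : Sym2 V) :
    ((G.incMatrix ℝ)ᵀ *ᵥ x) e = if e ∈ G.edgeFinset then (e.map x).add else 0 := by
  induction e with | _ u v
  by_cases huv : G.Adj u v
  · have hinc (w : V) : s(u, v) ∈ G.incidenceSet w ↔ w ∈ ({u, v} : Finset V) := by
      simp [incidenceSet, huv]
    simp [mulVec, dotProduct, incMatrix_apply', hinc, huv, sum_pair huv.ne, -mem_insert]
  · simp [mulVec, dotProduct, incMatrix_apply', incidenceSet, huv]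

lemma edgeForm_eq_dotProduct_mulVec [Fintype G.edgeSet] (x : V → ℝ) :
    edgeForm G x = x ⬝ᵥ signlessLapMatrix G *ᵥ x := by
  rw [signlessLapMatrix_eq_incMatrix_mul_transpose, ← mulVec_mulVec, dotProduct_mulVec,
    ← mulVec_transpose]
  simp only [edgeForm, dotProduct, incMatrix_transpose_mulVec_apply, mul_ite, mul_zero, ite_mul,
    zero_mul, sum_ite_mem, univ_inter, sq, ← ite_and, and_self]

lemma eq_zero_of_adj_of_mulVec_eq_smul {x : V → ℝ} (hx : 0 ≤ x) {μ : ℝ}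
    (hμ : signlessLapMatrix G *ᵥ x = μ • x) {u v : V} (huv : G.Adj u v) (hu : x u = 0) :
    x v = 0 := by
  have h := congrFun hμ u
  rw [signlessLapMatrix_mulVec_apply, Pi.smul_apply, hu, smul_zero, mul_zero, zero_add,
    sum_eq_zero_iff_of_nonneg fun w _ ↦ hx w] at h
  exact h v ((G.mem_neighborFinset u v).2 huv)

lemma pos_of_preconnected_of_mulVec_eq_smul (hG : G.Preconnected)
    {x : V → ℝ} (hx : 0 ≤ x) (hx₀ : x ≠ 0) {μ : ℝ} (hμ : signlessLapMatrix G *ᵥ x = μ • x)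
    (u : V) : 0 < x u := by
  refine (hx u).lt_of_ne' fun hu ↦ hx₀ (funext fun v ↦ ?_)
  obtain ⟨p⟩ := hG u v
  induction p with
  | nil => exact hu
  | cons huv _ ih => exact ih (eq_zero_of_adj_of_mulVec_eq_smul hx hμ huv hu)

end SignlessLaplacian

section SpectralRadius

variable {V : Type} [Fintype V] {G : SimpleGraph V}

lemma qSpecRad_eq_sSup_spectrum [DecidableEq V] (G : SimpleGraph V) [DecidableRel G.Adj] :
    qSpecRad G = sSup (spectrum ℝ (signlessLapMatrix G)) := by
  have hdeg : (fun v ↦ (degCount G v : ℝ)) = fun v ↦ (G.degree v : ℝ) := by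
    funext v
    rw [degCount, Nat.card_eq_fintype_card, card_neighborSet_eq_degree]
  rw [signlessLapMatrix, degMatrix, ← hdeg, qSpecRad]
  congr!

lemma qSpecRad_congr {V W : Type} [Finite V] [Finite W] {G : SimpleGraph V} {H : SimpleGraph W}
    (e : G ≃g H) : qSpecRad G = qSpecRad H := by
  classical
  cases nonempty_fintype V
  cases nonempty_fintype W
  have hQ : reindexAlgEquiv ℝ ℝ e.toEquiv (signlessLapMatrix G) = signlessLapMatrix H := by
    ext u v
    have hdeg : G.degree (e.toEquiv.symm u) = H.degree u := e.symm.degree_eq u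
    have hadj : G.Adj (e.toEquiv.symm u) (e.toEquiv.symm v) ↔ H.Adj u v := e.symm.map_adj_iff
    simp [signlessLapMatrix, degMatrix, diagonal_apply, hdeg, hadj]
  rw [qSpecRad_eq_sSup_spectrum, qSpecRad_eq_sSup_spectrum, ← hQ, AlgEquiv.spectrum_eq]

lemma edgeForm_le_qSpecRad_mul [Fintype G.edgeSet] (x : V → ℝ) :
    edgeForm G x ≤ qSpecRad G * (x ⬝ᵥ x) := by
  classical
  rw [edgeForm_eq_dotProduct_mulVec, qSpecRad_eq_sSup_spectrum]
  exact dotProduct_mulVec_le_sSup_spectrum_mul (isHermitian_signlessLapMatrix G) x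

lemma exists_nonneg_edgeForm_eq_qSpecRad_mul [Nonempty V] (G : SimpleGraph V) [Fintype G.edgeSet] :
    ∃ x : V → ℝ, 0 ≤ x ∧ x ≠ 0 ∧ edgeForm G x = qSpecRad G * (x ⬝ᵥ x) := by
  classical
  obtain ⟨x, hx₀, hx⟩ :=
    exists_ne_zero_mulVec_eq_sSup_spectrum_smul (isHermitian_signlessLapMatrix G)
  refine ⟨|x|, abs_nonneg x, fun h ↦ hx₀ ?_, (edgeForm_le_qSpecRad_mul |x|).antisymm ?_⟩
  · exact funext fun i ↦ abs_eq_zero.1 (congrFun h i)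
  calc qSpecRad G * (|x| ⬝ᵥ |x|) = x ⬝ᵥ signlessLapMatrix G *ᵥ x := by
        simp [hx, qSpecRad_eq_sSup_spectrum G, dotProduct, mul_sum, mul_left_comm]
    _ = edgeForm G x := (edgeForm_eq_dotProduct_mulVec x).symm
    _ ≤ edgeForm G |x| := edgeForm_le_edgeForm_abs x

lemma pos_of_edgeForm_eq_qSpecRad_mul [Fintype G.edgeSet] (hG : G.Preconnected) {x : V → ℝ}
    (hx : 0 ≤ x) (hx₀ : x ≠ 0) (hq : edgeForm G x = qSpecRad G * (x ⬝ᵥ x)) (u : V) :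
    0 < x u := by
  classical
  rw [edgeForm_eq_dotProduct_mulVec, qSpecRad_eq_sSup_spectrum] at hq
  exact pos_of_preconnected_of_mulVec_eq_smul hG hx hx₀
    (mulVec_eq_sSup_spectrum_smul (isHermitian_signlessLapMatrix G) hq) u

end SpectralRadius

section AnchoredCliques

variable {V : Type*}

/-- The disjoint union of the complete graphs on `K` and on its complement. -/
def cliquePair (K : Finset V) : SimpleGraph V where
  Adj u v := u ≠ v ∧ (u ∈ K ↔ v ∈ K)
  symm := ⟨fun _ _ h ↦ ⟨h.1.symm, h.2.symm⟩⟩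
  loopless := ⟨fun _ h ↦ h.1 rfl⟩

/-- The graph joining each vertex `u` outside `K` to its anchor `c u`. -/
def spokes (K : Finset V) (c : V → V) : SimpleGraph V :=
  .fromRel fun u v ↦ u ∉ K ∧ v = c u

/-- The cliques on `K` and on its complement, with each vertex `u` outside `K` joined to its anchor
`c u`. For `c` constant with value `w ∈ K`, these are two cliques with only the vertex `w` in
common, that is, the graph `L_{n,k}`. -/
def anchoredCliques (K : Finset V) (c : V → V) : SimpleGraph V :=
  cliquePair K ⊔ spokes K c

/-- The property of a member of `F_{n,k}` with core `K` that passes to its subgraphs: a vertex `u`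
outside `K` has no neighbour in `K` other than its anchor `c u`, and adjacent vertices outside `K`
share their anchor. -/
structure IsAnchored (G : SimpleGraph V) (K : Finset V) (c : V → V) : Prop where
  anchor_mem : ∀ u ∉ K, c u ∈ K
  eq_anchor : ∀ u ∉ K, ∀ v ∈ K, G.Adj u v → v = c u
  anchor_eq : ∀ u ∉ K, ∀ v ∉ K, G.Adj u v → c u = c v

variable {K : Finset V} {c : V → V} {G H : SimpleGraph V} {w : V}

lemma disjoint_cliquePair_spokes (hc : ∀ u ∉ K, c u ∈ K) :
    Disjoint (cliquePair K) (spokes K c) := by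
  rw [SimpleGraph.disjoint_left]
  rintro u v ⟨-, huv⟩ ⟨-, ⟨hu, rfl⟩ | ⟨hv, rfl⟩⟩
  · exact hu (huv.2 (hc u hu))
  · exact hv (huv.1 (hc v hv))

lemma adj_anchor (hc : ∀ u ∉ K, c u ∈ K) {u : V} (hu : u ∉ K) : (spokes K c).Adj u (c u) :=
  ⟨fun h ↦ hu (h ▸ hc u hu), .inl ⟨hu, rfl⟩⟩

lemma anchoredCliques_congr {d : V → V} (h : ∀ u ∉ K, c u = d u) :
    anchoredCliques K c = anchoredCliques K d := by
  have hspokes : spokes K c = spokes K d := by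
    ext u v
    have hanchor (u v : V) : u ∉ K ∧ v = c u ↔ u ∉ K ∧ v = d u :=
      and_congr_right fun hu ↦ by rw [h u hu]
    simp only [spokes, fromRel_adj, hanchor]
  rw [anchoredCliques, hspokes, anchoredCliques]

lemma preconnected_anchoredCliques_const (hw : w ∈ K) :
    (anchoredCliques K fun _ ↦ w).Preconnected := by
  have hreach (u : V) : (anchoredCliques K fun _ ↦ w).Reachable u w := by
    rcases eq_or_ne u w with rfl | huw
    · rfl
    · refine Adj.reachable ?_
      by_cases hu : u ∈ K
      · exact .inl ⟨huw, iff_of_true hu hw⟩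
      · exact .inr (adj_anchor (fun _ _ ↦ hw) hu)
  exact fun u v ↦ (hreach u).trans (hreach v).symm

lemma edgeForm_spokes [Fintype V] [DecidableEq V] [Fintype (spokes K c).edgeSet]
    (hc : ∀ u ∉ K, c u ∈ K) (x : V → ℝ) :
    edgeForm (spokes K c) x = ∑ u ∈ Kᶜ, (x u + x (c u)) ^ 2 := by
  have hedges : (spokes K c).edgeFinset = Kᶜ.image fun u ↦ s(u, c u) := by
    ext e
    induction e with | _ u v
    simp only [mem_edgeFinset, mem_edgeSet, mem_image, mem_compl]
    constructor
    · rintro ⟨-, ⟨hu, rfl⟩ | ⟨hv, rfl⟩⟩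
      exacts [⟨u, hu, rfl⟩, ⟨v, hv, Sym2.eq_swap⟩]
    · rintro ⟨z, hz, h⟩
      rw [← mem_edgeSet, ← h]
      exact adj_anchor hc hz
  have hinj : Set.InjOn (fun u ↦ s(u, c u)) (Kᶜ : Finset V) := by
    intro u hu v hv h
    rcases Sym2.eq_iff.1 h with ⟨huv, -⟩ | ⟨rfl, -⟩
    · exact huv
    · exact absurd (hc v (mem_compl.1 hv)) (mem_compl.1 hu)
  rw [edgeForm, hedges, sum_image hinj]
  rfl

lemma edgeForm_anchoredCliques [Fintype V] [DecidableEq V]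
    [Fintype (anchoredCliques K c).edgeSet] [Fintype (cliquePair K).edgeSet]
    (hc : ∀ u ∉ K, c u ∈ K) (x : V → ℝ) :
    edgeForm (anchoredCliques K c) x =
      edgeForm (cliquePair K) x + ∑ u ∈ Kᶜ, (x u + x (c u)) ^ 2 := by
  classical
  rw [← edgeForm_spokes hc]
  convert! edgeForm_sup (disjoint_cliquePair_spokes hc) x

lemma edgeForm_anchoredCliques_le_const [Finite V] [Fintype (anchoredCliques K c).edgeSet]
    [Fintype (anchoredCliques K fun _ ↦ w).edgeSet] (hc : ∀ u ∉ K, c u ∈ K) (hw : w ∈ K)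
    {x : V → ℝ} (hx : 0 ≤ x) (hmax : ∀ v ∈ K, x v ≤ x w) :
    edgeForm (anchoredCliques K c) x ≤ edgeForm (anchoredCliques K fun _ ↦ w) x := by
  classical
  cases nonempty_fintype V
  rw [edgeForm_anchoredCliques hc, edgeForm_anchoredCliques fun _ _ ↦ hw]
  gcongr with u hu
  · exact add_nonneg (hx u) (hx (c u))
  · exact hmax _ (hc u (mem_compl.1 hu))

namespace IsAnchored

lemma mono (hH : IsAnchored H K c) (hGH : G ≤ H) : IsAnchored G K c where
  anchor_mem := hH.anchor_mem
  eq_anchor u hu v hv huv := hH.eq_anchor u hu v hv (hGH huv)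
  anchor_eq u hu v hv huv := hH.anchor_eq u hu v hv (hGH huv)

lemma le_anchoredCliques (hG : IsAnchored G K c) : G ≤ anchoredCliques K c := by
  intro u v huv
  by_cases hu : u ∈ K <;> by_cases hv : v ∈ K
  · exact .inl ⟨huv.ne, iff_of_true hu hv⟩
  · exact .inr ⟨huv.ne, .inr ⟨hv, hG.eq_anchor v hv u hu huv.symm⟩⟩
  · exact .inr ⟨huv.ne, .inl ⟨hu, hG.eq_anchor u hu v hv huv⟩⟩
  · exact .inl ⟨huv.ne, iff_of_false hu hv⟩

lemma exists_anchoredCliques_eq_const (hc : IsAnchored (anchoredCliques K c) K c)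
    (hK : K.Nonempty) : ∃ w ∈ K, anchoredCliques K c = anchoredCliques K fun _ ↦ w := by
  by_cases hout : ∃ u, u ∉ K
  · obtain ⟨u, hu⟩ := hout
    refine ⟨c u, hc.anchor_mem u hu, anchoredCliques_congr fun v hv ↦ ?_⟩
    rcases eq_or_ne v u with rfl | hvu
    · rfl
    · exact hc.anchor_eq v hv u hu (.inl ⟨hvu, iff_of_false hv hu⟩)
  · obtain ⟨w, hw⟩ := hK
    exact ⟨w, hw, anchoredCliques_congr fun u hu ↦ absurd ⟨u, hu⟩ hout⟩

theorem exists_eq_anchoredCliques_const {V : Type} [Finite V] {G : SimpleGraph V} {K : Finset V}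
    {c : V → V} (hG : IsAnchored G K c) (hK : K.Nonempty)
    (hq : ∀ w ∈ K, qSpecRad (anchoredCliques K fun _ ↦ w) ≤ qSpecRad G) :
    ∃ w ∈ K, G = anchoredCliques K fun _ ↦ w := by
  classical
  cases nonempty_fintype V
  have : Nonempty V := hK.nonempty
  obtain ⟨x, hx, hx₀, hGx⟩ := exists_nonneg_edgeForm_eq_qSpecRad_mul G
  obtain ⟨w, hw, hmax⟩ := K.exists_max_image x hK
  set L := anchoredCliques K fun _ ↦ w
  have hGc : edgeForm G x ≤ edgeForm (anchoredCliques K c) x :=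
    edgeForm_mono hG.le_anchoredCliques x
  have hcL : edgeForm (anchoredCliques K c) x ≤ edgeForm L x :=
    edgeForm_anchoredCliques_le_const hG.anchor_mem hw hx hmax
  have hLq : edgeForm L x ≤ qSpecRad L * (x ⬝ᵥ x) := edgeForm_le_qSpecRad_mul x
  have hqG : qSpecRad L * (x ⬝ᵥ x) ≤ edgeForm G x :=
    hGx ▸ mul_le_mul_of_nonneg_right (hq w hw) (sum_nonneg fun u _ ↦ mul_self_nonneg (x u))
  have hpos : ∀ u, 0 < x u :=
    pos_of_edgeForm_eq_qSpecRad_mul (preconnected_anchoredCliques_const hw) hx hx₀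
      (hLq.antisymm (hqG.trans (hGc.trans hcL)))
  have hGeq : G = anchoredCliques K c := hG.le_anchoredCliques.eq_of_not_lt fun hlt ↦
    (edgeForm_strictMono hlt hpos).not_ge (hcL.trans (hLq.trans hqG))
  rw [hGeq] at hG ⊢
  exact hG.exists_anchoredCliques_eq_const hK

end IsAnchored

end AnchoredCliques

lemma exists_perm_apply_eq_of_card_eq {V : Type*} [Finite V] {s t : Finset V} {a b : V}
    (hst : #s = #t) (ha : a ∈ s) (hb : b ∈ t) :
    ∃ e : Equiv.Perm V, e a = b ∧ ∀ u, e u ∈ t ↔ u ∈ s := by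
  classical
  let f : s ≃ t := (equivOfCardEq hst).trans (Equiv.swap (equivOfCardEq hst ⟨a, ha⟩) ⟨b, hb⟩)
  refine ⟨f.extendSubtype, ?_, fun u ↦ ⟨?_, f.extendSubtype_mem u⟩⟩
  · simp [f, f.extendSubtype_apply_of_mem a ha]
  · exact not_imp_not.1 (f.extendSubtype_not_mem u)

lemma nonempty_iso_anchoredCliques_const {V : Type*} [Finite V] {s t : Finset V} {a b : V}
    (hst : #s = #t) (ha : a ∈ s) (hb : b ∈ t) :
    Nonempty ((anchoredCliques s fun _ ↦ a) ≃g (anchoredCliques t fun _ ↦ b)) := by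
  obtain ⟨e, rfl, he⟩ := exists_perm_apply_eq_of_card_eq hst ha hb
  exact ⟨e, by simp [anchoredCliques, cliquePair, spokes, he]⟩

lemma Lgraph_eq_anchoredCliques {n k : ℕ} [NeZero n] (hk : k < n) :
    Lgraph n k = anchoredCliques {v | v.val < n - k} fun _ ↦ 0 := by
  ext u v
  simp only [Lgraph, anchoredCliques, cliquePair, spokes, sup_adj, fromRel_adj, mem_filter_univ,
    Fin.ext_iff, Fin.val_zero, ne_eq]
  omega

lemma nonempty_iso_Lgraph {n k : ℕ} (hk : k < n) {K : Finset (Fin n)} (hK : #K = n - k)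
    {w : Fin n} (hw : w ∈ K) : Nonempty ((anchoredCliques K fun _ ↦ w) ≃g Lgraph n k) := by
  have : NeZero n := ⟨by omega⟩
  rw [Lgraph_eq_anchoredCliques hk]
  exact nonempty_iso_anchoredCliques_const (by simp [hK, Fin.card_filter_val_lt]) hw
    ((mem_filter_univ _).2 (Nat.sub_pos_of_lt hk))

lemma MemF.exists_isAnchored {n k : ℕ} {F : SimpleGraph (Fin n)} (hF : MemF n k F) :
    ∃ K c, #K = n - k ∧ IsAnchored F K c := by
  obtain ⟨K, hK, -, -, hanchor, hcomp⟩ := hF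
  have hc (u : Fin n) : ∃ w, u ∉ K → (w ∈ K ∧ F.Adj u w) ∧ ∀ v, v ∈ K ∧ F.Adj u v → v = w := by
    by_cases hu : u ∈ K
    · exact ⟨u, fun h ↦ absurd hu h⟩
    · obtain ⟨w, hw⟩ := hanchor ⟨u, hu⟩
      exact ⟨w, fun _ ↦ hw⟩
  choose c hc using hc
  refine ⟨K, c, hK, fun u hu ↦ (hc u hu).1.1, fun u hu v hv huv ↦ (hc u hu).2 v ⟨hv, huv⟩,
    fun u hu v hv huv ↦ (hc v hv).2 (c u) ⟨(hc u hu).1.1, ?_⟩⟩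
  have hreach : (F.induce {x | x ∉ K}).Reachable ⟨u, hu⟩ ⟨v, hv⟩ := Adj.reachable huv
  exact hcomp _ _ hreach (c u) (hc u hu).1.1 (hc u hu).1.2

lemma IsSubgraphOf.exists_iso_le {n : ℕ} {G H : SimpleGraph (Fin n)} (hGH : IsSubgraphOf G H) :
    ∃ G' ≤ H, Nonempty (G ≃g G') := by
  obtain ⟨f, hf⟩ := hGH
  let e : Equiv.Perm (Fin n) := .ofBijective f hf.bijective_of_finite
  refine ⟨G.map e, ?_, ⟨Iso.map e G⟩⟩
  exact (map_le_iff_le_comap e.toEmbedding G H).2 fun _ _ h ↦ f.map_adj h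

theorem extremal_qSpecRad_general (n k : ℕ) (hk : k < n) (G : SimpleGraph (Fin n))
    (hF : ∃ F : SimpleGraph (Fin n), MemF n k F ∧ IsSubgraphOf G F)
    (hq : qSpecRad (Lgraph n k) ≤ qSpecRad G) :
    Nonempty (G ≃g Lgraph n k) := by
  obtain ⟨F, hF, hGF⟩ := hF
  obtain ⟨G', hG'F, ⟨e⟩⟩ := hGF.exists_iso_le
  obtain ⟨K, c, hK, hc⟩ := hF.exists_isAnchored
  have hKne : K.Nonempty := card_pos.1 (by omega)
  have hL (w) (hw : w ∈ K) : qSpecRad (anchoredCliques K fun _ ↦ w) ≤ qSpecRad G' := by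
    obtain ⟨e'⟩ := nonempty_iso_Lgraph hk hK hw
    rwa [qSpecRad_congr e', ← qSpecRad_congr e]
  obtain ⟨w, hw, rfl⟩ := (hc.mono hG'F).exists_eq_anchoredCliques_const hKne hL
  exact (nonempty_iso_Lgraph hk hK hw).map e.trans

/-- Lemma 3.5 (b): extremal graph in the family `F_{n,k}` for the signless Laplacian
spectral radius. -/
theorem extremal_qSpecRad (n k : ℕ) (hn : 2 * k + 1 ≤ n) (G : SimpleGraph (Fin n))
    (hF : ∃ F : SimpleGraph (Fin n), MemF n k F ∧ IsSubgraphOf G F)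
    (hq : qSpecRad (Lgraph n k) ≤ qSpecRad G) :
    Nonempty (G ≃g Lgraph n k) :=
  extremal_qSpecRad_general n k (by omega) G hF hq
end
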